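/- Let q ≡ 1 (mod 6) be a fixed prime power. For every real s with 1/3 < s < 1, as g → ∞ one has (1/|𝔥(3g)|) ∑_{χ∈𝔥(3g)} L(s,χ) → M_q(s); that is, the average value of L(s,χ) over 𝔥(3g) is asymptotic to M_q(s). -/

import Mathlib

open Polynomial Finset Filter
open scoped Classical

noncomputable section

/-- The monic polynomial `X^n + ∑_{i<n} c i · X^i`; as `c` ranges over `Fin n → Fq`
this parametrizes the monic polynomials of degree `n` over `Fq`. -/
def monicOf {Fq : Type} [Field Fq] (n : ℕ) (c : Fin n → Fq) : Polynomial Fq :=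
  X ^ n + ∑ i : Fin n, C (c i) * X ^ (i : ℕ)

/-- Sum of `φ` over the monic polynomials of degree `n` in `Fq[T]`. -/
def sumMonic {Fq : Type} [Field Fq] [Fintype Fq] (n : ℕ) (φ : Polynomial Fq → ℂ) : ℂ :=
  ∑ c : Fin n → Fq, φ (monicOf n c)

/-- Sum of `φ` over the squarefree monic polynomials of degree `n` in `Fq[T]`. -/
def sumSqfree {Fq : Type} [Field Fq] [Fintype Fq] (n : ℕ) (φ : Polynomial Fq → ℂ) : ℂ :=
  ∑ c : Fin n → Fq, if Squarefree (monicOf n c) then φ (monicOf n c) else 0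

/-- `L(s,χ) = ∑_{F monic} χ(F)|F|^{-s}`, grouped by degree.  For the characters in this
paper the coefficient sums vanish in large degree, so this is a finite sum giving the
analytic continuation of the Dirichlet series. -/
def Lval {Fq : Type} [Field Fq] [Fintype Fq] (q : ℕ) (s : ℝ) (χ : Polynomial Fq → ℂ) : ℂ :=
  ∑' n : ℕ, sumMonic n χ * ((q : ℝ) ^ (-s * (n : ℝ)) : ℝ)

/-- `𝓛(u,χ) = ∑_{F monic} χ(F) u^{deg F}`, grouped by degree. -/
def Lu {Fq : Type} [Field Fq] [Fintype Fq] (u : ℂ) (χ : Polynomial Fq → ℂ) : ℂ :=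
  ∑' n : ℕ, sumMonic n χ * u ^ n

/-- `chi` is the family of cubic residue symbols `chi F = χ_F` on `Fq[T]` determined by the
isomorphism `Ω` from the cube roots of unity of `Fq^*` to `μ₃ ⊂ ℂ^*`. -/
structure IsCubicSymbol (q : ℕ) {Fq : Type} [Field Fq] [Fintype Fq]
    (Ω : Fq → ℂ) (chi : Polynomial Fq → Polynomial Fq → ℂ) : Prop where
  omega_mul : ∀ a b : Fq, a ^ 3 = 1 → b ^ 3 = 1 → Ω (a * b) = Ω a * Ω b
  omega_cube : ∀ a : Fq, a ^ 3 = 1 → (Ω a) ^ 3 = 1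
  omega_inj : ∀ a b : Fq, a ^ 3 = 1 → b ^ 3 = 1 → Ω a = Ω b → a = b
  omega_surj : ∀ z : ℂ, z ^ 3 = 1 → ∃ a : Fq, a ^ 3 = 1 ∧ Ω a = z
  chi_one : ∀ a : Polynomial Fq, chi 1 a = 1
  chi_mul_left : ∀ F G a : Polynomial Fq, F.Monic → G.Monic →
    chi (F * G) a = chi F a * chi G a
  chi_prime_dvd : ∀ P a : Polynomial Fq, P.Monic → Irreducible P → P ∣ a → chi P a = 0
  chi_prime_not_dvd : ∀ P a : Polynomial Fq, P.Monic → Irreducible P → ¬ P ∣ a →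
    ∃ c : Fq, c ^ 3 = 1 ∧ Ω c = chi P a ∧ P ∣ (a ^ ((q ^ P.natDegree - 1) / 3) - C c)

/-- The monic irreducible polynomials over `Fq`. -/
def MonicIrred (Fq : Type) [Field Fq] : Type := {P : Polynomial Fq // P.Monic ∧ Irreducible P}

/-- `|P| = q^{deg P}` as a real number. -/
def normP {Fq : Type} [Field Fq] (q : ℕ) (P : MonicIrred Fq) : ℝ := (q : ℝ) ^ P.1.natDegree

/-- `C_q = ∏_P (1 - 1/(|P|(|P|+1)))`. -/
def Cq (q : ℕ) (Fq : Type) [Field Fq] : ℝ :=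
  ∏' P : MonicIrred Fq, (1 - (normP q P * (normP q P + 1))⁻¹)

/-- `M_q(s) = ζ_q(3s) ∏_P (1 - |P|^{-3s}/(|P|+1))`. -/
def Mq (q : ℕ) (Fq : Type) [Field Fq] (s : ℝ) : ℝ :=
  (1 - (q : ℝ) ^ (1 - 3 * s))⁻¹ *
    ∏' P : MonicIrred Fq, (1 - (normP q P) ^ (-3 * s) * (normP q P + 1)⁻¹)

/-- The norm of `Q(α)`, where `α` is a root of the irreducible monic `P`, is the resultant. -/
lemma norm_mk_eq_resultant {K : Type} [Field K] [Fintype K] {P : K[X]} (hP : P.Monic)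
    (hPi : Irreducible P) (Q : K[X]) :
    Algebra.norm K (AdjoinRoot.mk P Q) = resultant P Q := by
  have : Fact (Irreducible P) := ⟨hPi⟩
  have : FiniteDimensional K (AdjoinRoot P) := (AdjoinRoot.powerBasis hPi.ne_zero).finite
  let E := AlgebraicClosure K
  let pb := AdjoinRoot.powerBasis hPi.ne_zero
  have hmin : minpoly K pb.gen = P := by
    rw [AdjoinRoot.minpoly_powerBasis_gen_of_monic hP]
  apply (algebraMap K E).injective
  rw [Algebra.norm_eq_prod_embeddings]
  have hsplit : (P.map (algebraMap K E)).Splits := IsAlgClosed.splits _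
  have h1 : algebraMap K E (resultant P Q) =
      ((P.map (algebraMap K E)).roots.map (Q.map (algebraMap K E)).eval).prod := by
    rw [← resultant_map_map]
    have := resultant_eq_prod_eval (P.map (algebraMap K E)) (Q.map (algebraMap K E)) Q.natDegree
      (natDegree_map_le) hsplit
    rw [natDegree_map] at this
    rw [this, (hP.map _).leadingCoeff, one_pow, one_mul]
  have hsep : (P.map (algebraMap K E)).roots.Nodup :=
    nodup_roots ((PerfectField.separable_of_irreducible hPi).map)
  rw [h1, Finset.prod_equiv (t := Finset.univ) (pb.liftEquiv' : (AdjoinRoot P →ₐ[K] E) ≃ _)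
    (g := fun x => (Q.map (algebraMap K E)).eval x.1)]
  · have h2 : (P.map (algebraMap K E)).roots = ((minpoly K pb.gen).map (algebraMap K E)).roots := by
      rw [hmin]
    rw [h2] at hsep ⊢
    rw [Finset.prod_mem_multiset _ _ (fun x => (Q.map (algebraMap K E)).eval x)
      (fun x => rfl), Finset.prod_eq_multiset_prod, Multiset.toFinset_val,
      Multiset.dedup_eq_self.mpr hsep]
  · simp
  · intro σ _
    rw [PowerBasis.liftEquiv'_apply_coe, AdjoinRoot.powerBasis_gen, eval_map_algebraMap,
      ← AdjoinRoot.aeval_eq, ← aeval_algHom_apply]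

/-- Induction on the factorization of a monic polynomial. -/
lemma monic_induction {K : Type} [Field K] {p : K[X] → Prop} (h1 : p 1)
    (h : ∀ P G : K[X], P.Monic → Irreducible P → G.Monic → p G → p (P * G)) :
    ∀ F : K[X], F.Monic → p F := by
  intro F
  induction hn : F.natDegree using Nat.strong_induction_on generalizing F with
  | _ n ih =>
    intro hF
    by_cases hu : IsUnit F
    · rw [hF.eq_one_of_isUnit hu]; exact h1
    · obtain ⟨P, hP, hPi, G, rfl⟩ := exists_monic_irreducible_factor F hu
      have hG : G.Monic := hP.of_mul_monic_left hF
      refine h P G hP hPi hG (ih _ ?_ G rfl hG)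
      rw [hP.natDegree_mul hG] at hn
      have := hPi.natDegree_pos
      omega

section Symbol

variable {q : ℕ} {Fq : Type} [Field Fq] [Fintype Fq] {Ω : Fq → ℂ}
  {chi : Polynomial Fq → Polynomial Fq → ℂ}

lemma const_unique_of_dvd {P x : Fq[X]} (hP : Irreducible P) {c d : Fq} (h1 : P ∣ x - C c)
    (h2 : P ∣ x - C d) : c = d := by
  by_contra hne
  have h : P ∣ C (c - d) := by
    have := dvd_sub h2 h1
    rw [C_sub]
    convert this using 1
    ring
  exact hP.not_isUnit (isUnit_of_dvd_unit h (isUnit_C.mpr (sub_ne_zero.mpr hne).isUnit))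

lemma IsCubicSymbol.omega_one (h : IsCubicSymbol q Ω chi) : Ω 1 = 1 := by
  have h1 := h.omega_mul 1 1 (by simp) (by simp)
  have h2 := h.omega_cube 1 (by simp)
  have h3 : Ω 1 ≠ 0 := by
    intro h0
    rw [h0] at h2
    norm_num at h2
  rw [mul_one] at h1
  exact (mul_left_cancel₀ h3 (by rw [mul_one]; exact h1)).symm

lemma IsCubicSymbol.prime_eq (h : IsCubicSymbol q Ω chi) {P a : Fq[X]} (hP : P.Monic)
    (hPi : Irreducible P) {c : Fq} (ha : ¬ P ∣ a)
    (hc : P ∣ a ^ ((q ^ P.natDegree - 1) / 3) - C c) : chi P a = Ω c ∧ c ^ 3 = 1 := by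
  obtain ⟨d, hd, hd1, hd2⟩ := h.chi_prime_not_dvd P a hP hPi ha
  rw [const_unique_of_dvd hPi hc hd2]
  exact ⟨hd1.symm, hd⟩

lemma IsCubicSymbol.prime_eq_zero_iff (h : IsCubicSymbol q Ω chi) {P a : Fq[X]} (hP : P.Monic)
    (hPi : Irreducible P) : chi P a = 0 ↔ P ∣ a := by
  refine ⟨fun h0 => ?_, h.chi_prime_dvd P a hP hPi⟩
  by_contra hna
  obtain ⟨d, hd, hd1, hd2⟩ := h.chi_prime_not_dvd P a hP hPi hna
  have := h.omega_cube d hd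
  rw [hd1, h0] at this
  norm_num at this

lemma IsCubicSymbol.prime_mul (h : IsCubicSymbol q Ω chi) {P : Fq[X]} (hP : P.Monic)
    (hPi : Irreducible P) (a b : Fq[X]) : chi P (a * b) = chi P a * chi P b := by
  by_cases ha : P ∣ a
  · rw [h.chi_prime_dvd P a hP hPi ha, h.chi_prime_dvd P _ hP hPi (ha.mul_right _), zero_mul]
  by_cases hb : P ∣ b
  · rw [h.chi_prime_dvd P b hP hPi hb, h.chi_prime_dvd P _ hP hPi (hb.mul_left _), mul_zero]
  obtain ⟨c, hc, hc1, hc2⟩ := h.chi_prime_not_dvd P a hP hPi ha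
  obtain ⟨d, hd, hd1, hd2⟩ := h.chi_prime_not_dvd P b hP hPi hb
  rw [← hc1, ← hd1, ← h.omega_mul c d hc hd]
  refine (h.prime_eq hP hPi (fun hab => ?_) ?_).1
  · exact (hPi.prime.dvd_or_dvd hab).elim ha hb
  · rw [mul_pow, C_mul]
    generalize a ^ ((q ^ P.natDegree - 1) / 3) = x at *
    generalize b ^ ((q ^ P.natDegree - 1) / 3) = y at *
    have : x * y - C c * C d = (x - C c) * y + C c * (y - C d) := by ring
    rw [this]
    exact dvd_add (hc2.mul_right _) (hd2.mul_left _)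

lemma IsCubicSymbol.prime_congr (h : IsCubicSymbol q Ω chi) {P : Fq[X]} (hP : P.Monic)
    (hPi : Irreducible P) {a b : Fq[X]} (hab : P ∣ a - b) : chi P a = chi P b := by
  by_cases hb : P ∣ b
  · rw [h.chi_prime_dvd P b hP hPi hb,
      h.chi_prime_dvd P a hP hPi (by simpa using dvd_add hab hb)]
  obtain ⟨d, hd, hd1, hd2⟩ := h.chi_prime_not_dvd P b hP hPi hb
  rw [← hd1]
  refine (h.prime_eq hP hPi (fun ha => hb ?_) ?_).1
  · simpa using dvd_sub ha hab
  · have := dvd_add (hab.trans (sub_dvd_pow_sub_pow a b ((q ^ P.natDegree - 1) / 3))) hd2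
    simpa using this

lemma IsCubicSymbol.mul_right (h : IsCubicSymbol q Ω chi) {F : Fq[X]} (hF : F.Monic)
    (a b : Fq[X]) : chi F (a * b) = chi F a * chi F b := by
  refine monic_induction (p := fun F => chi F (a * b) = chi F a * chi F b) ?_ ?_ F hF
  · simp [h.chi_one]
  · intro P G hP hPi hG ih
    rw [h.chi_mul_left P G _ hP hG, h.chi_mul_left P G _ hP hG, h.chi_mul_left P G _ hP hG, ih,
      h.prime_mul hP hPi]
    ring

lemma IsCubicSymbol.congr (h : IsCubicSymbol q Ω chi) {F : Fq[X]} (hF : F.Monic)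
    {a b : Fq[X]} : F ∣ a - b → chi F a = chi F b := by
  refine monic_induction (p := fun F => F ∣ a - b → chi F a = chi F b) ?_ ?_ F hF
  · simp [h.chi_one]
  · intro P G hP hPi hG ih hd
    rw [h.chi_mul_left P G _ hP hG, h.chi_mul_left P G _ hP hG, ih ((dvd_mul_left _ _).trans hd),
      h.prime_congr hP hPi ((dvd_mul_right _ _).trans hd)]

lemma IsCubicSymbol.eq_zero_iff (h : IsCubicSymbol q Ω chi) {F : Fq[X]} (hF : F.Monic)
    (a : Fq[X]) : chi F a = 0 ↔ ¬ IsCoprime F a := by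
  refine monic_induction (p := fun F => chi F a = 0 ↔ ¬ IsCoprime F a) ?_ ?_ F hF
  · simp [h.chi_one, isCoprime_one_left]
  · intro P G hP hPi hG ih
    rw [h.chi_mul_left P G _ hP hG, mul_eq_zero, ih, h.prime_eq_zero_iff hP hPi,
      IsCoprime.mul_left_iff, hPi.coprime_iff_not_dvd]
    tauto

lemma IsCubicSymbol.cube (h : IsCubicSymbol q Ω chi) {F : Fq[X]} (hF : F.Monic)
    (a : Fq[X]) : IsCoprime F a → chi F a ^ 3 = 1 := by
  refine monic_induction (p := fun F => IsCoprime F a → chi F a ^ 3 = 1) ?_ ?_ F hF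
  · simp [h.chi_one]
  · intro P G hP hPi hG ih hc
    rw [IsCoprime.mul_left_iff, hPi.coprime_iff_not_dvd] at hc
    obtain ⟨d, hd, hd1, hd2⟩ := h.chi_prime_not_dvd P a hP hPi hc.1
    rw [h.chi_mul_left P G _ hP hG, mul_pow, ih hc.2, mul_one, ← hd1]
    exact h.omega_cube d hd

end Symbol

section Reciprocity

variable {q : ℕ} {Fq : Type} [Field Fq] [Fintype Fq] {Ω : Fq → ℂ}
  {chi : Polynomial Fq → Polynomial Fq → ℂ}

lemma card_adjoinRoot {P : Fq[X]} (hPi : Irreducible P) :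
    Nat.card (AdjoinRoot P) = Fintype.card Fq ^ P.natDegree := by
  have : Fact (Irreducible P) := ⟨hPi⟩
  have : FiniteDimensional Fq (AdjoinRoot P) := (AdjoinRoot.powerBasis hPi.ne_zero).finite
  rw [Module.natCard_eq_pow_finrank (K := Fq), Nat.card_eq_fintype_card,
    (AdjoinRoot.powerBasis hPi.ne_zero).finrank, AdjoinRoot.powerBasis_dim]

lemma finite_adjoinRoot {P : Fq[X]} (hPi : Irreducible P) : Finite (AdjoinRoot P) := by
  have : Fact (Irreducible P) := ⟨hPi⟩
  have : FiniteDimensional Fq (AdjoinRoot P) := (AdjoinRoot.powerBasis hPi.ne_zero).finite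
  exact Module.finite_of_finite Fq

lemma cubic_exponent_eq (h3 : 3 ∣ q - 1) (hq : 1 < q) (p : ℕ) :
    (q ^ p - 1) / 3 = ((q ^ p - 1) / (q - 1)) * ((q - 1) / 3) := by
  obtain ⟨k, hk⟩ := h3
  have h1 : q - 1 ∣ q ^ p - 1 := by simpa using Nat.sub_dvd_pow_sub_pow q 1 p
  obtain ⟨l, hl⟩ := h1
  have hq0 : 0 < q - 1 := by omega
  rw [hl, Nat.mul_div_cancel_left _ hq0, hk, Nat.mul_div_cancel_left _ (by norm_num), mul_assoc,
    Nat.mul_div_cancel_left _ (by norm_num), mul_comm]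

lemma IsCubicSymbol.prime_eq_resultant (h : IsCubicSymbol q Ω chi) (hcard : Fintype.card Fq = q)
    (h3 : 3 ∣ q - 1) {P a : Fq[X]} (hP : P.Monic) (hPi : Irreducible P) (ha : ¬ P ∣ a) :
    chi P a = Ω (resultant P a ^ ((q - 1) / 3)) ∧ (resultant P a ^ ((q - 1) / 3)) ^ 3 = 1 := by
  refine h.prime_eq hP hPi ha ?_
  have : Fact (Irreducible P) := ⟨hPi⟩
  have := finite_adjoinRoot hPi
  rw [← AdjoinRoot.mk_eq_mk, ← norm_mk_eq_resultant hP hPi, AdjoinRoot.mk_C,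
    ← AdjoinRoot.algebraMap_eq, map_pow, map_pow, FiniteField.algebraMap_norm_eq_pow,
    card_adjoinRoot hPi, Nat.card_eq_fintype_card, hcard, ← pow_mul,
    cubic_exponent_eq h3 (hcard ▸ Fintype.one_lt_card)]

lemma exists_pow_ne_one {L : Type} [Field L] [Finite L] {n : ℕ} (hn : 0 < n)
    (hn2 : n < Nat.card L - 1) : ∃ x : L, x ≠ 0 ∧ x ^ n ≠ 1 := by
  obtain ⟨g, hg⟩ := IsCyclic.exists_generator (α := Lˣ)
  refine ⟨g, g.ne_zero, fun h1 => ?_⟩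
  have h2 : orderOf g = Nat.card L - 1 := by
    rw [orderOf_eq_card_of_forall_mem_zpowers hg, Nat.card_units]
  exact pow_ne_one_of_lt_orderOf hn.ne' (h2 ▸ hn2) (Units.ext (by simpa using h1))

lemma IsCubicSymbol.prime_nontrivial (h : IsCubicSymbol q Ω chi) (hcard : Fintype.card Fq = q)
    (h3 : 3 ∣ q - 1) {P : Fq[X]} (hP : P.Monic) (hPi : Irreducible P) :
    ∃ a, chi P a ≠ 0 ∧ chi P a ≠ 1 := by
  have : Fact (Irreducible P) := ⟨hPi⟩
  have := finite_adjoinRoot hPi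
  have hq : 1 < q := hcard ▸ Fintype.one_lt_card
  have hle : q ≤ q ^ P.natDegree := Nat.le_self_pow hPi.natDegree_pos.ne' q
  obtain ⟨x, hx0, hx⟩ := exists_pow_ne_one (L := AdjoinRoot P)
    (n := (q ^ P.natDegree - 1) / 3) (by omega)
    (by rw [card_adjoinRoot hPi, hcard]; omega)
  obtain ⟨a, rfl⟩ := AdjoinRoot.mk_surjective x
  have ha : ¬ P ∣ a := fun hd => hx0 (AdjoinRoot.mk_eq_zero.mpr hd)
  obtain ⟨c, hc, hc1, hc2⟩ := h.chi_prime_not_dvd P a hP hPi ha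
  refine ⟨a, fun h0 => ha ((h.prime_eq_zero_iff hP hPi).mp h0), fun h1 => hx ?_⟩
  have : c = 1 := h.omega_inj c 1 hc (by simp) (by rw [hc1, h1, h.omega_one])
  rw [this, ← AdjoinRoot.mk_eq_mk] at hc2
  simpa using hc2

lemma IsCubicSymbol.prime_reciprocity (h : IsCubicSymbol q Ω chi) (hcard : Fintype.card Fq = q)
    (h6 : 6 ∣ q - 1) {P Q : Fq[X]} (hP : P.Monic) (hPi : Irreducible P) (hQ : Q.Monic)
    (hQi : Irreducible Q) : chi P Q = chi Q P := by
  by_cases hPQ : P ∣ Q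
  · rw [eq_of_monic_of_associated hP hQ (hPi.associated_of_dvd hQi hPQ)]
  have hQP : ¬ Q ∣ P := fun hd => hPQ (hQi.associated_of_dvd hPi hd).symm.dvd
  have h3 : 3 ∣ q - 1 := (by norm_num : 3 ∣ 6).trans h6
  rw [(h.prime_eq_resultant hcard h3 hP hPi hPQ).1, (h.prime_eq_resultant hcard h3 hQ hQi hQP).1,
    resultant_comm, mul_pow, ← pow_mul]
  have : Even (P.natDegree * Q.natDegree * ((q - 1) / 3)) := by
    refine Even.mul_left ?_ _
    obtain ⟨k, hk⟩ := h6
    exact ⟨k, by omega⟩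
  rw [this.neg_one_pow, one_mul]

lemma IsCubicSymbol.reciprocity (h : IsCubicSymbol q Ω chi) (hcard : Fintype.card Fq = q)
    (h6 : 6 ∣ q - 1) {F G : Fq[X]} (hF : F.Monic) (hG : G.Monic) : chi F G = chi G F := by
  have hone : ∀ F : Fq[X], F.Monic → chi F 1 = 1 := fun F hF =>
    monic_induction (p := fun F => chi F 1 = 1) (h.chi_one 1) (fun P G hP hPi hG ih => by
      rw [h.chi_mul_left P G _ hP hG, ih, mul_one]
      have h1 := h.prime_mul hP hPi 1 1
      have h0 : chi P 1 ≠ 0 := by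
        rw [Ne, h.prime_eq_zero_iff hP hPi]
        exact fun hd => hPi.not_isUnit (isUnit_of_dvd_one hd)
      rw [mul_one] at h1
      exact (mul_left_cancel₀ h0 (by rw [mul_one]; exact h1)).symm) F hF
  refine monic_induction (p := fun F => chi F G = chi G F) ?_ ?_ F hF
  · rw [h.chi_one, hone G hG]
  intro P F' hP hPi hF' ih
  rw [h.chi_mul_left P F' _ hP hF', h.mul_right hG, ih]
  congr 1
  refine monic_induction (p := fun G => chi P G = chi G P) ?_ ?_ G hG
  · rw [h.chi_one, hone P hP]
  intro Q G' hQ hQi hG' ih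
  rw [h.chi_mul_left Q G' _ hQ hG', h.mul_right hP, ih,
    h.prime_reciprocity hcard h6 hP hPi hQ hQi]

lemma IsCubicSymbol.const (h : IsCubicSymbol q Ω chi) (hcard : Fintype.card Fq = q)
    (h3 : 3 ∣ q - 1) {F : Fq[X]} (hF : F.Monic) {c : Fq} (hc : c ≠ 0) :
    chi F (C c) = Ω (c ^ ((q - 1) / 3)) ^ F.natDegree := by
  have hcc : (c ^ ((q - 1) / 3)) ^ 3 = 1 := by
    rw [← pow_mul, Nat.div_mul_cancel h3, ← hcard]
    exact FiniteField.pow_card_sub_one_eq_one c hc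
  have hpow : ∀ n : ℕ, Ω ((c ^ ((q - 1) / 3)) ^ n) = Ω (c ^ ((q - 1) / 3)) ^ n := by
    intro n
    induction n with
    | zero => simpa using h.omega_one
    | succ n ih =>
      rw [pow_succ, pow_succ, h.omega_mul _ _ _ hcc, ih]
      rw [← pow_mul, mul_comm, pow_mul, hcc, one_pow]
  refine monic_induction (p := fun F => chi F (C c) = Ω (c ^ ((q - 1) / 3)) ^ F.natDegree)
    ?_ ?_ F hF
  · simp [h.chi_one]
  intro P G hP hPi hG ih
  rw [h.chi_mul_left P G _ hP hG, ih, hP.natDegree_mul hG, pow_add]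
  congr 1
  have hn : ¬ P ∣ C c := fun hd =>
    hPi.not_isUnit (isUnit_of_dvd_unit hd (isUnit_C.mpr hc.isUnit))
  rw [(h.prime_eq_resultant hcard h3 hP hPi hn).1, natDegree_C, resultant_C_zero_right, ← hpow]
  congr 1
  rw [← pow_mul, ← pow_mul, mul_comm]

end Reciprocity

/-- The formal properties of the cubic residue symbol `br f g = (g / f)₃`, extended to all
nonzero `f`, and of the cubic character `ω` of the constants. -/
structure CubicBracket {K : Type} [Field K] (br : K[X] → K[X] → ℂ) (ω : K → ℂ) : Prop where
  zero_left : ∀ g, br 0 g = 0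
  one_left : ∀ g, br 1 g = 1
  mul_left : ∀ f h g, br (f * h) g = br f g * br h g
  mul_right : ∀ f g h, f ≠ 0 → br f (g * h) = br f g * br f h
  unit_left : ∀ c g, c ≠ 0 → br (C c) g = 1
  congr : ∀ f g h, f ∣ g - h → br f g = br f h
  eq_zero_iff : ∀ f g, f ≠ 0 → (br f g = 0 ↔ ¬ IsCoprime f g)
  cube : ∀ f g, f ≠ 0 → IsCoprime f g → br f g ^ 3 = 1
  nontrivial : ∀ P, Irreducible P → ∃ a, br P a ≠ 0 ∧ br P a ≠ 1
  reciprocity : ∀ f g, f ≠ 0 → g ≠ 0 →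
    br f g * ω f.leadingCoeff ^ g.natDegree = br g f * ω g.leadingCoeff ^ f.natDegree
  omega_cube : ∀ c, c ≠ 0 → ω c ^ 3 = 1
  omega_mul : ∀ c d, c ≠ 0 → d ≠ 0 → ω (c * d) = ω c * ω d
  omega_nontrivial : ∃ c, c ≠ 0 ∧ ω c ≠ 1

/-- The bracket attached to a family of cubic residue symbols. -/
def bracketOf {K : Type} [Field K] (chi : K[X] → K[X] → ℂ) (f g : K[X]) : ℂ :=
  if f = 0 then 0 else chi (normalize f) g

lemma bracketOf_monic {K : Type} [Field K] (chi : K[X] → K[X] → ℂ) {f : K[X]} (hf : f.Monic)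
    (g : K[X]) : bracketOf chi f g = chi f g := by
  rw [bracketOf, if_neg hf.ne_zero, hf.normalize_eq_self]

lemma C_leadingCoeff_mul_normalize {K : Type} [Field K] {f : K[X]} (hf : f ≠ 0) :
    C f.leadingCoeff * normalize f = f := by
  have h0 : f.leadingCoeff ≠ 0 := leadingCoeff_ne_zero.mpr hf
  rw [normalize_apply, coe_normUnit_of_ne_zero hf, mul_left_comm, ← C_mul, mul_inv_cancel₀ h0,
    C_1, mul_one]

lemma IsCubicSymbol.cubicBracket {q : ℕ} {Fq : Type} [Field Fq] [Fintype Fq] {Ω : Fq → ℂ}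
    {chi : Polynomial Fq → Polynomial Fq → ℂ} (h : IsCubicSymbol q Ω chi)
    (hcard : Fintype.card Fq = q) (h6 : 6 ∣ q - 1) :
    CubicBracket (bracketOf chi) (fun c => Ω (c ^ ((q - 1) / 3))) := by
  have h3 : 3 ∣ q - 1 := (by norm_num : 3 ∣ 6).trans h6
  have hq : 1 < q := hcard ▸ Fintype.one_lt_card
  have hcc : ∀ c : Fq, c ≠ 0 → (c ^ ((q - 1) / 3)) ^ 3 = 1 := fun c hc => by
    rw [← pow_mul, Nat.div_mul_cancel h3, ← hcard]
    exact FiniteField.pow_card_sub_one_eq_one c hc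
  have hdvd : ∀ f : Fq[X], f ≠ 0 → normalize f ∣ f := fun f hf => (normalize_associated f).dvd
  have hcop : ∀ f g : Fq[X], f ≠ 0 → (IsCoprime (normalize f) g ↔ IsCoprime f g) := fun f g hf =>
    ⟨fun hc => hc.of_isCoprime_of_dvd_left (normalize_associated f).symm.dvd,
      fun hc => hc.of_isCoprime_of_dvd_left (normalize_associated f).dvd⟩
  have hkey : ∀ f g : Fq[X], f ≠ 0 → g ≠ 0 → bracketOf chi f g =
      Ω (g.leadingCoeff ^ ((q - 1) / 3)) ^ f.natDegree * chi (normalize f) (normalize g) := by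
    intro f g hf hg
    rw [bracketOf, if_neg hf]
    conv_lhs => rw [← C_leadingCoeff_mul_normalize hg]
    rw [h.mul_right (monic_normalize hf),
      h.const hcard h3 (monic_normalize hf) (leadingCoeff_ne_zero.mpr hg)]
    congr 2
    exact natDegree_eq_of_degree_eq degree_normalize
  refine ⟨?_, ?_, ?_, ?_, ?_, ?_, ?_, ?_, ?_, ?_, ?_, ?_, ?_⟩
  · intro g; simp [bracketOf]
  · intro g; rw [bracketOf_monic chi monic_one, h.chi_one]
  · intro f k g
    by_cases hf : f = 0
    · simp [hf, bracketOf]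
    by_cases hk : k = 0
    · simp [hk, bracketOf]
    rw [bracketOf, bracketOf, bracketOf, if_neg hf, if_neg hk, if_neg (mul_ne_zero hf hk),
      normalize_mul, h.chi_mul_left _ _ _ (monic_normalize hf) (monic_normalize hk)]
  · intro f g k hf
    rw [bracketOf, bracketOf, bracketOf, if_neg hf, if_neg hf, if_neg hf,
      h.mul_right (monic_normalize hf)]
  · intro c g hc
    rw [bracketOf, if_neg (C_ne_zero.mpr hc), normalize_eq_one.mpr (isUnit_C.mpr hc.isUnit),
      h.chi_one]
  · intro f g k hd
    by_cases hf : f = 0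
    · simp [hf, bracketOf]
    rw [bracketOf, bracketOf, if_neg hf, if_neg hf]
    exact h.congr (monic_normalize hf) ((hdvd f hf).trans hd)
  · intro f g hf
    rw [bracketOf, if_neg hf, h.eq_zero_iff (monic_normalize hf), hcop f g hf]
  · intro f g hf hc
    rw [bracketOf, if_neg hf]
    exact h.cube (monic_normalize hf) g ((hcop f g hf).mpr hc)
  · intro P hP
    have := h.prime_nontrivial hcard h3 (monic_normalize hP.ne_zero)
      ((normalize_associated P).symm.irreducible hP)
    simpa [bracketOf, hP.ne_zero] using this
  · intro f g hf hg
    rw [hkey f g hf hg, hkey g f hg hf,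
      h.reciprocity hcard h6 (monic_normalize hf) (monic_normalize hg)]
    ring
  · intro c hc
    exact h.omega_cube _ (hcc c hc)
  · intro c d hc hd
    rw [mul_pow]
    exact h.omega_mul _ _ (hcc c hc) (hcc d hd)
  · obtain ⟨c, hc0, hc⟩ := exists_pow_ne_one (L := Fq) (n := (q - 1) / 3) (by omega)
      (by rw [Nat.card_eq_fintype_card, hcard]; omega)
    refine ⟨c, hc0, fun h1 => hc ?_⟩
    exact h.omega_inj _ _ (hcc c hc0) (by simp) (h1.trans h.omega_one.symm)

section FiniteSets

variable {K : Type} [Field K]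

/-- The finset of elements of a finite set. -/
def fs {α : Type} (s : Set α) : Finset α := if h : s.Finite then h.toFinset else ∅

lemma mem_fs {α : Type} {s : Set α} (h : s.Finite) {x : α} : x ∈ fs s ↔ x ∈ s := by
  rw [fs, dif_pos h, Set.Finite.mem_toFinset]

variable (K) in
/-- The polynomials of degree less than `n`. -/
def Low (n : ℕ) : Finset K[X] := fs {p | p ∈ degreeLT K n}

variable (K) in
/-- The monic polynomials of degree `n`. -/
def Mon (n : ℕ) : Finset K[X] := fs {p | p.Monic ∧ p.natDegree = n}

/-- The polynomials `f` such that `m * f - c` has degree less than `M`. -/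
def Ball (m c : K[X]) (M : ℕ) : Finset K[X] := fs {f | m * f - c ∈ degreeLT K M}

lemma mem_degreeLT_iff {p : K[X]} {n : ℕ} : p ∈ degreeLT K n ↔ p = 0 ∨ p.natDegree < n := by
  rw [mem_degreeLT]
  by_cases h : p = 0
  · simp [h]
  · rw [← natDegree_lt_iff_degree_lt h]; simp [h]

lemma mul_mem_degreeLT_iff {m p : K[X]} (hm : m ≠ 0) {n : ℕ} :
    m * p ∈ degreeLT K n ↔ p ∈ degreeLT K (n - m.natDegree) := by
  rw [mem_degreeLT_iff, mem_degreeLT_iff]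
  by_cases h : p = 0
  · simp [h]
  · simp only [mul_eq_zero, hm, h, natDegree_mul hm h, false_or]
    omega

lemma degreeLT_le {n m : ℕ} (h : n ≤ m) {p : K[X]} (hp : p ∈ degreeLT K n) :
    p ∈ degreeLT K m :=
  degreeLT_mono h hp

lemma mod_mem_degreeLT {y : K[X]} (hy : y ≠ 0) (p : K[X]) : p % y ∈ degreeLT K y.natDegree := by
  rw [mem_degreeLT, ← degree_eq_natDegree hy]
  exact EuclideanDomain.mod_lt p hy

lemma div_mem_degreeLT {y : K[X]} (hy : y ≠ 0) {p : K[X]} {n : ℕ} (hp : p ∈ degreeLT K n) :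
    p / y ∈ degreeLT K (n - y.natDegree) := by
  rw [mem_degreeLT_iff] at hp ⊢
  rcases hp with rfl | hp
  · simp
  · by_cases h : p / y = 0
    · exact Or.inl h
    · right
      have hle : y.degree ≤ p.degree := by
        by_contra hlt
        exact h ((Polynomial.div_eq_zero_iff hy).mpr (not_le.mp hlt))
      have h1 := degree_add_div hy hle
      have hp0 : p ≠ 0 := fun h0 => h (by rw [h0, EuclideanDomain.zero_div])
      rw [degree_eq_natDegree hy, degree_eq_natDegree h, degree_eq_natDegree hp0] at h1
      have h2 : y.natDegree + (p / y).natDegree = p.natDegree := by exact_mod_cast h1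
      omega

lemma eq_zero_of_dvd_of_mem_degreeLT {y p : K[X]} (hd : y ∣ p)
    (hp : p ∈ degreeLT K y.natDegree) : p = 0 := by
  rw [mem_degreeLT_iff] at hp
  rcases hp with h | h
  · exact h
  · by_contra h0
    exact absurd (natDegree_le_of_dvd hd h0) (by omega)

lemma mod_eq_of_dvd_sub {y p r : K[X]} (hy : y ≠ 0) (hd : y ∣ p - r)
    (hr : r ∈ degreeLT K y.natDegree) : p % y = r := by
  refine sub_eq_zero.mp (eq_zero_of_dvd_of_mem_degreeLT (y := y) ?_
    (Submodule.sub_mem _ (mod_mem_degreeLT hy p) hr))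
  have h : p % y - r = (p - r) - y * (p / y) := by
    rw [EuclideanDomain.mod_eq_sub_mul_div]; ring
  rw [h]
  exact dvd_sub hd (dvd_mul_right _ _)

lemma dvd_sub_mod (y p : K[X]) : y ∣ p - p % y :=
  ⟨p / y, by rw [EuclideanDomain.mod_eq_sub_mul_div]; ring⟩

variable [Fintype K]

lemma finite_degreeLT (n : ℕ) : {p : K[X] | p ∈ degreeLT K n}.Finite := by
  have : Finite (degreeLT K n) := Finite.of_equiv _ (degreeLTEquiv K n).symm.toEquiv
  exact Set.toFinite (degreeLT K n : Set K[X])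

@[simp] lemma mem_Low {n : ℕ} {p : K[X]} : p ∈ Low K n ↔ p ∈ degreeLT K n :=
  mem_fs (finite_degreeLT n)

lemma card_Low (n : ℕ) : (Low K n).card = Fintype.card K ^ n := by
  have h1 : Nat.card (Low K n) = Nat.card (degreeLT K n) :=
    Nat.card_congr (Equiv.subtypeEquivRight fun _ => mem_Low)
  rw [Nat.card_eq_fintype_card, Fintype.card_coe, Nat.card_congr (degreeLTEquiv K n).toEquiv] at h1
  simpa using h1

@[simp] lemma mem_Mon {n : ℕ} {p : K[X]} : p ∈ Mon K n ↔ p.Monic ∧ p.natDegree = n := by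
  refine mem_fs ((finite_degreeLT (n + 1)).subset fun p hp => ?_)
  rw [Set.mem_ofPred_eq, mem_degreeLT_iff]
  right; rw [hp.2]; omega

lemma mem_Ball {m c f : K[X]} (hm : m ≠ 0) {M : ℕ} :
    f ∈ Ball m c M ↔ m * f - c ∈ degreeLT K M := by
  refine mem_fs (Set.Finite.of_finite_image (f := fun f => m * f - c) ?_ ?_)
  · refine (finite_degreeLT (K := K) M).subset ?_
    rintro _ ⟨f, hf, rfl⟩
    exact hf
  · intro f _ g _ h
    exact mul_left_cancel₀ hm (sub_left_injective h)

lemma sum_Mon_eq_sum_Low (n : ℕ) (φ : K[X] → ℂ) :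
    ∑ p ∈ Mon K n, φ p = ∑ r ∈ Low K n, φ (X ^ n + r) := by
  refine Finset.sum_bij' (fun p _ => p - X ^ n) (fun r _ => X ^ n + r) ?_ ?_ ?_ ?_ ?_
  · intro p hp
    rw [mem_Mon] at hp
    rw [mem_Low, mem_degreeLT]
    have := degree_sub_lt_left (p := p) (q := X ^ n) (by
      rw [degree_X_pow, degree_eq_natDegree hp.1.ne_zero, hp.2]) hp.1.ne_zero (by
      rw [hp.1.leadingCoeff, (monic_X_pow n).leadingCoeff])
    rwa [degree_eq_natDegree hp.1.ne_zero, hp.2] at this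
  · intro r hr
    rw [mem_Low, mem_degreeLT] at hr
    rw [mem_Mon]
    refine ⟨monic_X_pow_add (n := n) hr, ?_⟩
    rw [natDegree_add_eq_left_of_degree_lt (by rwa [degree_X_pow]), natDegree_X_pow]
  · intro p _; ring
  · intro r _; ring
  · intro p _; congr 1; ring

lemma card_Mon (n : ℕ) : (Mon K n).card = Fintype.card K ^ n := by
  have := sum_Mon_eq_sum_Low (K := K) n (fun _ => 1)
  simp only [Finset.sum_const, nsmul_eq_mul, mul_one] at this
  rw [← card_Low (K := K) n]
  exact_mod_cast this

/-- A sum over a long interval of a function that is periodic modulo `y`. -/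
lemma sum_Low_periodic {y : K[X]} (hy : y ≠ 0) (φ : K[X] → ℂ)
    (hφ : ∀ g h, y ∣ g - h → φ g = φ h) (z : K[X]) {u : ℕ} (hu : y.natDegree ≤ u) :
    ∑ r ∈ Low K u, φ (z + r) =
      (Fintype.card K : ℂ) ^ (u - y.natDegree) * ∑ r ∈ Low K y.natDegree, φ r := by
  have h1 : ∑ r ∈ Low K u, φ (z + r) =
      ∑ sr ∈ Low K (u - y.natDegree) ×ˢ Low K y.natDegree, φ (z + (y * sr.1 + sr.2)) := by
    refine Finset.sum_bij' (fun p _ => (p / y, p % y)) (fun sr _ => y * sr.1 + sr.2) ?_ ?_ ?_ ?_ ?_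
    · intro p hp
      rw [mem_Low] at hp
      rw [Finset.mem_product, mem_Low, mem_Low]
      exact ⟨div_mem_degreeLT hy hp, mod_mem_degreeLT hy p⟩
    · intro sr hsr
      rw [Finset.mem_product, mem_Low, mem_Low] at hsr
      rw [mem_Low]
      exact Submodule.add_mem _ ((mul_mem_degreeLT_iff hy).mpr hsr.1) (degreeLT_le hu hsr.2)
    · intro p _
      exact EuclideanDomain.div_add_mod p y
    · intro sr hsr
      rw [Finset.mem_product, mem_Low, mem_Low] at hsr
      have hmod : (y * sr.1 + sr.2) % y = sr.2 :=
        mod_eq_of_dvd_sub hy (by simp) hsr.2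
      refine Prod.ext ?_ hmod
      have h2 := EuclideanDomain.div_add_mod (y * sr.1 + sr.2) y
      rw [hmod] at h2
      exact mul_left_cancel₀ hy (add_right_cancel h2)
    · intro p _
      dsimp only
      rw [EuclideanDomain.div_add_mod p y]
  rw [h1, Finset.sum_product]
  have h2 : ∀ s ∈ Low K (u - y.natDegree),
      ∑ r ∈ Low K y.natDegree, φ (z + (y * s + r)) = ∑ r ∈ Low K y.natDegree, φ r := by
    intro s _
    refine Finset.sum_bij' (fun r _ => (z + r) % y) (fun r _ => (r - z) % y) ?_ ?_ ?_ ?_ ?_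
    · intro r _; rw [mem_Low]; exact mod_mem_degreeLT hy _
    · intro r _; rw [mem_Low]; exact mod_mem_degreeLT hy _
    · intro r hr
      refine mod_eq_of_dvd_sub hy ?_ (mem_Low.mp hr)
      have := (dvd_sub_mod y (z + r)).neg_right
      convert this using 1; ring
    · intro r hr
      refine mod_eq_of_dvd_sub hy ?_ (mem_Low.mp hr)
      have := (dvd_sub_mod y (r - z)).neg_right
      convert this using 1; ring
    · intro r _
      refine hφ _ _ ?_
      have := dvd_add (dvd_mul_right y s) (dvd_sub_mod y (z + r))
      convert this using 1; ring
  rw [Finset.sum_congr rfl h2, Finset.sum_const, card_Low, nsmul_eq_mul]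
  push_cast
  ring

lemma sumMonic_eq (n : ℕ) (φ : K[X] → ℂ) : sumMonic n φ = ∑ p ∈ Mon K n, φ p := by
  rw [sum_Mon_eq_sum_Low, sumMonic]
  refine Finset.sum_bij' (fun c _ => ∑ i : Fin n, C (c i) * X ^ (i : ℕ))
    (fun r _ i => r.coeff i) ?_ ?_ ?_ ?_ ?_
  · intro c _
    rw [mem_Low]
    refine Submodule.sum_mem _ fun i _ => ?_
    rw [mem_degreeLT]
    exact (degree_C_mul_X_pow_le _ _).trans_lt (by exact_mod_cast i.2)
  · intro r _; exact Finset.mem_univ _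
  · intro c _
    funext i
    simp [finsetSum_coeff, coeff_C_mul, coeff_X_pow, Fin.val_inj]
  · intro r hr
    rw [mem_Low, mem_degreeLT] at hr
    rw [Fin.sum_univ_eq_sum_range (fun i => C (r.coeff i) * X ^ i) n]
    ext k
    by_cases hk : k < n
    · simp [finsetSum_coeff, coeff_C_mul, coeff_X_pow, hk]
    · have := coeff_eq_zero_of_degree_lt (p := r) (n := k)
        (hr.trans_le (by exact_mod_cast not_lt.mp hk))
      simp [finsetSum_coeff, coeff_C_mul, coeff_X_pow, hk, this]
  · intro c _; rfl

end FiniteSets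

/-- `y` is a constant times a cube. -/
def IsCube {K : Type} [Field K] (y : K[X]) : Prop := ∃ (c : K) (e : K[X]), c ≠ 0 ∧ y = C c * e ^ 3

section Bracket

variable {K : Type} [Field K] {br : K[X] → K[X] → ℂ} {ω : K → ℂ}

lemma CubicBracket.one_right (S : CubicBracket br ω) {f : K[X]} (hf : f ≠ 0) : br f 1 = 1 := by
  have h1 := S.mul_right f 1 1 hf
  have h0 : br f 1 ≠ 0 := by
    rw [Ne, S.eq_zero_iff f 1 hf, not_not]
    exact isCoprime_one_right
  rw [mul_one] at h1
  exact (mul_left_cancel₀ h0 (by rw [mul_one]; exact h1)).symm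

lemma norm_eq_one_of_cube {z : ℂ} (h : z ^ 3 = 1) : ‖z‖ = 1 :=
  Complex.norm_eq_one_of_pow_eq_one h (by norm_num)

lemma CubicBracket.omega_ne_zero (S : CubicBracket br ω) {c : K} (hc : c ≠ 0) : ω c ≠ 0 := by
  intro h0
  have := S.omega_cube c hc
  rw [h0] at this
  norm_num at this

lemma CubicBracket.norm_omega (S : CubicBracket br ω) {c : K} (hc : c ≠ 0) : ‖ω c‖ = 1 :=
  norm_eq_one_of_cube (S.omega_cube c hc)

lemma CubicBracket.norm_le_one (S : CubicBracket br ω) (f g : K[X]) : ‖br f g‖ ≤ 1 := by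
  by_cases hf : f = 0
  · simp [hf, S.zero_left]
  by_cases hc : IsCoprime f g
  · exact (norm_eq_one_of_cube (S.cube f g hf hc)).le
  · rw [(S.eq_zero_iff f g hf).mpr hc]; simp

lemma CubicBracket.pow_left (S : CubicBracket br ω) (f g : K[X]) (n : ℕ) :
    br (f ^ n) g = br f g ^ n := by
  induction n with
  | zero => simp [S.one_left]
  | succ n ih => rw [pow_succ, S.mul_left, ih, pow_succ]

lemma CubicBracket.omega_one (S : CubicBracket br ω) : ω 1 = 1 := by
  have h1 := S.omega_mul 1 1 one_ne_zero one_ne_zero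
  rw [mul_one] at h1
  exact (mul_left_cancel₀ (S.omega_ne_zero one_ne_zero) (by rw [mul_one]; exact h1)).symm

lemma CubicBracket.C_right (S : CubicBracket br ω) {f : K[X]} (hf : f ≠ 0) {c : K} (hc : c ≠ 0) :
    br f (C c) = ω c ^ f.natDegree := by
  have := S.reciprocity f (C c) hf (C_ne_zero.mpr hc)
  simpa [S.unit_left c f hc] using this

/-- A polynomial whose cubic symbol is trivial is a cube up to a constant. -/
lemma CubicBracket.isCube_of_trivial (S : CubicBracket br ω) :
    ∀ y : K[X], y ≠ 0 → (∀ a, IsCoprime y a → br y a = 1) → IsCube y := by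
  intro y
  induction hn : y.natDegree using Nat.strong_induction_on generalizing y with
  | _ n ih =>
    intro hy htriv
    by_cases hu : IsUnit y
    · obtain ⟨c, hc, rfl⟩ := Polynomial.isUnit_iff.mp hu
      exact ⟨c, 1, hc.ne_zero, by simp⟩
    obtain ⟨P, hPm, hP, hPd⟩ := exists_monic_irreducible_factor y hu
    obtain ⟨w, hyw, hwd⟩ :=
      (FiniteMultiplicity.of_not_isUnit hP.not_isUnit hy).exists_eq_pow_mul_and_not_dvd
    generalize multiplicity P y = v at hyw
    have hw : w ≠ 0 := by rintro rfl; exact hwd (dvd_zero _)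
    have hv : v ≠ 0 := by
      rintro rfl
      rw [pow_zero, one_mul] at hyw
      exact hwd (hyw ▸ hPd)
    have hPw : IsCoprime P w := (hP.coprime_iff_not_dvd).mpr hwd
    obtain ⟨s, t, hst⟩ := hPw
    have hcrt : ∀ a b : K[X], ∃ x, P ∣ x - a ∧ w ∣ x - b := fun a b =>
      ⟨a * (t * w) + b * (s * P), ⟨s * (b - a), by linear_combination a * hst⟩,
        ⟨t * (a - b), by linear_combination b * hst⟩⟩
    have hcop : ∀ x, IsCoprime P x → IsCoprime w x → IsCoprime y x := fun x h1 h2 => by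
      rw [hyw]; exact (h1.pow_left).mul_left h2
    have htrans : ∀ {f g h : K[X]}, f ∣ g - h → IsCoprime f h → IsCoprime f g := by
      rintro f g h ⟨k, hk⟩ hc
      have : g = h + f * k := by rw [← hk]; ring
      rw [this]; exact hc.add_mul_left_right k
    have h3 : 3 ∣ v := by
      obtain ⟨a, ha0, ha1⟩ := S.nontrivial P hP
      have hPa : IsCoprime P a := by
        by_contra h; exact ha0 ((S.eq_zero_iff P a hP.ne_zero).mpr h)
      obtain ⟨x, hx1, hx2⟩ := hcrt a 1
      have h1 := htriv x (hcop x (htrans hx1 hPa) (htrans hx2 isCoprime_one_right))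
      rw [hyw, S.mul_left, S.pow_left, S.congr P x a hx1, S.congr w x 1 hx2, S.one_right hw,
        mul_one] at h1
      have h2 := S.cube P a hP.ne_zero hPa
      have ho : orderOf (br P a) = 3 := orderOf_eq_prime h2 ha1
      rw [← ho]
      exact orderOf_dvd_of_pow_eq_one h1
    obtain ⟨c, e, hc, he⟩ := ih w.natDegree (by
      rw [← hn, hyw, natDegree_mul (pow_ne_zero _ hP.ne_zero) hw, natDegree_pow]
      have := Nat.mul_pos (Nat.pos_of_ne_zero hv) hP.natDegree_pos
      omega) w rfl hw (fun a ha => by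
        obtain ⟨x, hx1, hx2⟩ := hcrt 1 a
        have h1 := htriv x (hcop x (htrans hx1 isCoprime_one_right) (htrans hx2 ha))
        rw [hyw, S.mul_left, S.pow_left, S.congr P x 1 hx1, S.congr w x a hx2,
          S.one_right hP.ne_zero, one_pow, one_mul] at h1
        exact h1)
    obtain ⟨k, rfl⟩ := h3
    exact ⟨c, P ^ k * e, hc, by rw [hyw, he]; ring⟩

lemma isCube_three_dvd {y : K[X]} (h : IsCube y) : 3 ∣ y.natDegree := by
  obtain ⟨c, e, hc, rfl⟩ := h
  rw [natDegree_C_mul hc, natDegree_pow]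
  exact dvd_mul_right _ _

lemma isCube_squarefree {y : K[X]} (h : IsCube y) (hs : Squarefree y) : IsUnit y := by
  obtain ⟨c, e, hc, rfl⟩ := h
  have he : IsUnit e := hs e ⟨C c * e, by ring⟩
  exact (isUnit_C.mpr hc.isUnit).mul (he.pow 3)

variable [Fintype K]

lemma CubicBracket.sum_Low_eq_zero (S : CubicBracket br ω) {y : K[X]} (hy : y ≠ 0)
    (hc : ¬ IsCube y) : ∑ r ∈ Low K y.natDegree, br y r = 0 := by
  have : ∃ a, IsCoprime y a ∧ br y a ≠ 1 := by
    by_contra! h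
    exact hc (S.isCube_of_trivial y hy h)
  obtain ⟨a, ⟨s, t, hst⟩, ha1⟩ := this
  have hmul : br y a * ∑ r ∈ Low K y.natDegree, br y r = ∑ r ∈ Low K y.natDegree, br y r := by
    rw [Finset.mul_sum]
    refine Finset.sum_bij' (fun r _ => (a * r) % y) (fun r _ => (t * r) % y) ?_ ?_ ?_ ?_ ?_
    · intro r _; rw [mem_Low]; exact mod_mem_degreeLT hy _
    · intro r _; rw [mem_Low]; exact mod_mem_degreeLT hy _
    · intro r hr
      refine mod_eq_of_dvd_sub hy ?_ (mem_Low.mp hr)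
      obtain ⟨k, hk⟩ := dvd_sub_mod y (a * r)
      exact ⟨-t * k - s * r, by linear_combination -t * hk + r * hst⟩
    · intro r hr
      refine mod_eq_of_dvd_sub hy ?_ (mem_Low.mp hr)
      obtain ⟨k, hk⟩ := dvd_sub_mod y (t * r)
      exact ⟨-a * k - s * r, by linear_combination -a * hk + r * hst⟩
    · intro r _
      rw [← S.mul_right y a r hy]
      exact S.congr _ _ _ (dvd_sub_mod y _)
  by_contra h0
  exact ha1 (mul_right_cancel₀ h0 (by rw [hmul, one_mul]))

lemma CubicBracket.sum_coset_eq_zero (S : CubicBracket br ω) {y : K[X]} (hy : y ≠ 0)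
    (hc : ¬ IsCube y) (z : K[X]) {u : ℕ} (hu : y.natDegree ≤ u) :
    ∑ r ∈ Low K u, br y (z + r) = 0 := by
  rw [sum_Low_periodic hy (br y) (S.congr y) z hu, S.sum_Low_eq_zero hy hc, mul_zero]

lemma CubicBracket.sum_Mon_eq_zero (S : CubicBracket br ω) {y : K[X]} (hy : y ≠ 0)
    (hc : ¬ IsCube y) {n : ℕ} (hn : y.natDegree ≤ n) : ∑ f ∈ Mon K n, br y f = 0 := by
  rw [sum_Mon_eq_sum_Low]
  exact S.sum_coset_eq_zero hy hc _ hn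

end Bracket

section Lattice

variable {K : Type} [Field K] {br : K[X] → K[X] → ℂ} {ω : K → ℂ}

/-- A coprime pair can be sheared so that its first entry becomes coprime to `y`. -/
lemma exists_isCoprime_add_mul {g f y : K[X]} (h : IsCoprime g f) (hy : y ≠ 0) :
    ∃ s, IsCoprime y (g + s * f) := by
  let T := (UniqueFactorizationMonoid.normalizedFactors y).toFinset.filter (fun P => ¬ P ∣ g)
  refine ⟨∏ P ∈ T, P, ?_⟩
  refine isCoprime_of_irreducible_dvd (fun h0 => hy h0.1) ?_
  intro Q hQ hQy hQd
  obtain ⟨P, hP, hQP⟩ := UniqueFactorizationMonoid.exists_mem_normalizedFactors_of_dvd hy hQ hQy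
  have hPirr := UniqueFactorizationMonoid.irreducible_of_normalized_factor P hP
  have hPd : P ∣ g + (∏ P ∈ T, P) * f := hQP.symm.dvd.trans hQd
  by_cases hPg : P ∣ g
  · have h1 : P ∣ (∏ P ∈ T, P) * f := (dvd_add_right hPg).mp hPd
    rcases hPirr.prime.dvd_or_dvd h1 with h2 | h2
    · obtain ⟨R, hR, hPR⟩ := hPirr.prime.exists_mem_finset_dvd h2
      rw [Finset.mem_filter, Multiset.mem_toFinset] at hR
      have hRirr := UniqueFactorizationMonoid.irreducible_of_normalized_factor R hR.1
      exact hR.2 ((hPirr.associated_of_dvd hRirr hPR).symm.dvd.trans hPg)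
    · exact hPirr.not_isUnit (h.isUnit_of_dvd' hPg h2)
  · have hPT : P ∈ T := Finset.mem_filter.mpr ⟨Multiset.mem_toFinset.mpr hP, hPg⟩
    have h1 : P ∣ (∏ P ∈ T, P) * f := (Finset.dvd_prod_of_mem _ hPT).mul_right _
    exact hPg ((dvd_add_left h1).mp hPd)

/-- Along a line in direction of a primitive vector, and as long as the degree and the leading
coefficient of the modulus stay constant, the symbol is a constant times a symbol of fixed
modulus. -/
lemma CubicBracket.exists_const_mul (S : CubicBracket br ω) {g₀ f₀ g₁ f₁ y : K[X]}
    (hdet : g₀ * f₁ - f₀ * g₁ = 1) (hy : y ≠ 0) (Z : Finset K[X]) {n : ℕ} {l : K} (hl : l ≠ 0)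
    (hZ : ∀ z ∈ Z, (z * f₀ + y * f₁).natDegree = n ∧ (z * f₀ + y * f₁).leadingCoeff = l) :
    ∃ κ : ℂ, ∀ z ∈ Z, br (z * f₀ + y * f₁) (z * g₀ + y * g₁) = κ * br y z := by
  have hcop : IsCoprime g₀ f₀ := ⟨f₁, -g₁, by linear_combination hdet⟩
  obtain ⟨s₀, hs₀⟩ := exists_isCoprime_add_mul hcop hy
  let j := s₀.natDegree + g₀.natDegree + 1 + ∑ z ∈ Z, (z * g₀ + y * g₁).natDegree
  let s := s₀ + y * X ^ j
  have hjs : s.natDegree = y.natDegree + j := by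
    have h1 : (y * X ^ j).natDegree = y.natDegree + j := natDegree_mul_X_pow j hy
    rw [natDegree_add_eq_right_of_natDegree_lt (by rw [h1]; omega), h1]
  have hs : s ≠ 0 := by
    intro h0; rw [h0, natDegree_zero] at hjs; omega
  have hyα : IsCoprime y (g₀ + s * f₀) := by
    have : g₀ + s * f₀ = g₀ + s₀ * f₀ + y * (X ^ j * f₀) := by simp only [s]; ring
    rw [this]
    exact hs₀.add_mul_left_right _
  generalize hα' : g₀ + s * f₀ = α at hyα
  have hα : α ≠ 0 := by
    by_cases hf₀ : f₀ = 0
    · rw [hf₀, mul_zero, add_zero] at hα'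
      rw [← hα']
      rintro rfl
      simp [hf₀] at hdet
    · have h1 : g₀.natDegree < (s * f₀).natDegree := by
        rw [natDegree_mul hs hf₀, hjs]; omega
      have h2 := natDegree_add_eq_right_of_natDegree_lt h1
      rw [hα'] at h2
      rintro rfl
      rw [natDegree_zero] at h2
      omega
  let γ := g₁ + s * f₁
  have hαγ : IsCoprime α γ := ⟨f₁, -f₀, by simp only [γ]; rw [← hα']; linear_combination hdet⟩
  have hc6 : br α (γ * y) ≠ 0 := by
    rw [Ne, S.eq_zero_iff _ _ hα, not_not]
    exact hαγ.mul_right hyα.symm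
  have hly : y.leadingCoeff ≠ 0 := leadingCoeff_ne_zero.mpr hy
  have hls : s.leadingCoeff ≠ 0 := leadingCoeff_ne_zero.mpr hs
  have hlα : α.leadingCoeff ≠ 0 := leadingCoeff_ne_zero.mpr hα
  let d := s.natDegree + n
  let lG := s.leadingCoeff * l
  have hlG : lG ≠ 0 := mul_ne_zero hls hl
  refine ⟨ω lG ^ n / ω l ^ d * (br y α * ω y.leadingCoeff ^ d / ω lG ^ y.natDegree) /
    (br α (γ * y) * ω α.leadingCoeff ^ d / ω lG ^ α.natDegree), fun z hz => ?_⟩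
  obtain ⟨hfn, hfl⟩ := hZ z hz
  generalize hf' : z * f₀ + y * f₁ = f at hfn hfl
  generalize hg' : z * g₀ + y * g₁ = g
  have hf : f ≠ 0 := by
    rintro rfl; rw [leadingCoeff_zero] at hfl; exact hl hfl.symm
  have hglt : g.natDegree < (s * f).natDegree := by
    rw [natDegree_mul hs hf, hjs]
    have : g.natDegree ≤ ∑ z ∈ Z, (z * g₀ + y * g₁).natDegree := by
      rw [← hg']
      exact Finset.single_le_sum (f := fun z => (z * g₀ + y * g₁).natDegree)
        (fun _ _ => Nat.zero_le _) hz
    omega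
  generalize hG' : g + s * f = G
  have hGd : G.natDegree = d := by
    rw [← hG', natDegree_add_eq_right_of_natDegree_lt hglt, natDegree_mul hs hf, hfn]
  have hGl : G.leadingCoeff = lG := by
    rw [← hG', leadingCoeff_add_of_degree_lt (degree_lt_degree hglt), leadingCoeff_mul, hfl]
  have hG : G ≠ 0 := by
    rintro rfl; rw [leadingCoeff_zero] at hGl; exact hlG hGl.symm
  have e0 : br f g = br f G := S.congr f g G ⟨-s, by rw [← hG']; ring⟩
  have e1 := S.reciprocity f G hf hG
  have e2 : br G α * br G f = br G y := by
    rw [← S.mul_right G α f hG]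
    refine S.congr G _ _ ⟨f₀, ?_⟩
    rw [← hG', ← hα', ← hg', ← hf']
    linear_combination y * hdet
  have e3 := S.reciprocity G y hG hy
  have e4 : br y G = br y α * br y z := by
    rw [← S.mul_right y α z hy]
    refine S.congr y _ _ ⟨γ, ?_⟩
    simp only [γ]
    rw [← hG', ← hα', ← hg', ← hf']
    ring
  have e5 := S.reciprocity G α hG hα
  have e6 : br α G = br α (γ * y) := by
    refine S.congr α _ _ ⟨z, ?_⟩
    simp only [γ]
    rw [← hG', ← hα', ← hg', ← hf']
    ring
  rw [hGd, hGl, hfn, hfl] at e1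
  rw [hGd, hGl, e4] at e3
  rw [hGd, hGl, e6] at e5
  have hω : ∀ {c : K} (k : ℕ), c ≠ 0 → ω c ^ k ≠ 0 := fun k hc => pow_ne_zero _ (S.omega_ne_zero hc)
  have n1 := hω d hl
  have n2 := hω n hlG
  have n3 := hω y.natDegree hlG
  have n4 := hω d hly
  have n5 := hω α.natDegree hlG
  have n6 := hω d hlα
  rw [e0]
  have r5 : br G α = br α (γ * y) * ω α.leadingCoeff ^ d / ω lG ^ α.natDegree := by
    rw [eq_div_iff n5]; exact e5
  have r3 : br G y = br y α * br y z * ω y.leadingCoeff ^ d / ω lG ^ y.natDegree := by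
    rw [eq_div_iff n3]; exact e3
  have r1 : br f G = br G f * ω lG ^ n / ω l ^ d := by
    rw [eq_div_iff n1]; exact e1
  have hGα : br G α ≠ 0 := by
    rw [r5]; exact div_ne_zero (mul_ne_zero hc6 n6) n5
  have r2 : br G f = br G y / br G α := by
    rw [eq_div_iff hGα, mul_comm]; exact e2
  rw [← r5, r1, r2, r3]
  ring

variable [Fintype K]

/-- A nonzero vector with small values of two linear forms, by the pigeonhole principle. -/
lemma exists_small_vector {B m : K[X]} (hB : B ≠ 0) (hm : m ≠ 0) (t c : K[X]) {h₁ h₂ : ℕ}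
    (h : m.natDegree + B.natDegree + 1 ≤ h₁ + h₂) :
    ∃ g f : K[X], (g ≠ 0 ∨ f ≠ 0) ∧ B * g + t * f ∈ degreeLT K h₁ ∧
      m * f - c * (B * g + t * f) ∈ degreeLT K h₂ := by
  let Φ : K[X] × K[X] → K[X] × K[X] := fun p =>
    ((p.2 + c * p.1) % m, (p.1 - t * ((p.2 + c * p.1) / m)) % B)
  obtain ⟨p, hp, p', hp', hne, heq⟩ := Finset.exists_ne_map_eq_of_card_lt_of_maps_to
    (s := Low K h₁ ×ˢ Low K h₂) (t := Low K m.natDegree ×ˢ Low K B.natDegree) (f := Φ)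
    (by
      rw [Finset.card_product, Finset.card_product, card_Low, card_Low, card_Low, card_Low,
        ← pow_add, ← pow_add]
      exact Nat.pow_lt_pow_right Fintype.one_lt_card (by omega))
    (by
      intro p _
      simp only [Finset.mem_coe, Finset.mem_product, mem_Low, Φ]
      exact ⟨mod_mem_degreeLT hm _, mod_mem_degreeLT hB _⟩)
  obtain ⟨x, y⟩ := p
  obtain ⟨x', y'⟩ := p'
  simp only [Finset.mem_product, mem_Low] at hp hp'
  simp only [Φ, Prod.mk.injEq] at heq
  obtain ⟨he1, he2⟩ := heq
  have d1 := EuclideanDomain.div_add_mod (y + c * x) m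
  have d2 := EuclideanDomain.div_add_mod (y' + c * x') m
  generalize (y + c * x) / m = f at *
  generalize (y' + c * x') / m = f' at *
  have d3 := EuclideanDomain.div_add_mod (x - t * f) B
  have d4 := EuclideanDomain.div_add_mod (x' - t * f') B
  generalize (x - t * f) / B = g at *
  generalize (x' - t * f') / B = g' at *
  rw [he1] at d1
  rw [he2] at d3
  have hX : B * (g - g') + t * (f - f') = x - x' := by linear_combination d3 - d4
  have hY : m * (f - f') - c * (B * (g - g') + t * (f - f')) = y - y' := by
    rw [hX]; linear_combination d1 - d2
  refine ⟨g - g', f - f', ?_, ?_, ?_⟩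
  · by_contra! h0
    rw [h0.1, h0.2] at hX hY
    simp only [mul_zero, add_zero, sub_zero] at hX hY
    exact hne (Prod.ext (sub_eq_zero.mp hX.symm) (sub_eq_zero.mp hY.symm))
  · rw [hX]; exact Submodule.sub_mem _ hp.1 hp'.1
  · rw [hY]; exact Submodule.sub_mem _ hp.2 hp'.2

end Lattice

section LatticeSum

variable {K : Type} [Field K] {br : K[X] → K[X] → ℂ} {ω : K → ℂ}

/-- The vectors `(g, f)` for which `B * g + t * f` is monic of degree `N` and
`m * f - c * (B * g + t * f)` has degree less than `M`. -/
def Region (B t m c : K[X]) (N M : ℕ) : Finset (K[X] × K[X]) :=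
  fs {w | ((B * w.1 + t * w.2).Monic ∧ (B * w.1 + t * w.2).natDegree = N) ∧
    m * w.2 - c * (B * w.1 + t * w.2) ∈ degreeLT K M}

lemma eq_of_forms_eq {B t m c g f g' f' : K[X]} (hB : B ≠ 0) (hm : m ≠ 0)
    (h1 : B * g + t * f = B * g' + t * f')
    (h2 : m * f - c * (B * g + t * f) = m * f' - c * (B * g' + t * f')) : g = g' ∧ f = f' := by
  have hf : f = f' := mul_left_cancel₀ hm (by linear_combination h2 + c * h1)
  subst hf
  exact ⟨mul_left_cancel₀ hB (by linear_combination h1), rfl⟩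

lemma mul_mem_degreeLT_of_mem {p r : K[X]} {a b u : ℕ} (hp : p ∈ degreeLT K (a + 1 - u))
    (hr : r ∈ degreeLT K (b + 1)) : p * r ∈ degreeLT K (a + b + 1 - u) := by
  rw [mem_degreeLT_iff] at *
  rcases hp with rfl | hp
  · simp
  rcases hr with rfl | hr
  · simp
  right
  have := natDegree_mul_le (p := p) (q := r)
  omega

lemma sub_mem_degreeLT_of_monic {p r : K[X]} {n : ℕ} (hp : p.Monic) (hpn : p.natDegree = n)
    (hr : r.Monic) (hrn : r.natDegree = n) : p - r ∈ degreeLT K n := by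
  rw [mem_degreeLT, ← hpn, ← degree_eq_natDegree hp.ne_zero]
  refine degree_sub_lt_left ?_ hp.ne_zero (by rw [hp.leadingCoeff, hr.leadingCoeff])
  rw [degree_eq_natDegree hp.ne_zero, degree_eq_natDegree hr.ne_zero, hpn, hrn]

variable [Fintype K]

lemma mem_Region {B t m c : K[X]} (hB : B ≠ 0) (hm : m ≠ 0) {N M : ℕ} {w : K[X] × K[X]} :
    w ∈ Region B t m c N M ↔ ((B * w.1 + t * w.2).Monic ∧ (B * w.1 + t * w.2).natDegree = N) ∧
      m * w.2 - c * (B * w.1 + t * w.2) ∈ degreeLT K M := by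
  refine mem_fs (Set.Finite.of_finite_image
    (f := fun w => (B * w.1 + t * w.2, m * w.2 - c * (B * w.1 + t * w.2))) ?_ ?_)
  · refine ((Mon K N ×ˢ Low K M).finite_toSet).subset ?_
    rintro _ ⟨w, hw, rfl⟩
    rw [Finset.mem_coe, Finset.mem_product, mem_Mon, mem_Low]
    exact hw
  · intro w _ w' _ h
    rw [Prod.mk.injEq] at h
    have := eq_of_forms_eq hB hm h.1 h.2
    exact Prod.ext this.1 this.2

/-- Over a region that stays away from `f = 0`, the degree and the leading coefficient of `f`
are constant. -/
lemma Region_leading {m c A f : K[X]} (hm : m ≠ 0) (hc : c ≠ 0) {N M : ℕ}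
    (hM : M ≤ c.natDegree + N) (hA : A.Monic) (hAn : A.natDegree = N)
    (h : m * f - c * A ∈ degreeLT K M) :
    f.natDegree = c.natDegree + N - m.natDegree ∧
      f.leadingCoeff = c.leadingCoeff / m.leadingCoeff := by
  have hcA : (c * A).natDegree = c.natDegree + N := by
    rw [natDegree_mul hc hA.ne_zero, hAn]
  have hcA0 : c * A ≠ 0 := mul_ne_zero hc hA.ne_zero
  have hlt : (m * f - c * A).degree < (c * A).degree := by
    rw [mem_degreeLT] at h
    rw [degree_eq_natDegree hcA0, hcA]
    exact h.trans_le (by exact_mod_cast hM)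
  have e : m * f = c * A + (m * f - c * A) := by ring
  have h1 : (m * f).degree = (c * A).degree := by
    rw [e]; exact degree_add_eq_left_of_degree_lt hlt
  have h2 : (m * f).leadingCoeff = c.leadingCoeff := by
    rw [e, leadingCoeff_add_of_degree_lt' hlt, leadingCoeff_mul, hA.leadingCoeff, mul_one]
  have hf : f ≠ 0 := by
    rintro rfl
    rw [mul_zero, leadingCoeff_zero] at h2
    exact hc (leadingCoeff_eq_zero.mp h2.symm)
  have h3 := natDegree_eq_of_degree_eq h1
  rw [natDegree_mul hm hf, hcA] at h3
  refine ⟨by omega, ?_⟩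
  rw [eq_div_iff (leadingCoeff_ne_zero.mpr hm), ← h2, leadingCoeff_mul, mul_comm]

/-- The part of the lattice sum lying on a line in direction of a primitive vector. -/
lemma CubicBracket.line_bound (S : CubicBracket br ω) {g₀ f₀ g₁ f₁ : K[X]}
    (hdet : g₀ * f₁ - f₀ * g₁ = 1) {u : ℕ} (y : K[X]) (R : Finset (K[X] × K[X]))
    {n : ℕ} {l : K} (hl : l ≠ 0)
    (hR : ∀ w ∈ R, g₀ * w.2 - f₀ * w.1 = y ∧ w.2.natDegree = n ∧ w.2.leadingCoeff = l)
    (hline : ∀ w ∈ R, ∀ ζ, (w.1 + ζ * g₀, w.2 + ζ * f₀) ∈ R ↔ ζ ∈ degreeLT K u)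
    (hyu : y.natDegree ≤ u) :
    ‖∑ w ∈ R, br w.2 w.1‖ ≤ if y = 0 then (Fintype.card K : ℝ) else
      if IsCube y then (Fintype.card K : ℝ) ^ u else 0 := by
  rcases R.eq_empty_or_nonempty with rfl | ⟨v, hv⟩
  · simp only [Finset.sum_empty, norm_zero]
    split_ifs <;> positivity
  have hrep : ∀ w ∈ R, w.1 = (w.1 * f₁ - w.2 * g₁) * g₀ + y * g₁ ∧
      w.2 = (w.1 * f₁ - w.2 * g₁) * f₀ + y * f₁ := by
    intro w hw
    have := (hR w hw).1
    constructor
    · linear_combination g₁ * this - w.1 * hdet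
    · linear_combination f₁ * this - w.2 * hdet
  let z := v.1 * f₁ - v.2 * g₁
  have hpar : ∀ φ : K[X] × K[X] → ℂ, ∑ w ∈ R, φ w =
      ∑ ζ ∈ Low K u, φ ((z + ζ) * g₀ + y * g₁, (z + ζ) * f₀ + y * f₁) := by
    intro φ
    refine Finset.sum_bij' (fun w _ => w.1 * f₁ - w.2 * g₁ - z)
      (fun ζ _ => ((z + ζ) * g₀ + y * g₁, (z + ζ) * f₀ + y * f₁)) ?_ ?_ ?_ ?_ ?_
    · intro w hw
      rw [mem_Low, ← hline v hv]
      convert hw using 1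
      have e1 := hrep w hw
      have e2 := hrep v hv
      refine Prod.ext ?_ ?_
      · simp only [z]; linear_combination e2.1 - e1.1
      · simp only [z]; linear_combination e2.2 - e1.2
    · intro ζ hζ
      rw [mem_Low, ← hline v hv] at hζ
      convert hζ using 1
      have e2 := hrep v hv
      refine Prod.ext ?_ ?_
      · simp only [z]; linear_combination -e2.1
      · simp only [z]; linear_combination -e2.2
    · intro w hw
      have e1 := hrep w hw
      refine Prod.ext ?_ ?_
      · simp only [z]; linear_combination -e1.1
      · simp only [z]; linear_combination -e1.2
    · intro ζ _
      linear_combination (z + ζ) * hdet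
    · intro w hw
      have e1 := hrep w hw
      congr 1
      refine Prod.ext ?_ ?_
      · simp only [z]; linear_combination e1.1
      · simp only [z]; linear_combination e1.2
  have hmem : ∀ ζ ∈ Low K u, ((z + ζ) * g₀ + y * g₁, (z + ζ) * f₀ + y * f₁) ∈ R := by
    intro ζ hζ
    rw [mem_Low, ← hline v hv] at hζ
    convert hζ using 1
    have e2 := hrep v hv
    refine Prod.ext ?_ ?_
    · simp only [z]; linear_combination -e2.1
    · simp only [z]; linear_combination -e2.2
  by_cases hy : y = 0
  · rw [if_pos hy]
    subst hy
    have hsub : ∑ w ∈ R, br w.2 w.1 =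
        ∑ w ∈ R with ∃ c : K, w = (C c * g₀, C c * f₀), br w.2 w.1 := by
      symm
      refine Finset.sum_subset (Finset.filter_subset _ _) fun w hw hnw => ?_
      have e1 := hrep w hw
      have hf : w.2 ≠ 0 := by
        intro h0
        have := (hR w hw).2.2
        rw [h0, leadingCoeff_zero] at this
        exact hl this.symm
      rw [S.eq_zero_iff _ _ hf]
      intro hcop
      apply hnw
      have hu : IsUnit (w.1 * f₁ - w.2 * g₁) :=
        hcop.isUnit_of_dvd' ⟨f₀, by linear_combination e1.2⟩ ⟨g₀, by linear_combination e1.1⟩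
      obtain ⟨c, -, hc⟩ := Polynomial.isUnit_iff.mp hu
      rw [Finset.mem_filter]
      refine ⟨hw, c, Prod.ext ?_ ?_⟩
      · simp only [hc]; linear_combination e1.1
      · simp only [hc]; linear_combination e1.2
    rw [hsub]
    refine (norm_sum_le_of_le _ (fun w _ => S.norm_le_one w.2 w.1)).trans ?_
    rw [Finset.sum_const, nsmul_eq_mul, mul_one]
    have : (R.filter fun w => ∃ c : K, w = (C c * g₀, C c * f₀)) ⊆
        (Finset.univ : Finset K).image (fun c => (C c * g₀, C c * f₀)) := by
      intro w hw
      obtain ⟨c, hc⟩ := (Finset.mem_filter.mp hw).2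
      exact Finset.mem_image.mpr ⟨c, Finset.mem_univ _, hc.symm⟩
    have h2 := (Finset.card_le_card this).trans Finset.card_image_le
    rw [Finset.card_univ] at h2
    exact_mod_cast h2
  rw [if_neg hy]
  split_ifs with hcube
  · rw [hpar]
    refine (norm_sum_le_of_le _ (fun ζ _ => S.norm_le_one _ _)).trans ?_
    rw [Finset.sum_const, nsmul_eq_mul, mul_one, card_Low]
    push_cast
    exact le_rfl
  · obtain ⟨κ, hκ⟩ := S.exists_const_mul hdet hy ((Low K u).image (fun ζ => z + ζ)) (n := n) hl (by
      intro x hx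
      obtain ⟨ζ, hζ, rfl⟩ := Finset.mem_image.mp hx
      exact (hR _ (hmem ζ hζ)).2)
    rw [hpar]
    dsimp only
    rw [Finset.sum_congr rfl fun ζ hζ => hκ (z + ζ) (Finset.mem_image_of_mem _ hζ),
      ← Finset.mul_sum, S.sum_coset_eq_zero hy hcube z hyu, mul_zero, norm_zero]

end LatticeSum

section LatticeBound

variable {K : Type} [Field K] {br : K[X] → K[X] → ℂ} {ω : K → ℂ}

lemma mem_degreeLT_of_mul_mem {z p : K[X]} (hz : z ≠ 0) {n u : ℕ} (hu : u ≤ z.natDegree)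
    (h : z * p ∈ degreeLT K n) : p ∈ degreeLT K (n - u) :=
  degreeLT_le (by omega) ((mul_mem_degreeLT_iff hz).mp h)

lemma monic_add_iff {p r : K[X]} {n : ℕ} (hp : p.Monic) (hpn : p.natDegree = n) :
    ((p + r).Monic ∧ (p + r).natDegree = n) ↔ r ∈ degreeLT K n := by
  constructor
  · rintro ⟨h1, h2⟩
    have := sub_mem_degreeLT_of_monic h1 h2 hp hpn
    rwa [add_sub_cancel_left] at this
  · intro h
    have hlt : r.degree < p.degree := by
      rw [degree_eq_natDegree hp.ne_zero, hpn]
      exact mem_degreeLT.mp h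
    exact ⟨hp.add_of_left hlt, by rw [natDegree_add_eq_left_of_degree_lt hlt, hpn]⟩

lemma mul_mem_degreeLT_of_mem_sub {ζ p : K[X]} {n u : ℕ} (hζ : ζ ∈ degreeLT K u)
    (hp : p ∈ degreeLT K (n + 1 - u)) : ζ * p ∈ degreeLT K n := by
  rw [mem_degreeLT_iff] at *
  rcases hζ with rfl | hζ
  · simp
  rcases hp with rfl | hp
  · simp
  right
  have := natDegree_mul_le (p := ζ) (q := p)
  omega

variable [Fintype K]

/-- The number of constant multiples of cubes of bounded degree. -/
lemma card_cubes_le (Y : Finset K[X]) (k : ℕ)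
    (hY : ∀ y ∈ Y, y ≠ 0 ∧ IsCube y ∧ y.natDegree / 3 ≤ k) :
    Y.card ≤ Fintype.card K ^ (k + 2) := by
  have : Y ⊆ ((Finset.univ : Finset K) ×ˢ Low K (k + 1)).image (fun p => C p.1 * p.2 ^ 3) := by
    intro y hy
    obtain ⟨h0, ⟨c, e, hc, rfl⟩, hk⟩ := hY y hy
    rw [Finset.mem_image]
    refine ⟨(c, e), ?_, rfl⟩
    rw [Finset.mem_product, mem_Low, mem_degreeLT_iff]
    refine ⟨Finset.mem_univ _, Or.inr ?_⟩
    rw [natDegree_C_mul hc, natDegree_pow] at hk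
    dsimp only
    omega
  refine (Finset.card_le_card this).trans (Finset.card_image_le.trans ?_)
  rw [Finset.card_product, Finset.card_univ, card_Low, pow_succ (n := k + 1), mul_comm]

/-- There is a primitive vector of extremal size for the two linear forms. -/
lemma exists_extremal_vector {B m : K[X]} (hB : B ≠ 0) (hm : m ≠ 0) (t c : K[X]) {N M : ℕ}
    (h0 : ∃ g f : K[X], (g ≠ 0 ∨ f ≠ 0) ∧ B * g + t * f ∈ degreeLT K (N + 1) ∧
      m * f - c * (B * g + t * f) ∈ degreeLT K (M + 1)) :
    ∃ (u : ℕ) (g f : K[X]), IsCoprime g f ∧ (g ≠ 0 ∨ f ≠ 0) ∧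
      B * g + t * f ∈ degreeLT K (N + 1 - u) ∧
      m * f - c * (B * g + t * f) ∈ degreeLT K (M + 1 - u) ∧
      N + M ≤ 2 * u + m.natDegree + B.natDegree ∧
      ∀ ζ : K[X], ζ * (B * g + t * f) ∈ degreeLT K N →
        ζ * (m * f - c * (B * g + t * f)) ∈ degreeLT K M → ζ ∈ degreeLT K u := by
  let Good : ℕ → Prop := fun u => ∃ g f : K[X], (g ≠ 0 ∨ f ≠ 0) ∧
    B * g + t * f ∈ degreeLT K (N + 1 - u) ∧
    m * f - c * (B * g + t * f) ∈ degreeLT K (M + 1 - u)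
  have hbad : ∃ u, ¬ Good u := by
    refine ⟨N + M + 1, ?_⟩
    rintro ⟨g, f, hne, h1, h2⟩
    rw [mem_degreeLT_iff] at h1 h2
    have e1 : B * g + t * f = 0 := by
      rcases h1 with h | h
      · exact h
      · omega
    have e2 : m * f - c * (B * g + t * f) = 0 := by
      rcases h2 with h | h
      · exact h
      · omega
    have := eq_of_forms_eq (B := B) (t := t) (m := m) (c := c) (g := g) (f := f) (g' := 0)
      (f' := 0) hB hm (by rw [e1]; ring) (by rw [e2]; ring)
    rcases hne with h | h
    · exact h this.1
    · exact h this.2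
  have h0' : Good 0 := h0
  have hpos : Nat.find hbad ≠ 0 := fun h => (h ▸ Nat.find_spec hbad) h0'
  obtain ⟨u, hu⟩ := Nat.exists_eq_succ_of_ne_zero hpos
  have hnot : ¬ Good (u + 1) := by
    have := Nat.find_spec hbad
    rwa [hu] at this
  have hgood : Good u := not_not.mp (Nat.find_min hbad (by omega))
  obtain ⟨g, f, hne, h1, h2⟩ := hgood
  refine ⟨u, g, f, ?_, hne, h1, h2, ?_, ?_⟩
  · refine isCoprime_of_irreducible_dvd (fun h => hne.elim (· h.1) (· h.2)) ?_
    rintro z hz ⟨g', rfl⟩ ⟨f', rfl⟩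
    refine hnot ⟨g', f', ?_, ?_, ?_⟩
    · rcases hne with h | h
      · exact Or.inl (right_ne_zero_of_mul h)
      · exact Or.inr (right_ne_zero_of_mul h)
    · have := mem_degreeLT_of_mul_mem (z := z) (p := B * g' + t * f') hz.ne_zero hz.natDegree_pos
        (by convert h1 using 1; ring)
      exact degreeLT_le (by omega) this
    · have := mem_degreeLT_of_mul_mem (z := z) (p := m * f' - c * (B * g' + t * f'))
        hz.ne_zero hz.natDegree_pos (by convert h2 using 1; ring)
      exact degreeLT_le (by omega) this
  · by_contra hlt
    exact hnot (exists_small_vector hB hm t c (by omega))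
  · intro ζ h3 h4
    by_contra h5
    rw [mem_degreeLT_iff, not_or, not_lt] at h5
    refine hnot ⟨g, f, hne, ?_, ?_⟩
    · exact degreeLT_le (by omega) (mem_degreeLT_of_mul_mem h5.1 h5.2 h3)
    · exact degreeLT_le (by omega) (mem_degreeLT_of_mul_mem h5.1 h5.2 h4)

theorem CubicBracket.lattice_sum_bound (S : CubicBracket br ω) {B m c : K[X]} (hB : B ≠ 0)
    (hm : m ≠ 0) (hc : c ≠ 0) (t : K[X]) {N M : ℕ} (hM : M ≤ c.natDegree + N) :
    ∃ u : ℕ, ‖∑ w ∈ Region B t m c N M, br w.2 w.1‖ ≤ (Fintype.card K : ℝ) +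
        (Fintype.card K : ℝ) ^ 2 * (Fintype.card K : ℝ) ^
          (((N : ℝ) + M - B.natDegree - m.natDegree + 2 * u) / 3) ∧
      (u ≤ N ∨ ∃ E : K[X], E.Monic ∧ E ∣ B ∧ E ∣ t ∧
        u + m.natDegree + B.natDegree ≤ M + E.natDegree) := by
  have hq1 : (1 : ℝ) ≤ Fintype.card K := by exact_mod_cast Fintype.card_pos
  rcases (Region B t m c N M).eq_empty_or_nonempty with hemp | ⟨v, hv⟩
  · refine ⟨0, ?_, Or.inl (Nat.zero_le _)⟩
    rw [hemp, Finset.sum_empty, norm_zero]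
    positivity
  rw [mem_Region hB hm] at hv
  obtain ⟨u, g₀, f₀, hcop, hne, hL1, hL2, hsize, hext⟩ :=
    exists_extremal_vector (N := N) (M := M) hB hm t c (by
      refine ⟨v.1, v.2, ?_, ?_, degreeLT_le (Nat.le_succ _) hv.2⟩
      · by_contra hcon
        push Not at hcon
        apply hv.1.1.ne_zero
        rw [hcon.1, hcon.2]; ring
      · rw [mem_degreeLT_iff]; right; omega)
  refine ⟨u, ?_, ?_⟩
  swap
  · by_cases hL0 : B * g₀ + t * f₀ = 0
    · right
      have hf0 : f₀ ≠ 0 := by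
        rintro rfl
        rw [mul_zero, add_zero] at hL0
        rcases hne with h | h
        · exact h ((mul_eq_zero.mp hL0).resolve_left hB)
        · exact h rfl
      have hd : f₀ ∣ B := by
        refine hcop.symm.dvd_of_dvd_mul_right (⟨-t, ?_⟩ : f₀ ∣ B * g₀)
        linear_combination hL0
      obtain ⟨E, rfl⟩ := hd
      have hE0 : E ≠ 0 := right_ne_zero_of_mul hB
      have hEt : E ∣ t := by
        refine ⟨-g₀, mul_left_cancel₀ hf0 ?_⟩
        linear_combination hL0
      rw [hL0, mul_zero, sub_zero, mem_degreeLT_iff, natDegree_mul hm hf0] at hL2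
      have h3 := hL2.resolve_left (mul_ne_zero hm hf0)
      refine ⟨normalize E, monic_normalize hE0,
        normalize_dvd_iff.mpr (dvd_mul_left _ _), normalize_dvd_iff.mpr hEt, ?_⟩
      rw [natDegree_mul hf0 hE0, natDegree_eq_of_degree_eq degree_normalize]
      omega
    · left
      rw [mem_degreeLT_iff] at hL1
      have := hL1.resolve_left hL0
      omega
  obtain ⟨a, b, hab⟩ := hcop
  have hdet : g₀ * a - f₀ * (-b) = 1 := by linear_combination hab
  let δ : K[X] × K[X] → K[X] := fun w => g₀ * w.2 - f₀ * w.1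
  let R := Region B t m c N M
  let Y := R.image δ
  have hdeg : ∀ y ∈ Y, y ≠ 0 → B.natDegree + m.natDegree + y.natDegree + u ≤ N + M := by
    intro y hy hy0
    obtain ⟨w, hw, rfl⟩ := Finset.mem_image.mp hy
    rw [mem_Region hB hm] at hw
    have hw1 : B * w.1 + t * w.2 ∈ degreeLT K (N + 1) := by
      rw [mem_degreeLT_iff]; right; omega
    have h1 := mul_mem_degreeLT_of_mem hL1 (degreeLT_le (Nat.le_succ _) hw.2)
    have h2 := mul_mem_degreeLT_of_mem hL2 hw1
    rw [add_comm M N] at h2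
    have h3 := Submodule.sub_mem _ h1 h2
    have e : (B * g₀ + t * f₀) * (m * w.2 - c * (B * w.1 + t * w.2)) -
      (m * f₀ - c * (B * g₀ + t * f₀)) * (B * w.1 + t * w.2) = B * m * δ w := by
      simp only [δ]; ring
    rw [e, mem_degreeLT_iff] at h3
    have h4 := h3.resolve_left (mul_ne_zero (mul_ne_zero hB hm) hy0)
    rw [natDegree_mul (mul_ne_zero hB hm) hy0, natDegree_mul hB hm] at h4
    omega
  have hfib : ∀ y ∈ Y, ‖∑ w ∈ R with δ w = y, br w.2 w.1‖ ≤
      if y = 0 then (Fintype.card K : ℝ) else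
        if IsCube y then (Fintype.card K : ℝ) ^ u else 0 := by
    intro y hy
    have hl : c.leadingCoeff / m.leadingCoeff ≠ 0 :=
      div_ne_zero (leadingCoeff_ne_zero.mpr hc) (leadingCoeff_ne_zero.mpr hm)
    refine S.line_bound hdet y _ (n := c.natDegree + N - m.natDegree) hl ?_ ?_ ?_
    · intro w hw
      rw [Finset.mem_filter, mem_Region hB hm] at hw
      exact ⟨hw.2, Region_leading hm hc hM hw.1.1.1 hw.1.1.2 hw.1.2⟩
    · intro w hw ζ
      rw [Finset.mem_filter, mem_Region hB hm] at hw ⊢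
      obtain ⟨⟨⟨hw1, hw2⟩, hw3⟩, hw4⟩ := hw
      have e1 : B * (w.1 + ζ * g₀) + t * (w.2 + ζ * f₀) =
        (B * w.1 + t * w.2) + ζ * (B * g₀ + t * f₀) := by ring
      have e2 : m * (w.2 + ζ * f₀) - c * (B * (w.1 + ζ * g₀) + t * (w.2 + ζ * f₀)) =
        (m * w.2 - c * (B * w.1 + t * w.2)) + ζ * (m * f₀ - c * (B * g₀ + t * f₀)) := by ring
      have e3 : δ (w.1 + ζ * g₀, w.2 + ζ * f₀) = δ w := by simp only [δ]; ring
      dsimp only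
      rw [e3, e2, e1, monic_add_iff hw1 hw2]
      constructor
      · rintro ⟨⟨h1, h2⟩, -⟩
        refine hext ζ h1 ?_
        have := Submodule.sub_mem _ h2 hw3
        rwa [add_sub_cancel_left] at this
      · intro hζ
        exact ⟨⟨mul_mem_degreeLT_of_mem_sub hζ hL1,
          Submodule.add_mem _ hw3 (mul_mem_degreeLT_of_mem_sub hζ hL2)⟩, hw4⟩
    · by_cases hy0 : y = 0
      · rw [hy0, natDegree_zero]; exact Nat.zero_le _
      · have := hdeg y hy hy0
        omega
  rw [← Finset.sum_fiberwise_of_maps_to (s := R) (t := Y) (g := δ)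
    (fun w hw => Finset.mem_image_of_mem _ hw)]
  refine (norm_sum_le_of_le _ hfib).trans ?_
  let Z := Y.filter (fun y => y ≠ 0 ∧ IsCube y)
  have hsplit : ∑ y ∈ Y, (if y = 0 then (Fintype.card K : ℝ) else
        if IsCube y then (Fintype.card K : ℝ) ^ u else 0) ≤
      (Fintype.card K : ℝ) + Z.card * (Fintype.card K : ℝ) ^ u := by
    have : ∀ y ∈ Y, (if y = 0 then (Fintype.card K : ℝ) else
        if IsCube y then (Fintype.card K : ℝ) ^ u else 0) =
        (if y = 0 then (Fintype.card K : ℝ) else 0) +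
        (if y ≠ 0 ∧ IsCube y then (Fintype.card K : ℝ) ^ u else 0) := by
      intro y _
      by_cases h1 : y = 0 <;> by_cases h2 : IsCube y <;> simp [h1, h2]
    rw [Finset.sum_congr rfl this, Finset.sum_add_distrib]
    refine add_le_add ?_ ?_
    · rw [Finset.sum_ite_eq']
      split_ifs <;> linarith
    · rw [← Finset.sum_filter, Finset.sum_const, nsmul_eq_mul]
  refine hsplit.trans (add_le_add le_rfl ?_)
  rcases Z.eq_empty_or_nonempty with hZ | ⟨z, hz⟩
  · rw [hZ, Finset.card_empty, Nat.cast_zero, zero_mul]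
    positivity
  have hz' := Finset.mem_filter.mp hz
  have hk0 := hdeg z hz'.1 hz'.2.1
  let k := (N + M - B.natDegree - m.natDegree - u) / 3
  have hcard := card_cubes_le Z k (by
    intro y hy
    have hy' := Finset.mem_filter.mp hy
    have := hdeg y hy'.1 hy'.2.1
    refine ⟨hy'.2.1, hy'.2.2, ?_⟩
    simp only [k]
    omega)
  have hcard' : (Z.card : ℝ) ≤ (Fintype.card K : ℝ) ^ (k + 2) := by exact_mod_cast hcard
  have hk : 3 * k + B.natDegree + m.natDegree + u ≤ N + M := by simp only [k]; omega
  have hkR : 3 * (k : ℝ) + B.natDegree + m.natDegree + u ≤ N + M := by exact_mod_cast hk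
  calc (Z.card : ℝ) * (Fintype.card K : ℝ) ^ u
      ≤ (Fintype.card K : ℝ) ^ (k + 2) * (Fintype.card K : ℝ) ^ u := by gcongr
    _ = (Fintype.card K : ℝ) ^ 2 * (Fintype.card K : ℝ) ^ ((k + u : ℕ) : ℝ) := by
        rw [Real.rpow_natCast]; ring
    _ ≤ _ := by
        gcongr
        push_cast; linarith

end LatticeBound

section Moebius

open UniqueFactorizationMonoid

variable {K : Type} [Field K]

/-- The Möbius function on polynomials. -/
def mu (B : K[X]) : ℂ := if Squarefree B then (-1) ^ (normalizedFactors B).card else 0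

@[simp] lemma mu_one : mu (1 : K[X]) = 1 := by simp [mu]

lemma mu_eq_zero {B : K[X]} (h : ¬ Squarefree B) : mu B = 0 := by rw [mu, if_neg h]

lemma norm_mu_le (B : K[X]) : ‖mu B‖ ≤ 1 := by
  rw [mu]
  split_ifs <;> simp

lemma mu_mul {D B : K[X]} (h : IsCoprime D B) : mu (D * B) = mu D * mu B := by
  have hiff := squarefree_mul_iff (x := D) (y := B)
  by_cases hs : Squarefree D ∧ Squarefree B
  · have h1 : Squarefree (D * B) := hiff.mpr ⟨h.isRelPrime, hs.1, hs.2⟩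
    rw [mu, mu, mu, if_pos h1, if_pos hs.1, if_pos hs.2,
      normalizedFactors_mul hs.1.ne_zero hs.2.ne_zero, Multiset.card_add, pow_add]
  · have h1 : ¬ Squarefree (D * B) := fun h2 => hs (hiff.mp h2).2
    rw [mu_eq_zero h1]
    by_cases h2 : Squarefree D
    · rw [mu_eq_zero (fun h3 => hs ⟨h2, h3⟩), mul_zero]
    · rw [mu_eq_zero h2, zero_mul]

lemma mu_irreducible {P : K[X]} (hP : Irreducible P) : mu P = -1 := by
  rw [mu, if_pos hP.squarefree, normalizedFactors_irreducible hP]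
  simp

lemma isCoprime_of_squarefree_mul {D B : K[X]} (h : Squarefree (D * B)) : IsCoprime D B :=
  ((squarefree_mul_iff (x := D) (y := B)).mp h).1.isCoprime

lemma mu_mul_irreducible {P B : K[X]} (hP : Irreducible P) (h : ¬ P ∣ B) :
    mu (P * B) = - mu B := by
  rw [mu_mul ((hP.coprime_iff_not_dvd).mpr h), mu_irreducible hP, neg_one_mul]

lemma squarefree_iff_not_exists {F : K[X]} (hF : F ≠ 0) :
    Squarefree F ↔ ¬ ∃ P : K[X], Irreducible P ∧ P ^ 2 ∣ F := by
  rw [squarefree_iff_irreducible_sq_not_dvd_of_ne_zero hF]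
  simp only [sq]
  push Not
  rfl

variable [Fintype K]

lemma sum_mu_pow_dvd {F : K[X]} (hF : F ≠ 0) {k n : ℕ} (hk : k ≠ 0) (hn : F.natDegree ≤ n) :
    ∑ b ∈ Finset.range (n + 1), ∑ B ∈ Mon K b, (if B ^ k ∣ F then mu B else 0) =
      if ∃ P : K[X], Irreducible P ∧ P ^ k ∣ F then 0 else 1 := by
  let s := (Finset.range (n + 1)).biUnion (fun b => (Mon K b).filter (fun B => B ^ k ∣ F))
  have hs : ∀ B, B ∈ s ↔ B.Monic ∧ B ^ k ∣ F := by
    intro B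
    simp only [s, Finset.mem_biUnion, Finset.mem_range, Finset.mem_filter, mem_Mon]
    constructor
    · rintro ⟨b, -, ⟨h1, -⟩, h2⟩; exact ⟨h1, h2⟩
    · rintro ⟨h1, h2⟩
      have h3 := natDegree_le_of_dvd ((dvd_pow_self B hk).trans h2) hF
      exact ⟨B.natDegree, by omega, ⟨h1, rfl⟩, h2⟩
  have hsum : ∑ b ∈ Finset.range (n + 1), ∑ B ∈ Mon K b, (if B ^ k ∣ F then mu B else 0) =
      ∑ B ∈ s, mu B := by
    rw [Finset.sum_biUnion]
    · exact Finset.sum_congr rfl fun b _ => (Finset.sum_filter _ _).symm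
    · intro b _ b' _ hne
      refine Finset.disjoint_left.mpr fun B hB hB' => hne ?_
      rw [Finset.mem_filter, mem_Mon] at hB hB'
      omega
  rw [hsum]
  split_ifs with hex
  · obtain ⟨P₀, hP₀, hd₀⟩ := hex
    obtain ⟨P, hP, hPm, hd⟩ : ∃ P : K[X], Irreducible P ∧ P.Monic ∧ P ^ k ∣ F := by
      refine ⟨normalize P₀, (normalize_associated P₀).symm.irreducible hP₀,
        monic_normalize hP₀.ne_zero, ?_⟩
      exact ((normalize_associated P₀).pow_pow).dvd_iff_dvd_left.mpr hd₀
    rw [← Finset.sum_filter_add_sum_filter_not s (fun B => P ∣ B)]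
    have h1 : ∑ B ∈ s with P ∣ B, mu B =
        ∑ B ∈ (s.filter (fun B => ¬ P ∣ B)), mu (P * B) := by
      symm
      refine Finset.sum_subset_zero_on_sdiff (s₁ := (s.filter (fun B => ¬ P ∣ B)).image (P * ·))
        (s₂ := s.filter (fun B => P ∣ B)) (f := mu) (g := mu) ?_ ?_ (fun _ _ => rfl) ▸ ?_
      · intro B hB
        obtain ⟨A, hA, rfl⟩ := Finset.mem_image.mp hB
        rw [Finset.mem_filter, hs] at hA ⊢
        refine ⟨⟨hPm.mul hA.1.1, ?_⟩, dvd_mul_right _ _⟩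
        rw [mul_pow]
        exact IsCoprime.mul_dvd (((hP.coprime_iff_not_dvd).mpr hA.2).pow) hd hA.1.2
      · intro B hB
        rw [Finset.mem_sdiff, Finset.mem_filter, hs] at hB
        obtain ⟨⟨⟨hBm, hBd⟩, A, rfl⟩, hB2⟩ := hB
        apply mu_eq_zero
        intro hsq
        apply hB2
        refine Finset.mem_image.mpr ⟨A, ?_, rfl⟩
        rw [Finset.mem_filter, hs]
        refine ⟨⟨hPm.of_mul_monic_left hBm, ?_⟩, ?_⟩
        · exact (pow_dvd_pow_of_dvd (dvd_mul_left _ _) k).trans hBd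
        · exact (hP.coprime_iff_not_dvd).mp (isCoprime_of_squarefree_mul hsq)
      · rw [Finset.sum_image]
        intro x _ y _ h
        exact mul_left_cancel₀ hP.ne_zero h
    rw [h1, ← Finset.sum_add_distrib]
    refine Finset.sum_eq_zero fun B hB => ?_
    rw [mu_mul_irreducible hP (Finset.mem_filter.mp hB).2]
    ring
  · have h1 : s = {1} := by
      ext B
      rw [hs, Finset.mem_singleton]
      constructor
      · rintro ⟨hB, hd⟩
        by_contra hne
        have hu : ¬ IsUnit B := fun hu => hne (hB.eq_one_of_isUnit hu)
        obtain ⟨P, hP, hPB⟩ := WfDvdMonoid.exists_irreducible_factor hu hB.ne_zero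
        exact hex ⟨P, hP, (pow_dvd_pow_of_dvd hPB k).trans hd⟩
      · rintro rfl
        exact ⟨monic_one, by simp⟩
    rw [h1, Finset.sum_singleton, mu_one]

lemma sum_Mon_dvd {B : K[X]} (hB : B.Monic) (N : ℕ) (φ : K[X] → ℂ) :
    ∑ F ∈ Mon K N, (if B ∣ F then φ F else 0) =
      if B.natDegree ≤ N then ∑ A ∈ Mon K (N - B.natDegree), φ (A * B) else 0 := by
  split_ifs with h
  · rw [← Finset.sum_filter]
    symm
    refine Finset.sum_bij (fun A _ => A * B) ?_ ?_ ?_ (fun _ _ => rfl)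
    · intro A hA
      rw [mem_Mon] at hA
      rw [Finset.mem_filter, mem_Mon, hA.1.natDegree_mul hB]
      exact ⟨⟨hA.1.mul hB, by omega⟩, dvd_mul_left _ _⟩
    · intro A _ A' _ h
      exact mul_right_cancel₀ hB.ne_zero h
    · intro F hF
      rw [Finset.mem_filter, mem_Mon] at hF
      obtain ⟨⟨hF1, hF2⟩, A, rfl⟩ := hF
      have hA : A.Monic := hB.of_mul_monic_left hF1
      rw [hB.natDegree_mul hA] at hF2
      exact ⟨A, by rw [mem_Mon]; exact ⟨hA, by omega⟩, mul_comm _ _⟩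
  · refine Finset.sum_eq_zero fun F hF => if_neg fun hd => h ?_
    rw [mem_Mon] at hF
    rw [← hF.2]
    exact natDegree_le_of_dvd hd hF.1.ne_zero

variable (K) in
/-- The squarefree monic polynomials of degree `n`. -/
def Sqf (n : ℕ) : Finset K[X] := (Mon K n).filter Squarefree

lemma mem_Sqf {n : ℕ} {p : K[X]} :
    p ∈ Sqf K n ↔ (p.Monic ∧ p.natDegree = n) ∧ Squarefree p := by
  rw [Sqf, Finset.mem_filter, mem_Mon]

lemma sum_Sqf (N : ℕ) (φ : K[X] → ℂ) :
    ∑ F ∈ Sqf K N, φ F = ∑ b ∈ Finset.range (N / 2 + 1), ∑ B ∈ Mon K b, mu B *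
      ∑ A ∈ Mon K (N - 2 * b), φ (A * B ^ 2) := by
  have h1 : ∑ F ∈ Sqf K N, φ F = ∑ F ∈ Mon K N, ∑ b ∈ Finset.range (N + 1), ∑ B ∈ Mon K b,
      (if B ^ 2 ∣ F then mu B * φ F else 0) := by
    rw [Sqf, Finset.sum_filter]
    refine Finset.sum_congr rfl fun F hF => ?_
    rw [mem_Mon] at hF
    have := sum_mu_pow_dvd hF.1.ne_zero (k := 2) two_ne_zero hF.2.le
    simp only [squarefree_iff_not_exists hF.1.ne_zero]
    have h2 : ∀ b ∈ Finset.range (N + 1), ∑ B ∈ Mon K b,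
        (if B ^ 2 ∣ F then mu B * φ F else 0) =
        (∑ B ∈ Mon K b, (if B ^ 2 ∣ F then mu B else 0)) * φ F := by
      intro b _
      rw [Finset.sum_mul]
      exact Finset.sum_congr rfl fun B _ => by split_ifs <;> simp
    rw [Finset.sum_congr rfl h2, ← Finset.sum_mul, this]
    split_ifs <;> simp
  rw [h1, Finset.sum_comm]
  have h3 : ∀ b ∈ Finset.range (N + 1), ∑ F ∈ Mon K N, ∑ B ∈ Mon K b,
      (if B ^ 2 ∣ F then mu B * φ F else 0) = ∑ B ∈ Mon K b,
      if 2 * b ≤ N then mu B * ∑ A ∈ Mon K (N - 2 * b), φ (A * B ^ 2) else 0 := by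
    intro b _
    rw [Finset.sum_comm]
    refine Finset.sum_congr rfl fun B hB => ?_
    rw [mem_Mon] at hB
    have := sum_Mon_dvd (hB.1.pow 2) N (fun F => mu B * φ F)
    rw [this, natDegree_pow, hB.2]
    simp only [Finset.mul_sum]
  rw [Finset.sum_congr rfl h3]
  symm
  refine Finset.sum_subset_zero_on_sdiff (Finset.range_mono (by omega)) ?_ ?_
  · intro b hb
    rw [Finset.mem_sdiff, Finset.mem_range, Finset.mem_range] at hb
    exact Finset.sum_eq_zero fun B _ => if_neg (by omega)
  · intro b hb
    rw [Finset.mem_range] at hb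
    exact Finset.sum_congr rfl fun B _ => (if_pos (by omega)).symm

lemma sum_mu_convolution (n : ℕ) :
    ∑ b ∈ Finset.range (n + 1), (∑ B ∈ Mon K b, mu B) * (Fintype.card K : ℂ) ^ (n - b) =
      if n = 0 then 1 else 0 := by
  have h1 : ∑ F ∈ Mon K n, ∑ b ∈ Finset.range (n + 1), ∑ B ∈ Mon K b,
      (if B ^ 1 ∣ F then mu B else 0) = if n = 0 then 1 else 0 := by
    have : ∀ F ∈ Mon K n, ∑ b ∈ Finset.range (n + 1), ∑ B ∈ Mon K b,
        (if B ^ 1 ∣ F then mu B else 0) = if n = 0 then (1 : ℂ) else 0 := by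
      intro F hF
      rw [mem_Mon] at hF
      rw [sum_mu_pow_dvd hF.1.ne_zero one_ne_zero hF.2.le]
      by_cases hn : n = 0
      · have : F = 1 := eq_one_of_monic_natDegree_zero hF.1 (by omega)
        subst this
        rw [if_neg, if_pos hn]
        rintro ⟨P, hP, hd⟩
        rw [pow_one] at hd
        exact hP.not_isUnit (isUnit_of_dvd_one hd)
      · rw [if_pos, if_neg hn]
        obtain ⟨P, hP, hPF⟩ := WfDvdMonoid.exists_irreducible_factor
          (fun hu => hn (by rw [← hF.2]; exact natDegree_eq_zero_of_isUnit hu)) hF.1.ne_zero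
        exact ⟨P, hP, by rwa [pow_one]⟩
    rw [Finset.sum_congr rfl this, Finset.sum_const, card_Mon]
    by_cases hn : n = 0
    · simp [hn]
    · simp [hn]
  rw [← h1, Finset.sum_comm]
  refine Finset.sum_congr rfl fun b hb => ?_
  rw [Finset.mem_range] at hb
  rw [Finset.sum_comm, Finset.sum_mul]
  refine Finset.sum_congr rfl fun B hB => ?_
  rw [mem_Mon] at hB
  have := sum_Mon_dvd hB.1 n (fun _ => mu B)
  simp only [pow_one]
  rw [this, if_pos (by omega), Finset.sum_const, card_Mon, hB.2, nsmul_eq_mul]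
  push_cast
  ring

lemma sum_mu_Mon (b : ℕ) : ∑ B ∈ Mon K b, mu B =
    if b = 0 then 1 else if b = 1 then -(Fintype.card K : ℂ) else 0 := by
  have hrec : ∀ n, ∑ b ∈ Finset.range (n + 2), (∑ B ∈ Mon K b, mu B) *
      (Fintype.card K : ℂ) ^ (n + 1 - b) = (Fintype.card K : ℂ) *
      (∑ b ∈ Finset.range (n + 1), (∑ B ∈ Mon K b, mu B) * (Fintype.card K : ℂ) ^ (n - b)) +
      ∑ B ∈ Mon K (n + 1), mu B := by
    intro n
    rw [Finset.sum_range_succ, Nat.sub_self, pow_zero, mul_one, Finset.mul_sum]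
    congr 1
    refine Finset.sum_congr rfl fun b hb => ?_
    rw [Finset.mem_range] at hb
    rw [Nat.sub_add_comm (by omega), pow_succ]
    ring
  rcases b with _ | n
  · have := sum_mu_convolution (K := K) 0
    simpa using this
  · have h1 := hrec n
    rw [sum_mu_convolution (n + 1), sum_mu_convolution n] at h1
    rcases n with _ | n
    · simp only [Nat.zero_add, one_ne_zero, if_false, if_true, mul_one] at h1 ⊢
      linear_combination -h1
    · simp at h1 ⊢
      exact h1.symm

lemma card_Sqf {N : ℕ} (hN : 2 ≤ N) :
    ((Sqf K N).card : ℂ) = (Fintype.card K : ℂ) ^ N - (Fintype.card K : ℂ) ^ (N - 1) := by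
  have h := sum_Sqf (K := K) N (fun _ => 1)
  simp only [Finset.sum_const, nsmul_eq_mul, mul_one, card_Mon, ← Finset.sum_mul] at h
  rw [h]
  simp only [sum_mu_Mon]
  rw [← Finset.sum_subset (s₁ := Finset.range 2) (Finset.range_mono (by omega))]
  · rw [Finset.sum_range_succ, Finset.sum_range_one]
    obtain ⟨n, rfl⟩ := Nat.exists_eq_add_of_le hN
    have e : 2 + n - 1 = n + 1 := by omega
    simp only [e, one_ne_zero, if_true, if_false, mul_zero, Nat.sub_zero, mul_one,
      Nat.add_sub_cancel_left]
    push_cast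
    ring
  · intro b _ hb
    rw [Finset.mem_range] at hb
    rw [if_neg (by omega), if_neg (by omega), zero_mul]

end Moebius

section CongruenceSum

variable {K : Type} [Field K] {br : K[X] → K[X] → ℂ} {ω : K → ℂ}

lemma isCoprime_cofactor {E D f : K[X]} (hsq : Squarefree (E * D))
    (hE : ∀ P : K[X], P ∣ E * D → P ∣ f → P ∣ E) : IsCoprime D f := by
  refine isCoprime_of_irreducible_dvd (fun h => hsq.ne_zero (by rw [h.1, mul_zero])) ?_
  intro P hP hPD hPf
  have hPE := hE P (hPD.mul_left E) hPf
  exact hP.not_isUnit (hsq P (mul_dvd_mul hPE hPD))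

variable [Fintype K]

lemma exists_param_congruence {B f : K[X]} (hB : B ≠ 0) (hcop : IsCoprime f B) (A : K[X])
    (d : ℕ) : ∃ t₁ g₁ : K[X], A - t₁ * f = B * g₁ ∧ ∀ φ : K[X] → ℂ,
      ∑ t ∈ Low K (d + B.natDegree) with B ∣ A - t * f, φ t =
        ∑ τ ∈ Low K d, φ (t₁ + τ * B) := by
  obtain ⟨h, k, hhk⟩ := hcop
  let t₁ := (A * h) % B
  have h1 : B ∣ A - t₁ * f := by
    have := (dvd_sub_mod B (A * h)).mul_left f
    have h2 : A - t₁ * f = B * (A * k) + f * (A * h - (A * h) % B) := by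
      simp only [t₁]; linear_combination -A * hhk
    rw [h2]
    exact dvd_add (dvd_mul_right _ _) this
  obtain ⟨g₁, hg₁⟩ := h1
  have ht₁ : t₁ ∈ degreeLT K B.natDegree := mod_mem_degreeLT hB _
  refine ⟨t₁, g₁, hg₁, fun φ => ?_⟩
  symm
  refine Finset.sum_bij (fun τ _ => t₁ + τ * B) ?_ ?_ ?_ (fun _ _ => rfl)
  · intro τ hτ
    rw [mem_Low] at hτ
    rw [Finset.mem_filter, mem_Low]
    refine ⟨Submodule.add_mem _ (degreeLT_le (by omega) ht₁) ?_, ?_⟩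
    · rw [mul_comm, mul_mem_degreeLT_iff hB, Nat.add_sub_cancel]
      exact hτ
    · exact ⟨g₁ - τ * f, by linear_combination hg₁⟩
  · intro τ _ τ' _ h
    exact mul_right_cancel₀ hB (add_left_cancel h)
  · intro t ht
    rw [Finset.mem_filter, mem_Low] at ht
    obtain ⟨ht, htd⟩ := ht
    have hd : B ∣ t - t₁ := by
      have h2 : B ∣ (t - t₁) * f := by
        have := dvd_sub (⟨g₁, hg₁⟩ : B ∣ A - t₁ * f) htd
        convert this using 1; ring
      exact (IsCoprime.dvd_of_dvd_mul_right (⟨k, h, by linear_combination hhk⟩ : IsCoprime B f) h2)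
    obtain ⟨τ, hτ⟩ := hd
    refine ⟨τ, ?_, by linear_combination -hτ⟩
    have h3 : B * τ ∈ degreeLT K (d + B.natDegree) := by
      rw [← hτ]
      exact Submodule.sub_mem _ ht (degreeLT_le (by omega) ht₁)
    rw [mul_mem_degreeLT_iff hB, Nat.add_sub_cancel] at h3
    exact mem_Low.mpr h3

lemma CubicBracket.sum_arith_progression (S : CubicBracket br ω) {D f : K[X]} (hD : D ≠ 0)
    (hsq : Squarefree D) (hu : ¬ IsUnit D) (hcop : IsCoprime D f) (g : K[X]) {d : ℕ}
    (hd : D.natDegree ≤ d) : ∑ τ ∈ Low K d, br D (g - τ * f) = 0 := by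
  obtain ⟨k, h, hkh⟩ := hcop
  have h1 : ∀ τ ∈ Low K d, br D (g - τ * f) = br D (-f) * br D (-h * g + τ) := by
    intro τ _
    rw [← S.mul_right _ _ _ hD]
    refine S.congr _ _ _ ⟨k * g, ?_⟩
    linear_combination g * (-hkh)
  rw [Finset.sum_congr rfl h1, ← Finset.mul_sum,
    S.sum_coset_eq_zero hD (fun hc => ?_) _ hd, mul_zero]
  exact hu (isCube_squarefree hc hsq)

lemma CubicBracket.congruence_sum_of_gcd (S : CubicBracket br ω) {D B f A : K[X]}
    (hsq : Squarefree (D * B)) (hf : f ≠ 0) (hcop : IsCoprime f B) :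
    ∑ t ∈ Low K (D * B).natDegree, (if D * B ∣ D * A - t * (D * f) then
        br (D * f) ((D * A - t * (D * f)) / (D * B)) else 0) =
      if D ∣ f then (Fintype.card K : ℂ) ^ D.natDegree * br (D * f) (A * B ^ 2) else 0 := by
  have hD : D ≠ 0 := left_ne_zero_of_mul hsq.ne_zero
  have hB : B ≠ 0 := right_ne_zero_of_mul hsq.ne_zero
  have hDf : D * f ≠ 0 := mul_ne_zero hD hf
  have hDB : IsCoprime D B := isCoprime_of_squarefree_mul hsq
  have hDsq : Squarefree D := hsq.squarefree_of_dvd (dvd_mul_right _ _)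
  obtain ⟨t₁, g₁, hg₁, hsum⟩ := exists_param_congruence hB hcop A D.natDegree
  have hL : ∑ t ∈ Low K (D * B).natDegree, (if D * B ∣ D * A - t * (D * f) then
        br (D * f) ((D * A - t * (D * f)) / (D * B)) else 0) =
      ∑ τ ∈ Low K D.natDegree, br (D * f) (g₁ - τ * f) := by
    have h1 : ∀ t, (D * B ∣ D * A - t * (D * f)) ↔ B ∣ A - t * f := by
      intro t
      rw [show D * A - t * (D * f) = D * (A - t * f) by ring]
      exact mul_dvd_mul_iff_left hD
    simp only [h1]
    rw [natDegree_mul hD hB, ← Finset.sum_filter, hsum]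
    refine Finset.sum_congr rfl fun τ _ => ?_
    congr 1
    rw [show D * A - (t₁ + τ * B) * (D * f) = (D * B) * (g₁ - τ * f) by
      linear_combination D * hg₁]
    exact mul_div_cancel_left₀ _ (mul_ne_zero hD hB)
  rw [hL]
  split_ifs with hd
  · have h1 : ∀ τ ∈ Low K D.natDegree, br (D * f) (g₁ - τ * f) = br (D * f) (A * B ^ 2) := by
      intro τ _
      have e : br (D * f) (B * (g₁ - τ * f)) = br (D * f) A := by
        rw [S.mul_left, S.mul_left]
        have hd' : f ∣ B * (g₁ - τ * f) - A :=
          ⟨-t₁ - B * τ, by linear_combination -hg₁⟩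
        rw [S.congr D _ _ (hd.trans hd'), S.congr f _ _ hd']
      rw [S.mul_right _ _ _ hDf] at e
      rw [sq, ← mul_assoc, S.mul_right _ _ _ hDf, S.mul_right _ _ _ hDf, ← e]
      have h3 := S.cube (D * f) B hDf (hDB.mul_left hcop)
      linear_combination -br (D * f) (g₁ - τ * f) * h3
    rw [Finset.sum_congr rfl h1, Finset.sum_const, card_Low, nsmul_eq_mul]
    push_cast
    ring
  · obtain ⟨D₂, hD₂⟩ := EuclideanDomain.gcd_dvd_left D f
    set E := EuclideanDomain.gcd D f with hE
    have hEf : E ∣ f := EuclideanDomain.gcd_dvd_right D f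
    have hcop2 : IsCoprime D₂ f := by
      refine isCoprime_cofactor (E := E) (hD₂ ▸ hDsq) fun P h1 h2 => ?_
      exact EuclideanDomain.dvd_gcd (by rw [hD₂]; exact h1) h2
    have hD₂0 : D₂ ≠ 0 := fun h0 => hD (by rw [hD₂, h0, mul_zero])
    have hu : ¬ IsUnit D₂ := by
      intro hu
      apply hd
      rw [hD₂]
      exact (hu.mul_right_dvd).mpr hEf
    have hD₂sq : Squarefree D₂ := hDsq.squarefree_of_dvd ⟨E, by rw [mul_comm]; exact hD₂⟩
    have h1 : ∀ τ ∈ Low K D.natDegree, br (D * f) (g₁ - τ * f) =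
        br E g₁ * br f g₁ * br D₂ (g₁ - τ * f) := by
      intro τ _
      have h2 : f ∣ g₁ - τ * f - g₁ := ⟨-τ, by ring⟩
      rw [S.mul_left, S.congr f _ _ h2]
      conv_lhs => rw [hD₂]
      rw [S.mul_left, S.congr E _ _ (hEf.trans h2)]
      ring
    rw [Finset.sum_congr rfl h1, ← Finset.mul_sum, S.sum_arith_progression hD₂0 hD₂sq hu hcop2 _
      (natDegree_le_of_dvd ⟨E, by rw [mul_comm]; exact hD₂⟩ hD), mul_zero]

/-- The congruence sum in terms of brackets of complementary divisors, of which at most one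
contributes. -/
lemma CubicBracket.congruence_sum_eq (S : CubicBracket br ω) {B f A : K[X]} (hBm : B.Monic)
    (hsq : Squarefree B) (hf : f ≠ 0) (hA : A.Monic) {N : ℕ}
    (hN : N % 3 = (A.natDegree + 2 * B.natDegree) % 3) :
    ω f.leadingCoeff ^ N * ∑ t ∈ Low K B.natDegree,
        (if B ∣ A - t * f then br f ((A - t * f) / B) else 0) =
      ∑ d ∈ Finset.range (B.natDegree + 1), ∑ D ∈ Mon K d, (if D ∣ B then
        (Fintype.card K : ℂ) ^ d *
          (if D ∣ A ∧ D ^ 2 ∣ f then br ((A / D) * (B / D) ^ 2) f else 0) else 0) := by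
  set D := normalize (EuclideanDomain.gcd f B) with hDdef
  have hgcd0 : EuclideanDomain.gcd f B ≠ 0 := fun h => hf (EuclideanDomain.gcd_eq_zero_iff.mp h).1
  have hDm : D.Monic := monic_normalize hgcd0
  have hDf : D ∣ f := normalize_dvd_iff.mpr (EuclideanDomain.gcd_dvd_left f B)
  have hDB : D ∣ B := normalize_dvd_iff.mpr (EuclideanDomain.gcd_dvd_right f B)
  have hgr : ∀ P : K[X], P ∣ f → P ∣ B → P ∣ D := fun P h1 h2 =>
    dvd_normalize_iff.mpr (EuclideanDomain.dvd_gcd h1 h2)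
  obtain ⟨f₁, hf₁⟩ := hDf
  obtain ⟨B₁, hB₁⟩ := hDB
  have hf₁0 : f₁ ≠ 0 := fun h => hf (by rw [hf₁, h, mul_zero])
  have hcop : IsCoprime f₁ B₁ := by
    refine (isCoprime_cofactor (E := D) (D := B₁) (hB₁ ▸ hsq) fun P h1 h2 => ?_).symm
    exact hgr P (by rw [hf₁]; exact h2.mul_left D) (by rw [hB₁]; exact h1)
  have hB₁m : B₁.Monic := hDm.of_mul_monic_left (hB₁ ▸ hBm)
  have hdeg : B.natDegree = D.natDegree + B₁.natDegree := by
    rw [hB₁, hDm.natDegree_mul hB₁m]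
  have hR : ∑ d ∈ Finset.range (B.natDegree + 1), ∑ D ∈ Mon K d, (if D ∣ B then
        (Fintype.card K : ℂ) ^ d *
          (if D ∣ A ∧ D ^ 2 ∣ f then br ((A / D) * (B / D) ^ 2) f else 0) else 0) =
      (Fintype.card K : ℂ) ^ D.natDegree *
          (if D ∣ A ∧ D ^ 2 ∣ f then br ((A / D) * (B / D) ^ 2) f else 0) := by
    have hother : ∀ d, ∀ D' ∈ Mon K d, D' ≠ D → (if D' ∣ B then (Fintype.card K : ℂ) ^ d *
          (if D' ∣ A ∧ D' ^ 2 ∣ f then br ((A / D') * (B / D') ^ 2) f else 0) else 0) = 0 := by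
      intro d D' hD' hne
      rw [mem_Mon] at hD'
      split_ifs with h1 h2
      · have hD'D : D' ∣ D := hgr D' ((dvd_pow_self D' two_ne_zero).trans h2.2) h1
        obtain ⟨Q, hQ⟩ := hD'D
        have hQm : Q.Monic := hD'.1.of_mul_monic_left (hQ ▸ hDm)
        have hQu : ¬ IsUnit Q := by
          intro hu
          rw [hQm.eq_one_of_isUnit hu, mul_one] at hQ
          exact hne hQ.symm
        have hQB : Q ∣ B / D' := by
          rw [hB₁, hQ, mul_assoc, mul_div_cancel_left₀ _ hD'.1.ne_zero]
          exact dvd_mul_right _ _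
        have hQf : Q ∣ f := by
          rw [hf₁, hQ]
          exact (dvd_mul_left Q D').mul_right _
        have hz : br (B / D') f = 0 := by
          have h0 : B / D' ≠ 0 := by
            intro h0
            have := EuclideanDomain.mul_div_cancel' hD'.1.ne_zero h1
            rw [h0, mul_zero] at this
            exact hBm.ne_zero this.symm
          rw [S.eq_zero_iff _ _ h0]
          exact fun hc => hQu (hc.isUnit_of_dvd' hQB hQf)
        rw [S.mul_left, sq, S.mul_left, hz]
        ring
      · ring
      · rfl
    rw [Finset.sum_eq_single D.natDegree, Finset.sum_eq_single D]
    · rw [if_pos ⟨B₁, hB₁⟩]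
    · intro D' hD' hne
      exact hother _ D' hD' hne
    · intro h
      exact absurd (mem_Mon.mpr ⟨hDm, rfl⟩) h
    · intro d _ hd
      refine Finset.sum_eq_zero fun D' hD' => hother d D' hD' ?_
      rintro rfl
      exact hd (mem_Mon.mp hD').2.symm
    · intro h
      exact absurd (Finset.mem_range.mpr (by omega)) h
  rw [hR]
  by_cases hDA : D ∣ A
  swap
  · rw [if_neg (fun h => hDA h.1), mul_zero]
    refine mul_eq_zero_of_right _ (Finset.sum_eq_zero fun t _ => if_neg fun h => hDA ?_)
    have h1 : D ∣ A - t * f := (Dvd.intro B₁ hB₁.symm).trans h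
    have h2 : D ∣ t * f := (Dvd.intro f₁ hf₁.symm).mul_left t
    have := dvd_add h1 h2
    rwa [sub_add_cancel] at this
  obtain ⟨A₁, hA₁⟩ := hDA
  have hA₁m : A₁.Monic := hDm.of_mul_monic_left (hA₁ ▸ hA)
  have hX := S.congruence_sum_of_gcd (D := D) (B := B₁) (f := f₁) (A := A₁) (hB₁ ▸ hsq) hf₁0 hcop
  rw [← hB₁, ← hf₁, ← hA₁] at hX
  rw [hX]
  have hiff : (D ∣ A ∧ D ^ 2 ∣ f) ↔ D ∣ f₁ := by
    rw [sq, hf₁, mul_dvd_mul_iff_left hDm.ne_zero, hA₁]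
    simp
  simp only [hiff]
  split_ifs with hd
  · have e1 : A / D = A₁ := by rw [hA₁, mul_div_cancel_left₀ _ hDm.ne_zero]
    have e2 : B / D = B₁ := by rw [hB₁, mul_div_cancel_left₀ _ hDm.ne_zero]
    rw [e1, e2]
    have hgm : (A₁ * B₁ ^ 2).Monic := hA₁m.mul (hB₁m.pow 2)
    have hrec := S.reciprocity f (A₁ * B₁ ^ 2) hf hgm.ne_zero
    rw [hgm.leadingCoeff, S.omega_one, one_pow, mul_one] at hrec
    rw [← hrec]
    have hw := S.omega_cube f.leadingCoeff (leadingCoeff_ne_zero.mpr hf)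
    have hpow : ω f.leadingCoeff ^ N = ω f.leadingCoeff ^ (A₁ * B₁ ^ 2).natDegree := by
      have hmod : ∀ k, ω f.leadingCoeff ^ k = ω f.leadingCoeff ^ (k % 3) := fun k =>
        pow_eq_pow_mod k hw
      rw [hmod N, hmod (A₁ * B₁ ^ 2).natDegree, hN, hA₁m.natDegree_mul (hB₁m.pow 2),
        natDegree_pow, hdeg, hA₁, hDm.natDegree_mul hA₁m]
      congr 1
      omega
    rw [hpow]
    ring
  · ring

end CongruenceSum

section BallSums

variable {K : Type} [Field K] [Fintype K] {br : K[X] → K[X] → ℂ} {ω : K → ℂ}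

lemma sum_Ball_eq_sum_Low {m c z : K[X]} (hm : m ≠ 0) {M : ℕ} (hz : z ∈ Ball m c M)
    (φ : K[X] → ℂ) : ∑ f ∈ Ball m c M, φ f = ∑ r ∈ Low K (M - m.natDegree), φ (z + r) := by
  rw [mem_Ball hm] at hz
  refine Finset.sum_bij' (fun f _ => f - z) (fun r _ => z + r) ?_ ?_ ?_ ?_ ?_
  · intro f hf
    rw [mem_Ball hm] at hf
    rw [mem_Low, ← mul_mem_degreeLT_iff hm]
    have := Submodule.sub_mem _ hf hz
    convert this using 1; ring
  · intro r hr
    rw [mem_Low, ← mul_mem_degreeLT_iff hm] at hr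
    rw [mem_Ball hm]
    have := Submodule.add_mem _ hz hr
    convert this using 1; ring
  · intro f _; ring
  · intro r _; ring
  · intro f _; congr 1; ring

lemma CubicBracket.sum_Ball_eq_zero (S : CubicBracket br ω) {A B m : K[X]} (hA : A ≠ 0)
    (hB : B ≠ 0) (hc : ¬ IsCube (A * B ^ 2)) (hm : m ≠ 0) (c : K[X]) {M : ℕ}
    (hM : (A * B).natDegree ≤ M - m.natDegree) :
    ∑ f ∈ Ball m c M, br (A * B ^ 2) f = 0 := by
  rcases (Ball m c M).eq_empty_or_nonempty with he | ⟨z, hz⟩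
  · rw [he, Finset.sum_empty]
  have hAB : A * B ≠ 0 := mul_ne_zero hA hB
  have hy : A * B ^ 2 ≠ 0 := mul_ne_zero hA (pow_ne_zero 2 hB)
  have hper : ∀ g h, A * B ∣ g - h → br (A * B ^ 2) g = br (A * B ^ 2) h := by
    intro g h hd
    rw [show A * B ^ 2 = (A * B) * B by ring, S.mul_left (A * B), S.mul_left (A * B),
      S.congr _ _ _ hd, S.congr B _ _ ((dvd_mul_left B A).trans hd)]
  have hle : (A * B).natDegree ≤ (A * B ^ 2).natDegree :=
    natDegree_le_of_dvd ⟨B, by ring⟩ hy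
  have h1 := sum_Low_periodic hAB (br (A * B ^ 2)) hper 0 hle
  simp only [zero_add] at h1
  rw [S.sum_Low_eq_zero hy hc] at h1
  have hq : (Fintype.card K : ℂ) ≠ 0 := by exact_mod_cast Fintype.card_ne_zero
  have h2 := (mul_eq_zero.mp h1.symm).resolve_left (pow_ne_zero _ hq)
  rw [sum_Ball_eq_sum_Low hm hz, sum_Low_periodic hAB _ hper z hM, h2, mul_zero]

lemma sum_Ball_dvd {m c E : K[X]} (hm : m ≠ 0) (hE : E ≠ 0) {M : ℕ} (φ : K[X] → ℂ) :
    ∑ f ∈ Ball m (E * c) M, (if E ∣ f then φ f else 0) =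
      ∑ h ∈ Ball m c (M - E.natDegree), φ (E * h) := by
  rw [← Finset.sum_filter]
  symm
  have key : ∀ h, h ∈ Ball m c (M - E.natDegree) ↔ E * h ∈ Ball m (E * c) M := by
    intro h
    rw [mem_Ball hm, mem_Ball hm, ← mul_mem_degreeLT_iff hE]
    congr! 1; ring
  refine Finset.sum_bij (fun h _ => E * h) ?_ ?_ ?_ (fun _ _ => rfl)
  · intro h hh
    rw [Finset.mem_filter, ← key]
    exact ⟨hh, dvd_mul_right _ _⟩
  · intro h _ h' _ e
    exact mul_left_cancel₀ hE e
  · intro f hf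
    rw [Finset.mem_filter] at hf
    obtain ⟨hf, h, rfl⟩ := hf
    exact ⟨h, (key h).mpr hf, rfl⟩

/-- The sum of `br A f` over squarefree monic `A` of degree `N` and `f` in the ball around
`a * A / m` of relative radius `ρ`. -/
def ballSum (br : K[X] → K[X] → ℂ) (N : ℕ) (a m : K[X]) (ρ : ℕ) : ℂ :=
  ∑ A ∈ Sqf K N, ∑ f ∈ Ball m (a * A) (N + m.natDegree - ρ), br A f

/-- The sum over lattice points attached to a modulus `B`. -/
def latticeSum (br : K[X] → K[X] → ℂ) (ω : K → ℂ) (N : ℕ) (a m : K[X]) (M : ℕ) (B : K[X]) : ℂ :=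
  ∑ A ∈ Mon K (N - 2 * B.natDegree), ∑ f ∈ Ball m (a * B ^ 2 * A) M,
    ω f.leadingCoeff ^ N * ∑ t ∈ Low K B.natDegree,
      (if B ∣ A - t * f then br f ((A - t * f) / B) else 0)

/-- The contribution of a factorization `D * B` of the modulus. -/
def splitSum (br : K[X] → K[X] → ℂ) (N : ℕ) (a m : K[X]) (M : ℕ) (D B : K[X]) : ℂ :=
  if 3 * D.natDegree + 2 * B.natDegree ≤ N then
    ∑ A ∈ Mon K (N - 3 * D.natDegree - 2 * B.natDegree),
      ∑ f ∈ Ball m (a * D * (A * B ^ 2)) (M - 2 * D.natDegree), br (A * B ^ 2) (D ^ 2 * f)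
  else 0

lemma ne_zero_of_mem_Ball {a m A f : K[X]} (ha : a ≠ 0) (hm : m ≠ 0) (hA : A.Monic) {M : ℕ}
    (hM : M ≤ a.natDegree + A.natDegree) (hf : f ∈ Ball m (a * A) M) : f ≠ 0 := by
  rw [mem_Ball hm] at hf
  have := (Region_leading hm ha hM hA rfl hf).2
  rintro rfl
  rw [leadingCoeff_zero] at this
  exact div_ne_zero (leadingCoeff_ne_zero.mpr ha) (leadingCoeff_ne_zero.mpr hm) this.symm

lemma CubicBracket.latticeSum_eq (S : CubicBracket br ω) {N : ℕ} {a m : K[X]} (ha : a ≠ 0)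
    (hm : m ≠ 0) {M : ℕ} (hM : M ≤ a.natDegree + N) {B : K[X]} (hBm : B.Monic)
    (hsq : Squarefree B) (hBN : 2 * B.natDegree ≤ N) :
    latticeSum br ω N a m M B = ∑ d ∈ Finset.range (B.natDegree + 1), ∑ D ∈ Mon K d,
      (if D ∣ B then (Fintype.card K : ℂ) ^ d * splitSum br N a m M D (B / D) else 0) := by
  have h1 : latticeSum br ω N a m M B = ∑ A ∈ Mon K (N - 2 * B.natDegree),
      ∑ f ∈ Ball m (a * B ^ 2 * A) M, ∑ d ∈ Finset.range (B.natDegree + 1), ∑ D ∈ Mon K d,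
      (if D ∣ B then (Fintype.card K : ℂ) ^ d *
          (if D ∣ A ∧ D ^ 2 ∣ f then br ((A / D) * (B / D) ^ 2) f else 0) else 0) := by
    refine Finset.sum_congr rfl fun A hA => Finset.sum_congr rfl fun f hf => ?_
    rw [mem_Mon] at hA
    refine S.congruence_sum_eq hBm hsq ?_ hA.1 (by rw [hA.2]; omega)
    refine ne_zero_of_mem_Ball (mul_ne_zero ha (pow_ne_zero 2 hBm.ne_zero)) hm hA.1 ?_ hf
    rw [natDegree_mul ha (pow_ne_zero 2 hBm.ne_zero), natDegree_pow, hA.2]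
    omega
  rw [h1]
  have h2 : ∑ A ∈ Mon K (N - 2 * B.natDegree),
      ∑ f ∈ Ball m (a * B ^ 2 * A) M, ∑ d ∈ Finset.range (B.natDegree + 1), ∑ D ∈ Mon K d,
      (if D ∣ B then (Fintype.card K : ℂ) ^ d *
          (if D ∣ A ∧ D ^ 2 ∣ f then br ((A / D) * (B / D) ^ 2) f else 0) else 0) =
      ∑ d ∈ Finset.range (B.natDegree + 1), ∑ D ∈ Mon K d, ∑ A ∈ Mon K (N - 2 * B.natDegree),
      ∑ f ∈ Ball m (a * B ^ 2 * A) M,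
      (if D ∣ B then (Fintype.card K : ℂ) ^ d *
          (if D ∣ A ∧ D ^ 2 ∣ f then br ((A / D) * (B / D) ^ 2) f else 0) else 0) := by
    simp only [Finset.sum_comm (s := Ball _ _ _) (t := Finset.range _)]
    rw [Finset.sum_comm]
    refine Finset.sum_congr rfl fun d _ => ?_
    simp only [Finset.sum_comm (s := Ball _ _ _) (t := Mon K d)]
    rw [Finset.sum_comm]
  rw [h2]
  refine Finset.sum_congr rfl fun d _ => Finset.sum_congr rfl fun D hD => ?_
  rw [mem_Mon] at hD
  obtain ⟨hDm, rfl⟩ := hD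
  split_ifs with hd
  swap
  · simp
  obtain ⟨B₁, rfl⟩ := hd
  have hB₁m : B₁.Monic := hDm.of_mul_monic_left hBm
  rw [mul_div_cancel_left₀ _ hDm.ne_zero]
  simp only [← Finset.mul_sum]
  congr 1
  have h3 : ∀ A ∈ Mon K (N - 2 * (D * B₁).natDegree),
      ∑ f ∈ Ball m (a * (D * B₁) ^ 2 * A) M,
        (if D ∣ A ∧ D ^ 2 ∣ f then br (A / D * B₁ ^ 2) f else 0) =
      if D ∣ A then ∑ f ∈ Ball m (a * (D * B₁) ^ 2 * A) M,
        (if D ^ 2 ∣ f then br (A / D * B₁ ^ 2) f else 0) else 0 := by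
    intro A _
    by_cases h : D ∣ A <;> simp [h]
  rw [Finset.sum_congr rfl h3, sum_Mon_dvd hDm _ (fun A => ∑ f ∈ Ball m (a * (D * B₁) ^ 2 * A) M,
        (if D ^ 2 ∣ f then br (A / D * B₁ ^ 2) f else 0)), splitSum]
  rw [hDm.natDegree_mul hB₁m] at hBN ⊢
  refine if_congr (by omega) ?_ rfl
  rw [show N - 2 * (D.natDegree + B₁.natDegree) - D.natDegree =
    N - 3 * D.natDegree - 2 * B₁.natDegree by omega]
  refine Finset.sum_congr rfl fun A _ => ?_
  rw [mul_div_cancel_right₀ _ hDm.ne_zero,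
    show a * (D * B₁) ^ 2 * (A * D) = D ^ 2 * (a * D * (A * B₁ ^ 2)) by ring,
    sum_Ball_dvd hm (pow_ne_zero 2 hDm.ne_zero), natDegree_pow]

lemma CubicBracket.splitSum_eq_zero (S : CubicBracket br ω) {N : ℕ} (hN : N % 3 = 1)
    {a m : K[X]} (hm : m ≠ 0) {ρ : ℕ} {D B : K[X]} (hB : B.Monic)
    (h : ρ ≤ D.natDegree + B.natDegree) :
    splitSum br N a m (N + m.natDegree - ρ) D B = 0 := by
  rw [splitSum]
  split_ifs with hdb
  · refine Finset.sum_eq_zero fun A hA => ?_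
    rw [mem_Mon] at hA
    have hy : A * B ^ 2 ≠ 0 := (hA.1.mul (hB.pow 2)).ne_zero
    simp only [S.mul_right _ _ _ hy]
    rw [← Finset.mul_sum, S.sum_Ball_eq_zero hA.1.ne_zero hB.ne_zero ?_ hm, mul_zero]
    · rw [hA.1.natDegree_mul hB, hA.2]
      omega
    · intro hc
      have := isCube_three_dvd hc
      rw [hA.1.natDegree_mul (hB.pow 2), natDegree_pow, hA.2] at this
      omega
  · rfl

lemma CubicBracket.mu_mul_splitSum (S : CubicBracket br ω) (N : ℕ) (a m : K[X]) (M : ℕ)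
    {D B : K[X]} (hB : B ≠ 0) :
    mu (D * B) * splitSum br N a m M D B = mu D * mu B * splitSum br N a m M D B := by
  by_cases hc : IsCoprime D B
  · rw [mu_mul hc]
  · have : splitSum br N a m M D B = 0 := by
      rw [splitSum]
      split_ifs
      · refine Finset.sum_eq_zero fun A _ => Finset.sum_eq_zero fun f _ => ?_
        have hz : br B (D ^ 2 * f) = 0 := by
          rw [S.eq_zero_iff _ _ hB]
          intro h
          exact hc (h.of_isCoprime_of_dvd_right ((dvd_pow_self D two_ne_zero).mul_right f)).symm
        rw [S.mul_left, S.pow_left, hz]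
        ring
      · rfl
    rw [this, mul_zero, mul_zero]

lemma sum_Mon_divisors (b : ℕ) (Φ : ℕ → K[X] → K[X] → ℂ) :
    ∑ B ∈ Mon K b, ∑ d ∈ Finset.range (b + 1), ∑ D ∈ Mon K d,
      (if D ∣ B then Φ d D (B / D) else 0) =
    ∑ d ∈ Finset.range (b + 1), ∑ D ∈ Mon K d, ∑ B ∈ Mon K (b - d), Φ d D B := by
  rw [Finset.sum_comm]
  refine Finset.sum_congr rfl fun d hd => ?_
  rw [Finset.mem_range] at hd
  rw [Finset.sum_comm]
  refine Finset.sum_congr rfl fun D hD => ?_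
  rw [mem_Mon] at hD
  rw [sum_Mon_dvd hD.1 b (fun F => Φ d D (F / D)), hD.2, if_pos (by omega)]
  simp only [mul_div_cancel_right₀ _ hD.1.ne_zero]

lemma sum_triangle_reindex (N ρ : ℕ) (T : ℕ → ℕ → ℂ)
    (hT : ∀ d b, N < 3 * d + 2 * b ∨ ρ ≤ d + b → T d b = 0) :
    ∑ b ∈ (Finset.range (N / 2 + 1)).filter (· < ρ), ∑ d ∈ Finset.range (b + 1), T d (b - d) =
      ∑ d ∈ Finset.range (N / 3 + 1), ∑ b ∈ Finset.range ((N - 3 * d) / 2 + 1), T d b := by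
  rw [Finset.sum_sigma', Finset.sum_sigma']
  refine Finset.sum_bij_ne_zero (fun x _ _ => ⟨x.2, x.1 - x.2⟩) ?_ ?_ ?_ ?_
  · rintro ⟨b, d⟩ h hne
    simp only [Finset.mem_sigma, Finset.mem_filter, Finset.mem_range] at h hne ⊢
    have := mt (hT d (b - d)) hne
    omega
  · rintro ⟨b, d⟩ h _ ⟨b', d'⟩ h' _ e
    simp only [Finset.mem_sigma, Finset.mem_filter, Finset.mem_range] at h h' e
    simp only [Sigma.mk.injEq, heq_eq_eq] at e ⊢
    omega
  · rintro ⟨d, b⟩ h hne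
    simp only [Finset.mem_sigma, Finset.mem_range] at h hne
    have := mt (hT d b) hne
    refine ⟨⟨d + b, d⟩, ?_, ?_, ?_⟩
    · simp only [Finset.mem_sigma, Finset.mem_filter, Finset.mem_range]
      omega
    · simpa using hne
    · simp
  · rintro ⟨b, d⟩ _ _
    rfl

/-- Twisting by the square of a squarefree polynomial, as a sum over a congruence class. -/
lemma CubicBracket.twist_eq_sum (S : CubicBracket br ω) {A D : K[X]} (hA : Squarefree A)
    (hD : Squarefree D) (h : K[X]) :
    br A (D ^ 2 * h) = ∑ t ∈ Low K D.natDegree,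
      (if D ∣ h - t * A then br A ((h - t * A) / D) else 0) := by
  obtain ⟨A₁, hA₁⟩ := EuclideanDomain.gcd_dvd_left A D
  obtain ⟨D₁, hD₁⟩ := EuclideanDomain.gcd_dvd_right A D
  have hgr : ∀ P : K[X], P ∣ A → P ∣ D → P ∣ EuclideanDomain.gcd A D := fun P h1 h2 =>
    EuclideanDomain.dvd_gcd h1 h2
  set E := EuclideanDomain.gcd A D
  have hcop : IsCoprime A₁ D₁ := by
    refine (isCoprime_cofactor (E := E) (D := D₁) (hD₁ ▸ hD) fun P h1 h2 => ?_).symm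
    exact hgr P (by rw [hA₁]; exact h2.mul_left E) (by rw [hD₁]; exact h1)
  have hA₁0 : A₁ ≠ 0 := fun h => hA.ne_zero (by rw [hA₁, h, mul_zero])
  by_cases hu : IsUnit E
  · have hc : IsCoprime A D := by
      rw [hA₁, hD₁]
      exact (isCoprime_mul_unit_left hu _ _).mpr hcop
    have := S.congruence_sum_of_gcd (D := 1) (B := D) (f := A) (A := h)
      (by rwa [one_mul]) hA.ne_zero hc
    simp only [one_mul, one_dvd, if_true, natDegree_one, pow_zero] at this
    rw [this, mul_comm]
  · have hz : br A (D ^ 2 * h) = 0 := by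
      rw [S.eq_zero_iff _ _ hA.ne_zero]
      intro hc
      refine hu (hc.isUnit_of_dvd' ⟨A₁, hA₁⟩ ?_)
      exact ((Dvd.intro D₁ hD₁.symm).trans (dvd_pow_self D two_ne_zero)).mul_right h
    rw [hz]
    symm
    by_cases hEh : E ∣ h
    · obtain ⟨h₁, rfl⟩ := hEh
      have := S.congruence_sum_of_gcd (D := E) (B := D₁) (f := A₁) (A := h₁)
        (hD₁ ▸ hD) hA₁0 hcop
      rw [← hD₁, ← hA₁] at this
      rw [this, if_neg]
      rintro ⟨A₂, rfl⟩
      exact hu (hA E ⟨A₂, by rw [hA₁]; ring⟩)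
    · refine Finset.sum_eq_zero fun t _ => if_neg fun hd => hEh ?_
      have h1 : E ∣ h - t * A := (Dvd.intro D₁ hD₁.symm).trans hd
      have h2 : E ∣ t * A := (Dvd.intro A₁ hA₁.symm).mul_left t
      have := dvd_add h1 h2
      rwa [sub_add_cancel] at this

lemma sum_Ball_shift {m c D : K[X]} (hm : m ≠ 0) (hD : D ≠ 0) (z : K[X]) {M : ℕ}
    (φ : K[X] → ℂ) :
    ∑ f ∈ Ball m c M, (if D ∣ f - z then φ ((f - z) / D) else 0) =
      ∑ h ∈ Ball (m * D) (c - m * z) M, φ h := by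
  rw [← Finset.sum_filter]
  symm
  have key : ∀ h, h ∈ Ball (m * D) (c - m * z) M ↔ z + D * h ∈ Ball m c M := by
    intro h
    rw [mem_Ball hm, mem_Ball (mul_ne_zero hm hD)]
    congr! 1; ring
  refine Finset.sum_bij (fun h _ => z + D * h) ?_ ?_ ?_ ?_
  · intro h hh
    rw [Finset.mem_filter, ← key]
    exact ⟨hh, ⟨h, by ring⟩⟩
  · intro h _ h' _ e
    exact mul_left_cancel₀ hD (add_left_cancel e)
  · intro f hf
    rw [Finset.mem_filter] at hf
    obtain ⟨hf, h, hh⟩ := hf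
    have e : z + D * h = f := by linear_combination -hh
    exact ⟨h, (key h).mpr (by rwa [e]), e⟩
  · intro h _
    rw [add_sub_cancel_left, mul_div_cancel_left₀ _ hD]

/-- The recursion expressing sums over balls through lattice sums. -/
theorem CubicBracket.sum_latticeSum_eq (S : CubicBracket br ω) {N : ℕ} (hN : N % 3 = 1)
    {a m : K[X]} (ha : a ≠ 0) (hm : m ≠ 0) {ρ : ℕ}
    (hM : N + m.natDegree - ρ ≤ a.natDegree + N) :
    ∑ b ∈ (Finset.range (N / 2 + 1)).filter (· < ρ), ∑ B ∈ Mon K b,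
        mu B * latticeSum br ω N a m (N + m.natDegree - ρ) B =
      ∑ d ∈ Finset.range (N / 3 + 1), ∑ D ∈ Mon K d, mu D * (Fintype.card K : ℂ) ^ d *
        ∑ t ∈ Low K d, ballSum br (N - 3 * d) (a * D - m * t) (m * D) ρ := by
  set M := N + m.natDegree - ρ with hMdef
  let T : ℕ → ℕ → ℂ := fun d b => ∑ D ∈ Mon K d, ∑ B ∈ Mon K b,
    mu D * mu B * ((Fintype.card K : ℂ) ^ d * splitSum br N a m M D B)
  have hL : ∀ b ∈ (Finset.range (N / 2 + 1)).filter (· < ρ), ∑ B ∈ Mon K b,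
      mu B * latticeSum br ω N a m M B = ∑ d ∈ Finset.range (b + 1), T d (b - d) := by
    intro b hb
    rw [Finset.mem_filter, Finset.mem_range] at hb
    have h1 : ∀ B ∈ Mon K b, mu B * latticeSum br ω N a m M B =
        ∑ d ∈ Finset.range (b + 1), ∑ D ∈ Mon K d, (if D ∣ B then
          mu (D * (B / D)) * ((Fintype.card K : ℂ) ^ d * splitSum br N a m M D (B / D))
          else 0) := by
      intro B hB
      rw [mem_Mon] at hB
      by_cases hsq : Squarefree B
      · rw [S.latticeSum_eq ha hm hM hB.1 hsq (by omega), hB.2, Finset.mul_sum]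
        refine Finset.sum_congr rfl fun d _ => ?_
        rw [Finset.mul_sum]
        refine Finset.sum_congr rfl fun D hD => ?_
        rw [mem_Mon] at hD
        split_ifs with hd
        · rw [EuclideanDomain.mul_div_cancel' hD.1.ne_zero hd]
        · ring
      · rw [mu_eq_zero hsq, zero_mul]
        symm
        refine Finset.sum_eq_zero fun d _ => Finset.sum_eq_zero fun D hD => ?_
        rw [mem_Mon] at hD
        split_ifs with hd
        · rw [EuclideanDomain.mul_div_cancel' hD.1.ne_zero hd, mu_eq_zero hsq, zero_mul]
        · rfl
    rw [Finset.sum_congr rfl h1, sum_Mon_divisors b (fun d D B =>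
      mu (D * B) * ((Fintype.card K : ℂ) ^ d * splitSum br N a m M D B))]
    refine Finset.sum_congr rfl fun d _ => Finset.sum_congr rfl fun D hD =>
      Finset.sum_congr rfl fun B hB => ?_
    have := S.mu_mul_splitSum N a m M (D := D) (mem_Mon.mp hB).1.ne_zero
    linear_combination (Fintype.card K : ℂ) ^ d * this
  rw [Finset.sum_congr rfl hL, sum_triangle_reindex N ρ T]
  swap
  · intro d b h
    refine Finset.sum_eq_zero fun D hD => Finset.sum_eq_zero fun B hB => ?_
    rw [mem_Mon] at hD hB
    rcases h with h | h
    · rw [splitSum, if_neg (by omega)]; ring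
    · rw [S.splitSum_eq_zero hN hm hB.1 (by omega)]; ring
  refine Finset.sum_congr rfl fun d hd => ?_
  rw [Finset.mem_range] at hd
  simp only [T]
  rw [Finset.sum_comm]
  refine Finset.sum_congr rfl fun D hD => ?_
  rw [mem_Mon] at hD
  obtain ⟨hDm, rfl⟩ := hD
  by_cases hDsq : Squarefree D
  swap
  · rw [mu_eq_zero hDsq]; simp
  have h2 : ∑ b ∈ Finset.range ((N - 3 * D.natDegree) / 2 + 1), ∑ B ∈ Mon K b,
      mu D * mu B * ((Fintype.card K : ℂ) ^ D.natDegree * splitSum br N a m M D B) =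
      mu D * (Fintype.card K : ℂ) ^ D.natDegree * ∑ A ∈ Sqf K (N - 3 * D.natDegree),
        ∑ f ∈ Ball m (a * D * A) (M - 2 * D.natDegree), br A (D ^ 2 * f) := by
    rw [sum_Sqf, Finset.mul_sum]
    refine Finset.sum_congr rfl fun b hb => ?_
    rw [Finset.mem_range] at hb
    rw [Finset.mul_sum]
    refine Finset.sum_congr rfl fun B hB => ?_
    rw [mem_Mon] at hB
    rw [splitSum, if_pos (by omega), hB.2]
    ring
  rw [h2]
  congr 1
  have h3 : ∀ A ∈ Sqf K (N - 3 * D.natDegree),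
      ∑ f ∈ Ball m (a * D * A) (M - 2 * D.natDegree), br A (D ^ 2 * f) =
      ∑ t ∈ Low K D.natDegree, ∑ h ∈ Ball (m * D) ((a * D - m * t) * A)
        (N - 3 * D.natDegree + (m * D).natDegree - ρ), br A h := by
    intro A hA
    rw [mem_Sqf] at hA
    simp only [S.twist_eq_sum hA.2 hDsq]
    rw [Finset.sum_comm]
    refine Finset.sum_congr rfl fun t _ => ?_
    rw [sum_Ball_shift hm hDm.ne_zero (t * A) (br A), natDegree_mul hm hDm.ne_zero]
    congr 2
    · ring
    · omega
  rw [Finset.sum_congr rfl h3, Finset.sum_comm]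
  rfl

end BallSums

section LatticeSumBound

variable {K : Type} [Field K] [Fintype K] {br : K[X] → K[X] → ℂ} {ω : K → ℂ}

lemma card_Mon_filter_dvd {E : K[X]} (hE : E.Monic) {b : ℕ} (h : E.natDegree ≤ b) :
    ((Mon K b).filter (E ∣ ·)).card ≤ Fintype.card K ^ (b - E.natDegree) := by
  rw [← card_Mon]
  refine (Finset.card_le_card ?_).trans (Finset.card_image_le (f := fun A => E * A))
  intro F hF
  rw [Finset.mem_filter, mem_Mon] at hF
  obtain ⟨⟨hF, hF2⟩, A, rfl⟩ := hF
  have hA : A.Monic := hE.of_mul_monic_left hF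
  rw [hE.natDegree_mul hA] at hF2
  exact Finset.mem_image.mpr ⟨A, mem_Mon.mpr ⟨hA, by omega⟩, rfl⟩

lemma card_Low_filter_dvd {E : K[X]} (hE : E ≠ 0) (b : ℕ) :
    ((Low K b).filter (E ∣ ·)).card ≤ Fintype.card K ^ (b - E.natDegree) := by
  rw [← card_Low]
  refine (Finset.card_le_card ?_).trans (Finset.card_image_le (f := fun A => E * A))
  intro F hF
  rw [Finset.mem_filter, mem_Low] at hF
  obtain ⟨hF, A, rfl⟩ := hF
  exact Finset.mem_image.mpr ⟨A, mem_Low.mpr ((mul_mem_degreeLT_iff hE).mp hF), rfl⟩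

lemma sum_Region_eq {B m : K[X]} (hB : B ≠ 0) (hm : m ≠ 0) (t c : K[X]) {N M : ℕ}
    (φ : K[X] → K[X] → ℂ) :
    ∑ w ∈ Region B t m c N M, φ w.2 w.1 = ∑ A ∈ Mon K N, ∑ f ∈ Ball m (c * A) M,
      (if B ∣ A - t * f then φ f ((A - t * f) / B) else 0) := by
  simp only [← Finset.sum_filter]
  rw [Finset.sum_sigma']
  refine Finset.sum_bij (fun w _ => ⟨B * w.1 + t * w.2, w.2⟩) ?_ ?_ ?_ ?_
  · intro w hw
    rw [mem_Region hB hm] at hw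
    rw [Finset.mem_sigma, mem_Mon, Finset.mem_filter, mem_Ball hm]
    exact ⟨hw.1, hw.2, ⟨w.1, by ring⟩⟩
  · intro w _ w' _ h
    simp only [Sigma.mk.injEq, heq_eq_eq] at h
    refine Prod.ext (mul_left_cancel₀ hB ?_) h.2
    have h1 := h.1
    rw [h.2] at h1
    exact add_right_cancel h1
  · rintro ⟨A, f⟩ h
    rw [Finset.mem_sigma, mem_Mon, Finset.mem_filter, mem_Ball hm] at h
    obtain ⟨hA, hf, g, hg⟩ := h
    dsimp only at hA hf hg
    have e : B * g + t * f = A := by linear_combination -hg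
    refine ⟨(g, f), ?_, ?_⟩
    · rw [mem_Region hB hm]
      dsimp only
      rw [e]
      exact ⟨hA, hf⟩
    · simp only [e]
  · intro w _
    dsimp only
    rw [add_sub_cancel_right, mul_div_cancel_left₀ _ hB]

lemma CubicBracket.norm_latticeSum_le (S : CubicBracket br ω) {N : ℕ} {a m B : K[X]}
    (ha : a ≠ 0) (hm : m ≠ 0) (hB : B.Monic) {M : ℕ} (hM : M ≤ a.natDegree + N)
    (hBN : 2 * B.natDegree ≤ N) :
    ‖latticeSum br ω N a m M B‖ ≤ ∑ t ∈ Low K B.natDegree,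
      ‖∑ w ∈ Region B t m (a * B ^ 2) (N - 2 * B.natDegree) M, br w.2 w.1‖ := by
  have hc : a * B ^ 2 ≠ 0 := mul_ne_zero ha (pow_ne_zero 2 hB.ne_zero)
  let l := (a * B ^ 2).leadingCoeff / m.leadingCoeff
  have hl : l ≠ 0 := div_ne_zero (leadingCoeff_ne_zero.mpr hc) (leadingCoeff_ne_zero.mpr hm)
  have h1 : latticeSum br ω N a m M B = ω l ^ N * ∑ t ∈ Low K B.natDegree,
      ∑ w ∈ Region B t m (a * B ^ 2) (N - 2 * B.natDegree) M, br w.2 w.1 := by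
    simp only [sum_Region_eq hB.ne_zero hm _ _ br]
    rw [Finset.sum_comm, Finset.mul_sum, latticeSum]
    refine Finset.sum_congr rfl fun A hA => ?_
    rw [mem_Mon] at hA
    rw [Finset.sum_comm, Finset.mul_sum]
    refine Finset.sum_congr rfl fun f hf => ?_
    rw [mem_Ball hm] at hf
    have := (Region_leading hm hc (N := N - 2 * B.natDegree) (by
      rw [natDegree_mul ha (pow_ne_zero 2 hB.ne_zero), natDegree_pow]; omega) hA.1 hA.2 hf).2
    rw [this]
  rw [h1, norm_mul, norm_pow, S.norm_omega hl, one_pow, one_mul]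
  exact norm_sum_le _ _

lemma CubicBracket.norm_sum_Region_le (S : CubicBracket br ω) {N b ρ : ℕ} {a m B t : K[X]}
    (ha : a ≠ 0) (hm : m ≠ 0) (hB : B ∈ Mon K b) (hρ : ρ ≤ N)
    (hM : N + m.natDegree - ρ ≤ a.natDegree + N) (hBN : 2 * b ≤ N) :
    ‖∑ w ∈ Region B t m (a * B ^ 2) (N - 2 * b) (N + m.natDegree - ρ), br w.2 w.1‖ ≤
      (Fintype.card K : ℝ) + (Fintype.card K : ℝ) ^ 2 *
        (Fintype.card K : ℝ) ^ ((4 * N - 7 * b - ρ : ℝ) / 3) +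
      ∑ e ∈ Finset.range (b + 1), ∑ E ∈ Mon K e, (if E ∣ B ∧ E ∣ t then
        (Fintype.card K : ℝ) ^ 2 * (Fintype.card K : ℝ) ^ ((4 * N - 3 * ρ - 5 * b + 2 * e : ℝ) / 3)
        else 0) := by
  rw [mem_Mon] at hB
  obtain ⟨hB, rfl⟩ := hB
  have hq1 : (1 : ℝ) ≤ Fintype.card K := by exact_mod_cast Fintype.card_pos
  have hB2 := pow_ne_zero 2 hB.ne_zero
  obtain ⟨u, hu, hcase⟩ := S.lattice_sum_bound (N := N - 2 * B.natDegree)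
    (M := N + m.natDegree - ρ) hB.ne_zero hm (mul_ne_zero ha hB2) t (by
      rw [natDegree_mul ha hB2, natDegree_pow]; omega)
  have c1 : ((N - 2 * B.natDegree : ℕ) : ℝ) = N - 2 * B.natDegree := by
    rw [Nat.cast_sub hBN]; push_cast; ring
  have c2 : ((N + m.natDegree - ρ : ℕ) : ℝ) = N + m.natDegree - ρ := by
    rw [Nat.cast_sub (by omega)]; push_cast; ring
  rw [c1, c2] at hu
  have hnn : ∀ e ∈ Finset.range (B.natDegree + 1), ∀ E ∈ Mon K e,
      0 ≤ (if E ∣ B ∧ E ∣ t then (Fintype.card K : ℝ) ^ 2 *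
        (Fintype.card K : ℝ) ^ ((4 * N - 3 * ρ - 5 * B.natDegree + 2 * e : ℝ) / 3) else 0) := by
    intro e _ E _
    split_ifs <;> positivity
  refine hu.trans ?_
  rcases hcase with h | ⟨E, hEm, hEB, hEt, hEu⟩
  · have h' : (u : ℝ) ≤ N - 2 * B.natDegree := by rw [← c1]; exact_mod_cast h
    have h2 : (Fintype.card K : ℝ) ^ ((N - 2 * B.natDegree + (N + m.natDegree - ρ) -
        B.natDegree - m.natDegree + 2 * u : ℝ) / 3) ≤
        (Fintype.card K : ℝ) ^ ((4 * N - 7 * B.natDegree - ρ : ℝ) / 3) :=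
      Real.rpow_le_rpow_of_exponent_le hq1 (by linarith)
    have h3 := Finset.sum_nonneg fun e he => Finset.sum_nonneg (hnn e he)
    have h4 := mul_le_mul_of_nonneg_left h2 (by positivity : (0 : ℝ) ≤ (Fintype.card K : ℝ) ^ 2)
    linarith
  · have h' : (u : ℝ) + m.natDegree + B.natDegree ≤ N + m.natDegree - ρ + E.natDegree := by
      rw [← c2]; exact_mod_cast hEu
    have h2 : (Fintype.card K : ℝ) ^ ((N - 2 * B.natDegree + (N + m.natDegree - ρ) -
        B.natDegree - m.natDegree + 2 * u : ℝ) / 3) ≤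
        (Fintype.card K : ℝ) ^ ((4 * N - 3 * ρ - 5 * B.natDegree + 2 * E.natDegree : ℝ) / 3) :=
      Real.rpow_le_rpow_of_exponent_le hq1 (by linarith)
    have hle : E.natDegree ≤ B.natDegree := natDegree_le_of_dvd hEB hB.ne_zero
    have hmem : E.natDegree ∈ Finset.range (B.natDegree + 1) := Finset.mem_range.mpr (by omega)
    have h3 := (Finset.single_le_sum (hnn _ hmem) (mem_Mon.mpr ⟨hEm, rfl⟩)).trans
      (Finset.single_le_sum (f := fun e => ∑ E ∈ Mon K e, (if E ∣ B ∧ E ∣ t then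
        (Fintype.card K : ℝ) ^ 2 *
        (Fintype.card K : ℝ) ^ ((4 * N - 3 * ρ - 5 * B.natDegree + 2 * e : ℝ) / 3) else 0))
        (fun e he => Finset.sum_nonneg (hnn e he)) hmem)
    rw [if_pos ⟨hEB, hEt⟩] at h3
    have h4 := mul_le_mul_of_nonneg_left h2 (by positivity : (0 : ℝ) ≤ (Fintype.card K : ℝ) ^ 2)
    have h5 : 0 ≤ (Fintype.card K : ℝ) ^ 2 *
        (Fintype.card K : ℝ) ^ ((4 * N - 7 * B.natDegree - ρ : ℝ) / 3) := by positivity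
    linarith

lemma CubicBracket.sum_norm_latticeSum_le (S : CubicBracket br ω) {N b ρ : ℕ} {a m : K[X]}
    (ha : a ≠ 0) (hm : m ≠ 0) (hρ : ρ ≤ N)
    (hM : N + m.natDegree - ρ ≤ a.natDegree + N) (hBN : 2 * b ≤ N) :
    ∑ B ∈ Mon K b, ‖latticeSum br ω N a m (N + m.natDegree - ρ) B‖ ≤
      (Fintype.card K : ℝ) ^ (2 * b) * (Fintype.card K : ℝ) + (Fintype.card K : ℝ) ^ 2 *
        (Fintype.card K : ℝ) ^ ((4 * N - b - ρ : ℝ) / 3) +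
      ∑ e ∈ Finset.range (b + 1), (Fintype.card K : ℝ) ^ 2 *
        (Fintype.card K : ℝ) ^ ((4 * N - 3 * ρ + b - e : ℝ) / 3) := by
  set q : ℝ := (Fintype.card K : ℝ) with hq
  have hq0 : 0 < q := by rw [hq]; exact_mod_cast Fintype.card_pos
  have hpow : ∀ n : ℕ, q ^ n = q ^ (n : ℝ) := fun n => (Real.rpow_natCast q n).symm
  have h1 : ∀ B ∈ Mon K b, ‖latticeSum br ω N a m (N + m.natDegree - ρ) B‖ ≤
      ∑ t ∈ Low K b, (q + q ^ 2 * q ^ ((4 * N - 7 * b - ρ : ℝ) / 3) +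
      ∑ e ∈ Finset.range (b + 1), ∑ E ∈ Mon K e, (if E ∣ B ∧ E ∣ t then
        q ^ 2 * q ^ ((4 * N - 3 * ρ - 5 * b + 2 * e : ℝ) / 3) else 0)) := by
    intro B hB
    have hB' := mem_Mon.mp hB
    refine (S.norm_latticeSum_le ha hm hB'.1 hM (by omega)).trans ?_
    rw [hB'.2]
    exact Finset.sum_le_sum fun t _ => S.norm_sum_Region_le ha hm hB hρ hM hBN
  refine (Finset.sum_le_sum h1).trans ?_
  simp only [Finset.sum_add_distrib]
  refine add_le_add (add_le_add ?_ ?_) ?_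
  · simp only [Finset.sum_const, nsmul_eq_mul, card_Low, card_Mon]
    push_cast
    rw [← hq]
    exact le_of_eq (by ring)
  · simp only [Finset.sum_const, nsmul_eq_mul, card_Low, card_Mon]
    push_cast
    rw [← hq]
    refine le_of_eq ?_
    have : q ^ b * (q ^ b * (q ^ 2 * q ^ ((4 * N - 7 * b - ρ : ℝ) / 3))) =
      q ^ 2 * (q ^ (2 * b) * q ^ ((4 * N - 7 * b - ρ : ℝ) / 3)) := by ring
    rw [this, hpow (2 * b), ← Real.rpow_add hq0]
    congr 2
    push_cast; ring
  · have h2 : ∑ B ∈ Mon K b, ∑ t ∈ Low K b, ∑ e ∈ Finset.range (b + 1), ∑ E ∈ Mon K e,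
        (if E ∣ B ∧ E ∣ t then
        q ^ 2 * q ^ ((4 * N - 3 * ρ - 5 * b + 2 * e : ℝ) / 3) else 0) =
        ∑ e ∈ Finset.range (b + 1), ∑ E ∈ Mon K e, ∑ B ∈ Mon K b, ∑ t ∈ Low K b,
        (if E ∣ B ∧ E ∣ t then
        q ^ 2 * q ^ ((4 * N - 3 * ρ - 5 * b + 2 * e : ℝ) / 3) else 0) := by
      simp only [Finset.sum_comm (s := Low K b) (t := Finset.range _)]
      rw [Finset.sum_comm]
      refine Finset.sum_congr rfl fun e _ => ?_
      simp only [Finset.sum_comm (s := Low K b) (t := Mon K e)]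
      rw [Finset.sum_comm]
    rw [h2]
    refine Finset.sum_le_sum fun e he => ?_
    rw [Finset.mem_range] at he
    have hbe : ((b - e : ℕ) : ℝ) = b - e := Nat.cast_sub (by omega)
    have h3 : ∀ E ∈ Mon K e, ∑ B ∈ Mon K b, ∑ t ∈ Low K b,
        (if E ∣ B ∧ E ∣ t then
        q ^ 2 * q ^ ((4 * N - 3 * ρ - 5 * b + 2 * e : ℝ) / 3) else 0) ≤
        q ^ (b - e) * (q ^ (b - e) *
          (q ^ 2 * q ^ ((4 * N - 3 * ρ - 5 * b + 2 * e : ℝ) / 3))) := by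
      intro E hE
      rw [mem_Mon] at hE
      have h4 : ∑ B ∈ Mon K b, ∑ t ∈ Low K b, (if E ∣ B ∧ E ∣ t then
          q ^ 2 * q ^ ((4 * N - 3 * ρ - 5 * b + 2 * e : ℝ) / 3) else 0) =
          (((Mon K b).filter (E ∣ ·)).card : ℝ) * ((((Low K b).filter (E ∣ ·)).card : ℝ) *
          (q ^ 2 * q ^ ((4 * N - 3 * ρ - 5 * b + 2 * e : ℝ) / 3))) := by
        simp only [ite_and]
        rw [← nsmul_eq_mul, ← nsmul_eq_mul, ← Finset.sum_const, ← Finset.sum_const,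
          Finset.sum_filter, Finset.sum_filter]
        refine Finset.sum_congr rfl fun B _ => ?_
        split_ifs
        · rfl
        · exact Finset.sum_const_zero
      rw [h4]
      have c1 : (((Mon K b).filter (E ∣ ·)).card : ℝ) ≤ q ^ (b - e) := by
        have := card_Mon_filter_dvd hE.1 (b := b) (by omega)
        rw [hE.2] at this
        rw [hq]
        exact_mod_cast this
      have c2 : (((Low K b).filter (E ∣ ·)).card : ℝ) ≤ q ^ (b - e) := by
        have := card_Low_filter_dvd hE.1.ne_zero b
        rw [hE.2] at this
        rw [hq]
        exact_mod_cast this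
      gcongr
    refine (Finset.sum_le_sum h3).trans (le_of_eq ?_)
    rw [Finset.sum_const, card_Mon, nsmul_eq_mul]
    push_cast
    rw [← hq]
    have : q ^ e * (q ^ (b - e) * (q ^ (b - e) *
        (q ^ 2 * q ^ ((4 * N - 3 * ρ - 5 * b + 2 * e : ℝ) / 3)))) =
      q ^ 2 * (q ^ (e + (b - e) + (b - e)) * q ^ ((4 * N - 3 * ρ - 5 * b + 2 * e : ℝ) / 3)) := by
      ring
    rw [this, hpow (e + (b - e) + (b - e)), ← Real.rpow_add hq0]
    congr 2
    push_cast
    rw [hbe]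
    ring

end LatticeSumBound

section BallBound

variable {K : Type} [Field K] [Fintype K] {br : K[X] → K[X] → ℂ} {ω : K → ℂ}

lemma CubicBracket.ballSum_eq_zero (S : CubicBracket br ω) {N : ℕ} (hN : N % 3 = 1)
    {a m : K[X]} (hm : m ≠ 0) {ρ : ℕ}
    (h : a = 0 ∨ a.natDegree + N < N + m.natDegree - ρ) : ballSum br N a m ρ = 0 := by
  refine Finset.sum_eq_zero fun A hA => ?_
  rw [mem_Sqf] at hA
  set M := N + m.natDegree - ρ
  have hA0 : A ≠ 0 := hA.1.1.ne_zero
  have haA : a * A ∈ degreeLT K M := by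
    rw [mem_degreeLT_iff]
    rcases h with rfl | h
    · simp
    · right
      have := natDegree_mul_le (p := a) (q := A)
      rw [hA.1.2] at this
      omega
  have hball : ∀ f, f ∈ Ball m (a * A) M ↔ m * f ∈ degreeLT K M := fun f => by
    rw [mem_Ball hm]
    exact ⟨fun hf => by simpa using Submodule.add_mem _ hf haA,
      fun hf => Submodule.sub_mem _ hf haA⟩
  obtain ⟨c, hc, hc1⟩ := S.omega_nontrivial
  have hscale : ∑ f ∈ Ball m (a * A) M, br A f = ∑ f ∈ Ball m (a * A) M, br A (C c * f) := by
    symm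
    refine Finset.sum_bij' (fun f _ => C c * f) (fun f _ => C c⁻¹ * f) ?_ ?_ ?_ ?_ ?_
    · intro f hf
      rw [hball] at hf ⊢
      have := Submodule.smul_mem _ c hf
      rwa [smul_eq_C_mul, mul_left_comm] at this
    · intro f hf
      rw [hball] at hf ⊢
      have := Submodule.smul_mem _ c⁻¹ hf
      rwa [smul_eq_C_mul, mul_left_comm] at this
    · intro f _
      rw [← mul_assoc, ← C_mul, inv_mul_cancel₀ hc, C_1, one_mul]
    · intro f _
      rw [← mul_assoc, ← C_mul, mul_inv_cancel₀ hc, C_1, one_mul]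
    · intro f _; rfl
  have hω : ω c ^ N = ω c := by
    rw [← Nat.div_add_mod N 3, hN, pow_add, pow_mul, S.omega_cube c hc, one_pow, one_mul, pow_one]
  simp only [S.mul_right A _ _ hA0, S.C_right hA0 hc, hA.1.2, hω, ← Finset.mul_sum] at hscale
  have : (ω c - 1) * ∑ f ∈ Ball m (a * A) M, br A f = 0 := by
    rw [sub_mul, one_mul, ← hscale, sub_self]
  exact (mul_eq_zero.mp this).resolve_left (sub_ne_zero.mpr hc1)

lemma card_Sqf_le (N : ℕ) : ((Sqf K N).card : ℝ) ≤ (Fintype.card K : ℝ) ^ N := by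
  have := Finset.card_le_card (Finset.filter_subset Squarefree (Mon K N))
  rw [card_Mon] at this
  exact_mod_cast this

lemma CubicBracket.norm_ballSum_le_of_le (S : CubicBracket br ω) {N ρ : ℕ} {a m : K[X]}
    (hm : m ≠ 0) (hρ : N ≤ ρ) : ‖ballSum br N a m ρ‖ ≤ (Fintype.card K : ℝ) ^ N := by
  refine (norm_sum_le _ _).trans ((Finset.sum_le_card_nsmul _ _ 1 fun A _ => ?_).trans ?_)
  · rcases (Ball m (a * A) (N + m.natDegree - ρ)).eq_empty_or_nonempty with he | ⟨z, hz⟩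
    · rw [he]; simp
    rw [sum_Ball_eq_sum_Low hm hz, show N + m.natDegree - ρ - m.natDegree = 0 by omega]
    refine (norm_sum_le _ _).trans
      ((Finset.sum_le_card_nsmul _ _ 1 fun r _ => S.norm_le_one _ _).trans ?_)
    rw [card_Low]; simp
  · rw [nsmul_eq_mul, mul_one]; exact card_Sqf_le N

/-- The ratio `q ^ (-1/3)` of the geometric series controlling the lattice sums. -/
def cubeRatio (q : ℝ) : ℝ := q ^ (-(1 / 3) : ℝ)

lemma cubeRatio_nonneg {q : ℝ} (hq : 7 ≤ q) : 0 ≤ cubeRatio q := Real.rpow_nonneg (by linarith) _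

lemma cubeRatio_lt_one {q : ℝ} (hq : 7 ≤ q) : cubeRatio q < 1 :=
  Real.rpow_lt_one_of_one_lt_of_neg (by linarith) (by norm_num)

lemma cubeRatio_pow {q : ℝ} (hq : 7 ≤ q) (n : ℕ) : cubeRatio q ^ n = q ^ (-(n : ℝ) / 3) := by
  rw [cubeRatio, ← Real.rpow_natCast, ← Real.rpow_mul (by linarith)]
  congr 1; ring

lemma sum_pow_le_inv_one_sub {r : ℝ} (h0 : 0 ≤ r) (h1 : r < 1) (s : Finset ℕ) :
    ∑ i ∈ s, r ^ i ≤ (1 - r)⁻¹ := by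
  rw [← tsum_geometric_of_lt_one h0 h1]
  exact (summable_geometric_of_lt_one h0 h1).sum_le_tsum s fun i _ => pow_nonneg h0 i

/-- The constant in the bound for the total lattice contribution. -/
def latticeConst (q : ℝ) : ℝ :=
  2 * q + q ^ 2 * (1 - cubeRatio q)⁻¹ + q ^ 2 * (1 - cubeRatio q)⁻¹ * (1 - cubeRatio q)⁻¹

lemma one_le_latticeConst {q : ℝ} (hq : 7 ≤ q) : 1 ≤ latticeConst q := by
  have : 0 < (1 - cubeRatio q)⁻¹ := inv_pos.mpr (sub_pos.mpr (cubeRatio_lt_one hq))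
  have h1 : 0 ≤ q ^ 2 * (1 - cubeRatio q)⁻¹ := by positivity
  have h2 : 0 ≤ q ^ 2 * (1 - cubeRatio q)⁻¹ * (1 - cubeRatio q)⁻¹ := by positivity
  rw [latticeConst]; linarith

lemma sum_lattice_bounds_le {q : ℝ} (hq : 7 ≤ q) (N ρ : ℕ) :
    ∑ b ∈ (Finset.range (N / 2 + 1)).filter (· < ρ), (q ^ (2 * b) * q + q ^ 2 *
        q ^ ((4 * N - b - ρ : ℝ) / 3) + ∑ e ∈ Finset.range (b + 1), q ^ 2 *
          q ^ ((4 * N - 3 * ρ + b - e : ℝ) / 3)) ≤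
      latticeConst q * (q ^ ((8 / 7 : ℝ) * N) + q ^ ((4 * N - ρ : ℝ) / 3)) := by
  have hq0 : 0 < q := by linarith
  set r := cubeRatio q with hr
  have hr0 := cubeRatio_nonneg hq
  have hr1 := cubeRatio_lt_one hq
  have hG : 0 < (1 - r)⁻¹ := inv_pos.mpr (sub_pos.mpr hr1)
  set Q := q ^ ((4 * N - ρ : ℝ) / 3) with hQ
  have hQ0 : 0 < Q := Real.rpow_pos_of_pos hq0 _
  set s := (Finset.range (N / 2 + 1)).filter (· < ρ)
  have hterm : ∀ b ∈ s, (q ^ (2 * b) * q + q ^ 2 *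
        q ^ ((4 * N - b - ρ : ℝ) / 3) + ∑ e ∈ Finset.range (b + 1), q ^ 2 *
          q ^ ((4 * N - 3 * ρ + b - e : ℝ) / 3)) ≤
      (q ^ (2 * b) * q + (q ^ 2 * Q) * r ^ b + (q ^ 2 * Q * (1 - r)⁻¹) * r ^ b) := by
    intro b hb
    have hbρ : (b : ℝ) ≤ ρ := by exact_mod_cast (Finset.mem_filter.mp hb).2.le
    refine add_le_add (add_le_add le_rfl (le_of_eq ?_)) ?_
    · rw [hr, cubeRatio_pow hq, hQ, mul_assoc, ← Real.rpow_add hq0]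
      congr 2; ring
    · calc ∑ e ∈ Finset.range (b + 1), q ^ 2 * q ^ ((4 * N - 3 * ρ + b - e : ℝ) / 3)
          ≤ ∑ e ∈ Finset.range (b + 1), (q ^ 2 * Q * r ^ b) * r ^ e := by
            refine Finset.sum_le_sum fun e _ => ?_
            rw [mul_assoc, mul_assoc, hr, cubeRatio_pow hq, cubeRatio_pow hq, hQ,
              ← Real.rpow_add hq0, ← Real.rpow_add hq0]
            refine mul_le_mul_of_nonneg_left ?_ (by positivity)
            refine Real.rpow_le_rpow_of_exponent_le (by linarith) ?_
            linarith
        _ ≤ (q ^ 2 * Q * r ^ b) * (1 - r)⁻¹ := by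
            rw [← Finset.mul_sum]
            exact mul_le_mul_of_nonneg_left (sum_pow_le_inv_one_sub hr0 hr1 _) (by positivity)
        _ = _ := by ring
  refine (Finset.sum_le_sum hterm).trans ?_
  rw [Finset.sum_add_distrib, Finset.sum_add_distrib, ← Finset.mul_sum, ← Finset.mul_sum,
    ← Finset.sum_mul]
  have hgeo := sum_pow_le_inv_one_sub hr0 hr1 s
  have hfirst : ∑ b ∈ s, q ^ (2 * b) ≤ 2 * q ^ ((8 / 7 : ℝ) * N) := by
    have h2 : ∀ n : ℕ, ∑ b ∈ Finset.range (n + 1), q ^ (2 * b) ≤ 2 * q ^ (2 * n) := by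
      intro n
      induction n with
      | zero => simp
      | succ n ih =>
        rw [Finset.sum_range_succ]
        have : q ^ (2 * (n + 1)) = q ^ 2 * q ^ (2 * n) := by ring
        have hp : 0 < q ^ (2 * n) := by positivity
        have : 2 * q ^ (2 * n) ≤ q ^ 2 * q ^ (2 * n) :=
          mul_le_mul_of_nonneg_right (by nlinarith) hp.le
        linarith
    calc ∑ b ∈ s, q ^ (2 * b) ≤ ∑ b ∈ Finset.range (N / 2 + 1), q ^ (2 * b) :=
          Finset.sum_le_sum_of_subset_of_nonneg (Finset.filter_subset _ _)
            fun _ _ _ => by positivity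
      _ ≤ 2 * q ^ (2 * (N / 2)) := h2 _
      _ ≤ 2 * q ^ N := by
          have : q ^ (2 * (N / 2)) ≤ q ^ N := pow_le_pow_right₀ (by linarith) (by omega)
          linarith
      _ ≤ _ := by
          rw [← Real.rpow_natCast q N]
          have : q ^ (N : ℝ) ≤ q ^ ((8 / 7 : ℝ) * N) :=
            Real.rpow_le_rpow_of_exponent_le (by linarith) (by nlinarith [Nat.cast_nonneg (α := ℝ) N])
          linarith
  set W := q ^ ((8 / 7 : ℝ) * N)
  have hW : 0 < W := Real.rpow_pos_of_pos hq0 _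
  have e1 : (∑ b ∈ s, q ^ (2 * b)) * q ≤ 2 * W * q := mul_le_mul_of_nonneg_right hfirst hq0.le
  have e2 := mul_le_mul_of_nonneg_left hgeo (show 0 ≤ q ^ 2 * Q by positivity)
  have e3 := mul_le_mul_of_nonneg_left hgeo (show 0 ≤ q ^ 2 * Q * (1 - r)⁻¹ by positivity)
  have e4 : 0 ≤ (q ^ 2 * (1 - r)⁻¹ + q ^ 2 * (1 - r)⁻¹ * (1 - r)⁻¹) * W := by positivity
  have e5 : 0 ≤ 2 * q * Q := by positivity
  rw [latticeConst, ← hr]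
  nlinarith

lemma rpow_neg_three_sevenths_le {q : ℝ} (hq : 7 ≤ q) : q ^ (-(3 / 7) : ℝ) ≤ 4 / 9 := by
  have hq0 : 0 < q := by linarith
  rw [← pow_le_pow_iff_left₀ (Real.rpow_nonneg hq0.le _) (by norm_num) (show 7 ≠ 0 by norm_num),
    ← Real.rpow_natCast, ← Real.rpow_mul hq0.le,
    show (-(3 / 7) : ℝ) * ((7 : ℕ) : ℝ) = -((3 : ℕ) : ℝ) by norm_num, Real.rpow_neg hq0.le,
    Real.rpow_natCast, inv_le_comm₀ (by positivity) (by positivity)]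
  calc ((4 / 9 : ℝ) ^ 7)⁻¹ ≤ 7 ^ 3 := by norm_num
    _ ≤ q ^ 3 := pow_le_pow_left₀ (by norm_num) hq 3

theorem CubicBracket.norm_ballSum_le (S : CubicBracket br ω) (hq : 7 ≤ (Fintype.card K : ℝ))
    {N : ℕ} (hN : N % 3 = 1) {a m : K[X]} (hm : m ≠ 0) (ρ : ℕ) :
    ‖ballSum br N a m ρ‖ ≤ 5 * latticeConst (Fintype.card K) *
      ((Fintype.card K : ℝ) ^ ((8 / 7 : ℝ) * N) + (Fintype.card K : ℝ) ^ ((4 * N - ρ : ℝ) / 3)) := by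
  set q : ℝ := (Fintype.card K : ℝ) with hqdef
  have hq0 : 0 < q := by linarith
  have hC := one_le_latticeConst hq
  set c := latticeConst q
  induction N using Nat.strong_induction_on generalizing a m with
  | _ N ih =>
  set W := q ^ ((8 / 7 : ℝ) * N) with hW
  set Q := q ^ ((4 * N - ρ : ℝ) / 3) with hQ
  have hW0 : 0 < W := Real.rpow_pos_of_pos hq0 _
  have hQ0 : 0 < Q := Real.rpow_pos_of_pos hq0 _
  rcases le_or_gt N ρ with hρ | hρ
  · refine (S.norm_ballSum_le_of_le hm hρ).trans ?_
    have : q ^ N ≤ W := by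
      rw [← Real.rpow_natCast q N]
      exact Real.rpow_le_rpow_of_exponent_le (by linarith)
        (by nlinarith [Nat.cast_nonneg (α := ℝ) N])
    nlinarith
  by_cases hz : a = 0 ∨ a.natDegree + N < N + m.natDegree - ρ
  · rw [S.ballSum_eq_zero hN hm hz, norm_zero]; positivity
  push Not at hz
  obtain ⟨ha, hM⟩ := hz
  have hrec := S.sum_latticeSum_eq hN ha hm hM
  rw [Finset.sum_range_succ'] at hrec
  have hMon0 : Mon K 0 = {1} := by
    ext p; rw [mem_Mon, Finset.mem_singleton]
    exact ⟨fun h => h.1.natDegree_eq_zero.mp h.2, fun h => by simp [h]⟩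
  have hLow0 : Low K 0 = {0} := by
    ext p; rw [mem_Low, Finset.mem_singleton, mem_degreeLT_iff]; simp
  simp only [hMon0, hLow0, Finset.sum_singleton, mu_one, pow_zero, mul_one, mul_zero, sub_zero,
    one_mul, Nat.sub_zero] at hrec
  have hlat : ‖∑ b ∈ (Finset.range (N / 2 + 1)).filter (· < ρ), ∑ B ∈ Mon K b,
        mu B * latticeSum br ω N a m (N + m.natDegree - ρ) B‖ ≤ c * (W + Q) := by
    refine le_trans ?_ (sum_lattice_bounds_le hq N ρ)
    refine (norm_sum_le _ _).trans (Finset.sum_le_sum fun b hb => ?_)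
    have hb' := Finset.mem_range.mp (Finset.mem_filter.mp hb).1
    refine le_trans ?_ (S.sum_norm_latticeSum_le ha hm hρ.le hM (by omega))
    refine (norm_sum_le _ _).trans (Finset.sum_le_sum fun B _ => ?_)
    rw [norm_mul]
    exact mul_le_of_le_one_left (norm_nonneg _) (norm_mu_le B)
  have hd : ∀ d ∈ Finset.range (N / 3), ‖∑ D ∈ Mon K (d + 1), mu D * (Fintype.card K : ℂ) ^ (d + 1) *
        ∑ t ∈ Low K (d + 1), ballSum br (N - 3 * (d + 1)) (a * D - m * t) (m * D) ρ‖ ≤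
      5 * c * (W + Q) * (4 / 9) * (4 / 9) ^ d := by
    intro d hd
    have hdN : 3 * (d + 1) ≤ N := by have := Finset.mem_range.mp hd; omega
    have hcast : ((N - 3 * (d + 1) : ℕ) : ℝ) = N - 3 * (d + 1) := by
      rw [Nat.cast_sub hdN]; push_cast; ring
    have hW' : q ^ (3 * (d + 1)) * q ^ ((8 / 7 : ℝ) * (N - 3 * (d + 1) : ℝ)) ≤
        W * (4 / 9) ^ (d + 1) := by
      have : q ^ (3 * (d + 1)) * q ^ ((8 / 7 : ℝ) * (N - 3 * (d + 1) : ℝ)) =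
          W * (q ^ (-(3 / 7) : ℝ)) ^ (d + 1) := by
        rw [← Real.rpow_natCast, ← Real.rpow_natCast, ← Real.rpow_mul hq0.le, hW,
          ← Real.rpow_add hq0, ← Real.rpow_add hq0]
        congr 1; push_cast; ring
      rw [this]
      exact mul_le_mul_of_nonneg_left (pow_le_pow_left₀ (Real.rpow_nonneg hq0.le _)
        (rpow_neg_three_sevenths_le hq) _) hW0.le
    have hQ' : q ^ (3 * (d + 1)) * q ^ ((4 * (N - 3 * (d + 1)) - ρ : ℝ) / 3) ≤
        Q * (4 / 9) ^ (d + 1) := by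
      have : q ^ (3 * (d + 1)) * q ^ ((4 * (N - 3 * (d + 1)) - ρ : ℝ) / 3) =
          Q * (q⁻¹) ^ (d + 1) := by
        rw [← Real.rpow_neg_one, ← Real.rpow_natCast, ← Real.rpow_natCast, ← Real.rpow_mul hq0.le,
          hQ, ← Real.rpow_add hq0, ← Real.rpow_add hq0]
        congr 1; push_cast; ring
      rw [this]
      refine mul_le_mul_of_nonneg_left (pow_le_pow_left₀ (by positivity) ?_ _) hQ0.le
      rw [inv_le_comm₀ hq0 (by norm_num)]; norm_num; linarith
    have hin : ∀ D ∈ Mon K (d + 1), ‖mu D * (Fintype.card K : ℂ) ^ (d + 1) *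
        ∑ t ∈ Low K (d + 1), ballSum br (N - 3 * (d + 1)) (a * D - m * t) (m * D) ρ‖ ≤
        q ^ (d + 1) * (q ^ (d + 1) * (5 * c * (q ^ ((8 / 7 : ℝ) * (N - 3 * (d + 1) : ℝ)) +
          q ^ ((4 * (N - 3 * (d + 1)) - ρ : ℝ) / 3)))) := by
      intro D hD
      rw [mem_Mon] at hD
      rw [norm_mul, norm_mul, norm_pow, Complex.norm_natCast]
      refine mul_le_mul (mul_le_of_le_one_left (by positivity) (norm_mu_le D)) ?_
        (norm_nonneg _) (by positivity)
      refine (norm_sum_le _ _).trans ((Finset.sum_le_card_nsmul _ _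
        (5 * c * (q ^ ((8 / 7 : ℝ) * (N - 3 * (d + 1) : ℝ)) +
          q ^ ((4 * (N - 3 * (d + 1)) - ρ : ℝ) / 3))) fun t _ => ?_).trans_eq ?_)
      · have := ih (N - 3 * (d + 1)) (by omega) (by omega) (a := a * D - m * t)
          (mul_ne_zero hm hD.1.ne_zero)
        rwa [hcast] at this
      · rw [card_Low, nsmul_eq_mul]; push_cast; rfl
    refine (norm_sum_le _ _).trans ((Finset.sum_le_card_nsmul _ _ _ hin).trans ?_)
    rw [card_Mon, nsmul_eq_mul]
    push_cast
    rw [← hqdef]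
    calc _ = 5 * c * (q ^ (3 * (d + 1)) * q ^ ((8 / 7 : ℝ) * (N - 3 * (d + 1) : ℝ)) +
          q ^ (3 * (d + 1)) * q ^ ((4 * (N - 3 * (d + 1)) - ρ : ℝ) / 3)) := by ring
      _ ≤ 5 * c * (W * (4 / 9) ^ (d + 1) + Q * (4 / 9) ^ (d + 1)) :=
          mul_le_mul_of_nonneg_left (add_le_add hW' hQ') (by linarith)
      _ = _ := by ring
  have hsum := (norm_sum_le _ _).trans (Finset.sum_le_sum hd)
  rw [← Finset.mul_sum] at hsum
  have hgeo := mul_le_mul_of_nonneg_left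
    (sum_pow_le_inv_one_sub (r := 4 / 9) (by norm_num) (by norm_num) (Finset.range (N / 3)))
    (show 0 ≤ 5 * c * (W + Q) * (4 / 9) by positivity)
  have htri := norm_sub_le (∑ b ∈ (Finset.range (N / 2 + 1)).filter (· < ρ), ∑ B ∈ Mon K b,
        mu B * latticeSum br ω N a m (N + m.natDegree - ρ) B)
    (∑ d ∈ Finset.range (N / 3), ∑ D ∈ Mon K (d + 1), mu D * (Fintype.card K : ℂ) ^ (d + 1) *
        ∑ t ∈ Low K (d + 1), ballSum br (N - 3 * (d + 1)) (a * D - m * t) (m * D) ρ)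
  rw [hrec, add_sub_cancel_left, ← hrec] at htri
  norm_num at hgeo
  linarith

end BallBound

section CharSum

variable {K : Type} [Field K] [Fintype K] {br : K[X] → K[X] → ℂ} {ω : K → ℂ}

/-- The sum of the brackets over squarefree monic `F` of degree `N` and monic `f` of degree `n`. -/
def charSum (br : K[X] → K[X] → ℂ) (N n : ℕ) : ℂ := ∑ F ∈ Sqf K N, ∑ f ∈ Mon K n, br F f

lemma CubicBracket.sum_Mon_Sqf_eq_zero (S : CubicBracket br ω) {N n : ℕ} (hN : 0 < N)
    (hn : N ≤ n) {F : K[X]} (hF : F ∈ Sqf K N) : ∑ f ∈ Mon K n, br F f = 0 := by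
  rw [mem_Sqf] at hF
  refine S.sum_Mon_eq_zero hF.1.1.ne_zero (fun hc => ?_) (by omega)
  have := natDegree_eq_zero_of_isUnit (isCube_squarefree hc hF.2)
  omega

lemma ballSum_one_X_pow {N n : ℕ} (hn : n < N) :
    ballSum br N 1 (X ^ (N - n)) (N - n) = charSum br N n := by
  refine Finset.sum_congr rfl fun A hA => Finset.sum_congr ?_ fun _ _ => rfl
  rw [mem_Sqf] at hA
  ext f
  have hX : (X ^ (N - n) : K[X]) ≠ 0 := pow_ne_zero _ X_ne_zero
  have hdA : A.degree = N := by rw [degree_eq_natDegree hA.1.1.ne_zero, hA.1.2]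
  rw [mem_Ball hX, mem_Mon, natDegree_X_pow, one_mul, Nat.add_sub_cancel, mem_degreeLT]
  constructor
  · intro h
    have hmon : (A + (X ^ (N - n) * f - A)).Monic := hA.1.1.add_of_left (by rwa [hdA])
    have hdeg : (A + (X ^ (N - n) * f - A)).natDegree = N := by
      rw [natDegree_add_eq_left_of_degree_lt (by rwa [hdA]), hA.1.2]
    rw [add_sub_cancel] at hmon hdeg
    have hf : f.Monic := (monic_X_pow (N - n)).of_mul_monic_left hmon
    refine ⟨hf, ?_⟩
    rw [(monic_X_pow _).natDegree_mul hf, natDegree_X_pow] at hdeg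
    omega
  · rintro ⟨hf, hfn⟩
    have hmul : (X ^ (N - n) * f).Monic := (monic_X_pow _).mul hf
    have hdeg : (X ^ (N - n) * f).natDegree = N := by
      rw [(monic_X_pow _).natDegree_mul hf, natDegree_X_pow]; omega
    have hd : (X ^ (N - n) * f : K[X]).degree = (N : WithBot ℕ) := by rw [degree_eq_natDegree hmul.ne_zero, hdeg]
    have := degree_sub_lt_left (hd.trans hdA.symm) hmul.ne_zero
      (by rw [hmul.leadingCoeff, hA.1.1.leadingCoeff])
    rwa [hd] at this

lemma sum_pow_range_succ_le {q : ℝ} (hq : 2 ≤ q) (J : ℕ) :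
    ∑ j ∈ Finset.range (J + 1), q ^ j ≤ 2 * q ^ J := by
  induction J with
  | zero => simp
  | succ J ih =>
    rw [Finset.sum_range_succ]
    have hp : 0 < q ^ J := by positivity
    have : 2 * q ^ J ≤ q ^ (J + 1) := by rw [pow_succ]; nlinarith
    linarith

lemma CubicBracket.norm_sum_Sqf_le (S : CubicBracket br ω) (hq : 7 ≤ (Fintype.card K : ℝ))
    {f : K[X]} (hf : f.Monic) (hc : ¬ IsCube f) {N : ℕ} (hfN : f.natDegree ≤ N) :
    ‖∑ F ∈ Sqf K N, br F f‖ ≤ 2 * (Fintype.card K : ℝ) ^ ((N + f.natDegree : ℝ) / 2) := by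
  set q : ℝ := (Fintype.card K : ℝ) with hqdef
  set n := f.natDegree with hn
  have hq0 : 0 < q := by linarith
  have hrec : ∀ g : K[X], g.Monic → br g f = br f g := fun g hg => by
    have := S.reciprocity g f hg.ne_zero hf.ne_zero
    simpa [hg.leadingCoeff, hf.leadingCoeff, S.omega_one] using this
  have hB : ∀ b ∈ Finset.range (N / 2 + 1), ‖∑ B ∈ Mon K b, mu B *
      ∑ A ∈ Mon K (N - 2 * b), br (A * B ^ 2) f‖ ≤ if N - 2 * b < n then q ^ (N - b) else 0 := by
    intro b hb
    have hb' : 2 * b ≤ N := by have := Finset.mem_range.mp hb; omega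
    have hin : ∀ B ∈ Mon K b, ∑ A ∈ Mon K (N - 2 * b), br (A * B ^ 2) f =
        br f (B ^ 2) * ∑ A ∈ Mon K (N - 2 * b), br f A := by
      intro B hB
      rw [mem_Mon] at hB
      rw [Finset.mul_sum]
      refine Finset.sum_congr rfl fun A hA => ?_
      rw [mem_Mon] at hA
      rw [hrec _ (hA.1.mul (hB.1.pow 2)), S.mul_right _ _ _ hf.ne_zero, mul_comm]
    split_ifs with h
    · refine (norm_sum_le _ _).trans
        ((Finset.sum_le_card_nsmul _ _ (q ^ (N - 2 * b)) fun B _ => ?_).trans_eq ?_)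
      · rw [norm_mul]
        refine (mul_le_of_le_one_left (norm_nonneg _) (norm_mu_le B)).trans ?_
        refine (norm_sum_le _ _).trans
          ((Finset.sum_le_card_nsmul _ _ 1 fun A _ => S.norm_le_one _ _).trans_eq ?_)
        rw [card_Mon, nsmul_eq_mul, mul_one]; push_cast; rfl
      · rw [card_Mon, nsmul_eq_mul]; push_cast
        rw [← hqdef, ← pow_add]; congr 1; omega
    · rw [Finset.sum_eq_zero fun B hB => ?_, norm_zero]
      rw [hin B hB, S.sum_Mon_eq_zero hf.ne_zero hc (by omega), mul_zero, mul_zero]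
  rw [sum_Sqf]
  refine (norm_sum_le _ _).trans ((Finset.sum_le_sum hB).trans ?_)
  rw [← Finset.sum_filter]
  rcases ((Finset.range (N / 2 + 1)).filter fun b => N - 2 * b < n).eq_empty_or_nonempty
    with he | ⟨b, hb⟩
  · rw [he, Finset.sum_empty]; positivity
  have hn0 : 0 < n := by have := (Finset.mem_filter.mp hb).2; omega
  calc ∑ b ∈ (Finset.range (N / 2 + 1)).filter (fun b => N - 2 * b < n), q ^ (N - b)
      = ∑ j ∈ ((Finset.range (N / 2 + 1)).filter (fun b => N - 2 * b < n)).image (N - ·), q ^ j := by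
        rw [Finset.sum_image]
        intro x hx y hy hxy
        simp only [Finset.coe_filter, Finset.mem_range, Set.mem_ofPred_eq] at hx hy
        simp only at hxy
        omega
    _ ≤ ∑ j ∈ Finset.range ((N + n) / 2 + 1), q ^ j := by
        refine Finset.sum_le_sum_of_subset_of_nonneg ?_ fun _ _ _ => by positivity
        intro j hj
        simp only [Finset.mem_image, Finset.mem_filter, Finset.mem_range] at hj ⊢
        obtain ⟨b, hb, rfl⟩ := hj
        omega
    _ ≤ 2 * q ^ ((N + n) / 2) := sum_pow_range_succ_le (by linarith) _
    _ ≤ _ := by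
        rw [← Real.rpow_natCast]
        refine mul_le_mul_of_nonneg_left (Real.rpow_le_rpow_of_exponent_le (by linarith) ?_)
          (by norm_num)
        have : ((2 * ((N + n) / 2) : ℕ) : ℝ) ≤ ((N + n : ℕ) : ℝ) := by
          exact_mod_cast Nat.mul_div_le _ _
        push_cast at this ⊢
        linarith

lemma sum_Mon_isCube (n : ℕ) (φ : K[X] → ℂ) :
    ∑ f ∈ (Mon K n).filter IsCube, φ f = if 3 ∣ n then ∑ h ∈ Mon K (n / 3), φ (h ^ 3) else 0 := by
  split_ifs with hn
  · symm
    refine Finset.sum_bij (fun h _ => h ^ 3) ?_ ?_ ?_ fun _ _ => rfl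
    · intro h hh
      rw [mem_Mon] at hh
      rw [Finset.mem_filter, mem_Mon]
      refine ⟨⟨hh.1.pow 3, ?_⟩, 1, h, one_ne_zero, by simp⟩
      rw [natDegree_pow, hh.2]; omega
    · intro h hh k hk e
      rw [mem_Mon] at hh hk
      refine eq_of_monic_of_associated hh.1 hk.1 (associated_of_dvd_dvd ?_ ?_)
      · exact (IsIntegrallyClosed.pow_dvd_pow_iff (n := 3) (by norm_num)).mp (dvd_of_eq e)
      · exact (IsIntegrallyClosed.pow_dvd_pow_iff (n := 3) (by norm_num)).mp (dvd_of_eq e.symm)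
    · intro f hf
      rw [Finset.mem_filter, mem_Mon] at hf
      obtain ⟨⟨hm, hd⟩, c, e, hc, rfl⟩ := hf
      have he : e ≠ 0 := by rintro rfl; simp at hm
      have hl : c * e.leadingCoeff ^ 3 = 1 := by
        have := hm.leadingCoeff
        rwa [leadingCoeff_mul, leadingCoeff_C, leadingCoeff_pow] at this
      have hle : e.leadingCoeff ≠ 0 := leadingCoeff_ne_zero.mpr he
      refine ⟨e * C e.leadingCoeff⁻¹, ?_, ?_⟩
      · rw [mem_Mon]
        refine ⟨monic_mul_leadingCoeff_inv he, ?_⟩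
        rw [natDegree_C_mul hc, natDegree_pow] at hd
        rw [natDegree_mul_C (inv_ne_zero hle)]; omega
      · have : c = (e.leadingCoeff⁻¹) ^ 3 := by
          rw [inv_pow]; exact eq_inv_of_mul_eq_one_left hl
        rw [this, mul_pow, ← C_pow, mul_comm]
  · refine Finset.sum_eq_zero fun f hf => ?_
    rw [Finset.mem_filter, mem_Mon] at hf
    exact absurd (hf.1.2 ▸ isCube_three_dvd hf.2) hn

/-- The number of squarefree monic polynomials of degree `N` coprime to `h`. -/
def coprimeCount (h : K[X]) (N : ℕ) : ℕ := ((Sqf K N).filter fun F => IsCoprime F h).card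

lemma CubicBracket.bracket_pow_three (S : CubicBracket br ω) {F : K[X]} (hF : F ≠ 0) (h : K[X]) :
    br F (h ^ 3) = if IsCoprime F h then 1 else 0 := by
  rw [show h ^ 3 = h * (h * h) by ring, S.mul_right _ _ _ hF, S.mul_right _ _ _ hF]
  split_ifs with hc
  · rw [← S.cube F h hF hc]; ring
  · rw [(S.eq_zero_iff F h hF).mpr hc, zero_mul]

lemma CubicBracket.charSum_eq (S : CubicBracket br ω) (N n : ℕ) :
    charSum br N n = (if 3 ∣ n then ∑ h ∈ Mon K (n / 3), (coprimeCount h N : ℂ) else 0) +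
      ∑ f ∈ (Mon K n).filter (fun f => ¬ IsCube f), ∑ F ∈ Sqf K N, br F f := by
  rw [charSum, Finset.sum_comm, ← Finset.sum_filter_add_sum_filter_not _ IsCube, sum_Mon_isCube]
  congr 1
  refine if_congr Iff.rfl (Finset.sum_congr rfl fun h _ => ?_) rfl
  rw [coprimeCount, Finset.card_filter, Nat.cast_sum]
  refine Finset.sum_congr rfl fun F hF => ?_
  rw [S.bracket_pow_three (mem_Sqf.mp hF).1.1.ne_zero]
  split_ifs <;> simp

lemma CubicBracket.norm_noncube_le (S : CubicBracket br ω) (hq : 7 ≤ (Fintype.card K : ℝ))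
    {N n : ℕ} (hn : n ≤ N) :
    ‖∑ f ∈ (Mon K n).filter (fun f => ¬ IsCube f), ∑ F ∈ Sqf K N, br F f‖ ≤
      2 * (Fintype.card K : ℝ) ^ ((N + 3 * n : ℝ) / 2) := by
  set q : ℝ := (Fintype.card K : ℝ) with hqdef
  have hq0 : 0 < q := by linarith
  refine (norm_sum_le _ _).trans ((Finset.sum_le_card_nsmul _ _ (2 * q ^ ((N + n : ℝ) / 2))
    fun f hf => ?_).trans ?_)
  · rw [Finset.mem_filter, mem_Mon] at hf
    have := S.norm_sum_Sqf_le hq hf.1.1 hf.2 (N := N) (by omega)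
    rwa [hf.1.2] at this
  · rw [nsmul_eq_mul]
    have : ((((Mon K n).filter fun f => ¬ IsCube f).card : ℕ) : ℝ) ≤ q ^ n := by
      have := Finset.card_filter_le (Mon K n) (fun f => ¬ IsCube f)
      rw [card_Mon] at this
      rw [hqdef]
      exact_mod_cast this
    refine (mul_le_mul_of_nonneg_right this (by positivity)).trans_eq ?_
    rw [mul_left_comm, ← Real.rpow_natCast, ← Real.rpow_add hq0]
    congr 2; ring

lemma coprimeCount_le (h : K[X]) (N : ℕ) : (coprimeCount h N : ℝ) ≤ (Fintype.card K : ℝ) ^ N :=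
  le_trans (by exact_mod_cast Finset.card_filter_le _ _) (card_Sqf_le N)

theorem CubicBracket.norm_charSum_le (S : CubicBracket br ω) (hq : 7 ≤ (Fintype.card K : ℝ))
    {N : ℕ} (hN : N % 3 = 1) (n : ℕ) :
    ‖charSum br N n‖ ≤ 10 * latticeConst (Fintype.card K) *
      (Fintype.card K : ℝ) ^ (N + (n : ℝ) / 3) := by
  set q : ℝ := (Fintype.card K : ℝ) with hqdef
  have hq0 : 0 < q := by linarith
  have hC := one_le_latticeConst hq
  set Q := q ^ (N + (n : ℝ) / 3) with hQ
  have hQ0 : 0 < Q := Real.rpow_pos_of_pos hq0 _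
  rcases le_or_gt N n with hn | hn
  · rw [charSum, Finset.sum_eq_zero fun F hF => S.sum_Mon_Sqf_eq_zero (by omega) hn hF, norm_zero]
    positivity
  rcases le_or_gt (7 * n) (3 * N) with h | h
  · rw [S.charSum_eq]
    have h1 : ‖(if 3 ∣ n then ∑ h ∈ Mon K (n / 3), (coprimeCount h N : ℂ) else 0)‖ ≤ Q := by
      split_ifs with h3
      · refine (norm_sum_le _ _).trans ((Finset.sum_le_card_nsmul _ _ (q ^ N) fun h _ => ?_).trans ?_)
        · rw [Complex.norm_natCast]; exact coprimeCount_le h N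
        · rw [card_Mon, nsmul_eq_mul]; push_cast
          rw [← hqdef, hQ, Real.rpow_add hq0, Real.rpow_natCast, mul_comm]
          refine mul_le_mul_of_nonneg_left (le_of_eq ?_) (by positivity)
          obtain ⟨k, rfl⟩ := h3
          rw [Nat.mul_div_cancel_left _ (by norm_num), ← Real.rpow_natCast]
          congr 1; push_cast; ring
      · rw [norm_zero]; exact hQ0.le
    have h2 := S.norm_noncube_le hq hn.le
    have h3 : q ^ ((N + 3 * n : ℝ) / 2) ≤ Q := by
      refine Real.rpow_le_rpow_of_exponent_le (by linarith) ?_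
      have : (7 * n : ℝ) ≤ 3 * N := by exact_mod_cast h
      linarith
    refine (norm_add_le _ _).trans ?_
    nlinarith
  · rw [← ballSum_one_X_pow hn]
    refine (S.norm_ballSum_le hq hN (pow_ne_zero _ X_ne_zero) _).trans ?_
    have h1 : q ^ ((8 / 7 : ℝ) * N) ≤ Q := by
      refine Real.rpow_le_rpow_of_exponent_le (by linarith) ?_
      have : (3 * N : ℝ) ≤ 7 * n := by exact_mod_cast h.le
      linarith
    have h2 : q ^ ((4 * N - (N - n : ℕ) : ℝ) / 3) = Q := by
      rw [hQ, Nat.cast_sub hn.le]; congr 1; ring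
    rw [← hqdef, h2]
    nlinarith

end CharSum

lemma tendsto_of_tendsto_add_shift {x c : ℕ → ℝ} {r l B : ℝ} {p : ℕ} (hr : 0 ≤ r) (hr1 : r < 1)
    (hB : ∀ n, |x n| ≤ B) (hx : ∀ n, p ≤ n → x n + r * x (n - p) = c n)
    (hc : Tendsto c atTop (nhds l)) : Tendsto x atTop (nhds (l / (1 + r))) := by
  set y := l / (1 + r) with hy
  have hyl : y + r * y = l := by rw [hy]; field_simp
  set B' := B + |y| with hB'
  have hB0 : 0 ≤ B' := add_nonneg ((abs_nonneg _).trans (hB 0)) (abs_nonneg _)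
  rw [Metric.tendsto_atTop] at hc ⊢
  intro ε hε
  set η := ε * (1 - r) / 2 with hη
  have hη0 : 0 < η := by have := sub_pos.mpr hr1; positivity
  obtain ⟨N₀, hN₀⟩ := hc η hη0
  have key : ∀ k n, N₀ + k * p + p ≤ n + p → |x n - y| ≤ r ^ k * B' + η / (1 - r) := by
    intro k
    induction k with
    | zero =>
      intro n _
      have h1 : |x n - y| ≤ |x n| + |y| := abs_sub _ _
      have h2 : 0 ≤ η / (1 - r) := div_nonneg hη0.le (sub_pos.mpr hr1).le
      have h3 := hB n
      rw [pow_zero, one_mul]; linarith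
    | succ k ih =>
      intro n hn
      have hpn : p ≤ n := by nlinarith
      have h1 := ih (n - p) (by rw [add_mul] at hn; omega)
      have h2 : |c n - l| < η := by
        have := hN₀ n (by nlinarith)
        rwa [Real.dist_eq] at this
      have h3 : x n - y = (c n - l) - r * (x (n - p) - y) := by
        rw [← hx n hpn, ← hyl]; ring
      rw [h3]
      refine (abs_sub _ _).trans ?_
      rw [abs_mul, abs_of_nonneg hr]
      have h4 := mul_le_mul_of_nonneg_left h1 hr
      have h5 : r * (η / (1 - r)) + η = η / (1 - r) := by
        have := (sub_pos.mpr hr1).ne'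
        field_simp; ring
      rw [pow_succ]
      nlinarith
  have hlim : Tendsto (fun k : ℕ => r ^ k * B') atTop (nhds 0) := by
    simpa using (tendsto_pow_atTop_nhds_zero_of_lt_one hr hr1).mul_const B'
  obtain ⟨k, hk⟩ := ((tendsto_order.mp hlim).2 (ε / 2) (by linarith)).exists
  refine ⟨N₀ + k * p, fun n hn => ?_⟩
  rw [Real.dist_eq]
  have h1 := key k n (by omega)
  have h2 : η / (1 - r) = ε / 2 := by
    have := (sub_pos.mpr hr1).ne'
    rw [hη]; field_simp
  linarith

section Density

variable {K : Type} [Field K] [Fintype K]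

/-- The number of squarefree monic polynomials of degree `N` divisible by no element of `J`. -/
def sieveCount (J : Finset (MonicIrred K)) (N : ℕ) : ℕ :=
  ((Sqf K N).filter fun F => ∀ P ∈ J, ¬ P.1 ∣ F).card

lemma sieveCount_insert {J : Finset (MonicIrred K)} {P : MonicIrred K} (hP : P ∉ J) {N : ℕ}
    (hN : P.1.natDegree ≤ N) :
    sieveCount (insert P J) N + sieveCount (insert P J) (N - P.1.natDegree) = sieveCount J N := by
  have hsplit := Finset.card_filter_add_card_filter_not
    (s := (Sqf K N).filter fun F => ∀ Q ∈ J, ¬ Q.1 ∣ F) (fun F => ¬ P.1 ∣ F)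
  rw [sieveCount, sieveCount, sieveCount, ← hsplit]
  congr 1
  · congr 1
    ext F
    simp only [Finset.mem_filter, Finset.forall_mem_insert]
    tauto
  · refine Finset.card_bij (fun G _ => P.1 * G) ?_ ?_ ?_
    · intro G hG
      simp only [Finset.mem_filter, Finset.forall_mem_insert, mem_Sqf] at hG ⊢
      obtain ⟨⟨⟨hGm, hGd⟩, hGs⟩, hPG, hJ⟩ := hG
      refine ⟨⟨⟨⟨P.2.1.mul hGm, ?_⟩, ?_⟩, ?_⟩, not_not.mpr (dvd_mul_right _ _)⟩
      · rw [P.2.1.natDegree_mul hGm, hGd]; omega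
      · rw [squarefree_mul_iff]
        exact ⟨((P.2.2.coprime_iff_not_dvd).mpr hPG).isRelPrime, P.2.2.squarefree, hGs⟩
      · intro Q hQ hd
        rcases Q.2.2.prime.dvd_or_dvd hd with h | h
        · have : Q.1 = P.1 := eq_of_monic_of_associated Q.2.1 P.2.1
            (Q.2.2.associated_of_dvd P.2.2 h)
          exact hP (Subtype.ext this ▸ hQ)
        · exact hJ Q hQ h
    · intro G _ H _ h
      exact mul_left_cancel₀ P.2.1.ne_zero h
    · intro F hF
      simp only [Finset.mem_filter, not_not, mem_Sqf] at hF
      obtain ⟨⟨⟨⟨hFm, hFd⟩, hFs⟩, hJ⟩, G, rfl⟩ := hF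
      have hGm : G.Monic := P.2.1.of_mul_monic_left hFm
      refine ⟨G, ?_, rfl⟩
      simp only [Finset.mem_filter, Finset.forall_mem_insert, mem_Sqf]
      rw [P.2.1.natDegree_mul hGm] at hFd
      refine ⟨⟨⟨hGm, by omega⟩, hFs.of_mul_right⟩, ?_, fun Q hQ h => hJ Q hQ (h.mul_left _)⟩
      exact (P.2.2.coprime_iff_not_dvd).mp (isCoprime_of_squarefree_mul hFs)

lemma normP_pos (P : MonicIrred K) : 0 < normP (Fintype.card K) P := by
  have : 0 < Fintype.card K := Fintype.card_pos
  rw [normP]; positivity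

lemma one_lt_normP (P : MonicIrred K) : 1 < normP (Fintype.card K) P :=
  one_lt_pow₀ (by exact_mod_cast Fintype.one_lt_card) P.2.2.natDegree_pos.ne'

lemma tendsto_sieveCount (J : Finset (MonicIrred K)) :
    Tendsto (fun N => (sieveCount J N : ℝ) / (Fintype.card K : ℝ) ^ N) atTop
      (nhds ((1 - (Fintype.card K : ℝ)⁻¹) * ∏ P ∈ J, (1 + -(normP (Fintype.card K) P + 1)⁻¹))) := by
  set q : ℝ := (Fintype.card K : ℝ) with hqdef
  have hq0 : 0 < q := by rw [hqdef]; exact_mod_cast Fintype.card_pos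
  induction J using Finset.induction_on with
  | empty =>
    refine tendsto_const_nhds.congr' ?_
    filter_upwards [eventually_ge_atTop 2] with N hN
    have h1 : ((sieveCount (∅ : Finset (MonicIrred K)) N : ℕ) : ℝ) = q ^ N - q ^ (N - 1) := by
      have h2 := card_Sqf (K := K) hN
      rw [sieveCount, Finset.filter_true_of_mem (by simp)]
      have h3 : (((Sqf K N).card : ℝ) : ℂ) = ((q ^ N - q ^ (N - 1) : ℝ) : ℂ) := by
        rw [hqdef]; push_cast; exact h2
      exact Complex.ofReal_injective h3
    rw [h1, Finset.prod_empty, mul_one]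
    obtain ⟨n, rfl⟩ : ∃ n, N = n + 1 := ⟨N - 1, by omega⟩
    rw [Nat.add_sub_cancel]
    field_simp
    ring
  | insert P J hP ih =>
    rw [Finset.prod_insert hP]
    have hn1 := one_lt_normP P
    set r : ℝ := (normP (Fintype.card K) P)⁻¹ with hr
    have h := tendsto_of_tendsto_add_shift (x := fun N => (sieveCount (insert P J) N : ℝ) / q ^ N)
      (r := r) (B := 1) (p := P.1.natDegree) (by positivity) (inv_lt_one_of_one_lt₀ hn1) ?_ ?_ ih
    · convert h using 2
      have : r ≠ 0 := by positivity
      have h2 : normP (Fintype.card K) P = r⁻¹ := by rw [hr, inv_inv]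
      have h3 : 0 < r := by positivity
      rw [h2]; field_simp
      ring
    · intro N
      rw [abs_of_nonneg (by positivity), div_le_one (by positivity)]
      exact le_trans (by exact_mod_cast Finset.card_filter_le _ _) (card_Sqf_le N)
    · intro N hN
      rw [← sieveCount_insert hP hN, hr, normP, ← hqdef]
      push_cast
      have : q ^ N = q ^ P.1.natDegree * q ^ (N - P.1.natDegree) := by
        rw [← pow_add]; congr 1; omega
      rw [this]; field_simp

/-- The monic irreducible divisors of `h`. -/
def primeDivs (h : K[X]) : Finset (MonicIrred K) := fs {P : MonicIrred K | P.1 ∣ h}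

lemma mem_primeDivs {h : K[X]} (hh : h ≠ 0) {P : MonicIrred K} : P ∈ primeDivs h ↔ P.1 ∣ h := by
  refine mem_fs (Set.Finite.of_finite_image (f := Subtype.val) ?_ Subtype.val_injective.injOn)
  refine (finite_degreeLT (K := K) (h.natDegree + 1)).subset ?_
  rintro _ ⟨P, hP, rfl⟩
  rw [Set.mem_ofPred_eq, mem_degreeLT_iff]
  exact Or.inr (Nat.lt_succ_of_le (natDegree_le_of_dvd hP hh))

lemma exists_monicIrred_dvd {h : K[X]} (hh : ¬ IsUnit h) (h0 : h ≠ 0) :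
    ∃ P : MonicIrred K, P.1 ∣ h := by
  obtain ⟨P, hP, hd⟩ := WfDvdMonoid.exists_irreducible_factor hh h0
  exact ⟨⟨normalize P, monic_normalize hP.ne_zero, (normalize_associated P).symm.irreducible hP⟩,
    (normalize_associated P).dvd.trans hd⟩

lemma coprimeCount_eq {h : K[X]} (hh : h ≠ 0) (N : ℕ) :
    coprimeCount h N = sieveCount (primeDivs h) N := by
  rw [coprimeCount, sieveCount]
  congr 1
  refine Finset.filter_congr fun F hF => ?_
  have hF0 := (mem_Sqf.mp hF).1.1.ne_zero
  constructor
  · intro hc P hP hd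
    exact P.2.2.not_isUnit (hc.isUnit_of_dvd' hd ((mem_primeDivs hh).mp hP))
  · intro hall
    rw [← EuclideanDomain.gcd_isUnit_iff]
    by_contra hu
    obtain ⟨P, hP⟩ := exists_monicIrred_dvd hu
      (fun h0 => hF0 (EuclideanDomain.gcd_eq_zero_iff.mp h0).1)
    exact hall P ((mem_primeDivs hh).mpr (hP.trans (EuclideanDomain.gcd_dvd_right _ _)))
      (hP.trans (EuclideanDomain.gcd_dvd_left _ _))

/-- The limiting density of squarefree polynomials coprime to `h` among the squarefree ones. -/
def density (h : K[X]) : ℝ := ∏ P ∈ primeDivs h, (1 + -(normP (Fintype.card K) P + 1)⁻¹)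

lemma tendsto_coprimeCount {h : K[X]} (hh : h ≠ 0) :
    Tendsto (fun N => (coprimeCount h N : ℝ) / (Fintype.card K : ℝ) ^ N) atTop
      (nhds ((1 - (Fintype.card K : ℝ)⁻¹) * density h)) := by
  simp only [coprimeCount_eq hh]
  exact tendsto_sieveCount _

variable {br : K[X] → K[X] → ℂ} {ω : K → ℂ}

lemma CubicBracket.tendsto_charSum (S : CubicBracket br ω) (hq : 7 ≤ (Fintype.card K : ℝ)) (n : ℕ) :
    Tendsto (fun N => charSum br N n / (Fintype.card K : ℂ) ^ N) atTop
      (nhds ((1 - (Fintype.card K : ℂ)⁻¹) *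
        (if 3 ∣ n then ∑ h ∈ Mon K (n / 3), (density h : ℂ) else 0))) := by
  have hq0 : 0 < (Fintype.card K : ℝ) := by linarith
  simp only [S.charSum_eq, add_div]
  rw [← add_zero ((1 - (Fintype.card K : ℂ)⁻¹) *
        (if 3 ∣ n then ∑ h ∈ Mon K (n / 3), (density h : ℂ) else 0))]
  refine Tendsto.add ?_ ?_
  · split_ifs with h3
    · simp only [Finset.sum_div, Finset.mul_sum]
      refine tendsto_finsetSum _ fun h hh => ?_
      have := (Complex.continuous_ofReal.tendsto _).comp
        (tendsto_coprimeCount (mem_Mon.mp hh).1.ne_zero)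
      convert this using 2
      · simp
      · push_cast; rfl
    · simp
  · rw [tendsto_zero_iff_norm_tendsto_zero]
    set q : ℝ := (Fintype.card K : ℝ) with hqdef
    have hlim : Tendsto (fun N : ℕ => 2 * q ^ (3 * n / 2 : ℝ) * (q ^ (-(1 / 2) : ℝ)) ^ N) atTop
        (nhds 0) := by
      simpa using (tendsto_pow_atTop_nhds_zero_of_lt_one (Real.rpow_nonneg hq0.le _)
        (Real.rpow_lt_one_of_one_lt_of_neg (x := q) (z := -(1 / 2)) (by linarith)
          (by norm_num))).const_mul (2 * q ^ (3 * n / 2 : ℝ))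
    refine squeeze_zero' (Eventually.of_forall fun _ => norm_nonneg _) ?_ hlim
    filter_upwards [eventually_ge_atTop n] with N hN
    rw [norm_div, norm_pow, Complex.norm_natCast, div_le_iff₀ (by positivity)]
    refine (S.norm_noncube_le hq hN).trans_eq ?_
    rw [← hqdef, ← Real.rpow_natCast, ← Real.rpow_natCast, ← Real.rpow_mul hq0.le, mul_assoc,
      mul_assoc, ← Real.rpow_add hq0, ← Real.rpow_add hq0]
    congr 2; ring

end Density

section EulerProduct

variable {K : Type} [Field K] [Fintype K]

lemma prod_dvd_iff_subset_primeDivs {h : K[X]} (hh : h ≠ 0) (I : Finset (MonicIrred K)) :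
    ∏ P ∈ I, P.1 ∣ h ↔ I ⊆ primeDivs h := by
  constructor
  · intro hd P hP
    exact (mem_primeDivs hh).mpr ((Finset.dvd_prod_of_mem (fun P : MonicIrred K => P.1) hP).trans hd)
  · intro hI
    refine Finset.prod_dvd_of_coprime (s := fun P : MonicIrred K => P.1) ?_
      fun P hP => (mem_primeDivs hh).mp (hI hP)
    intro P _ Q _ hPQ
    refine (P.2.2.coprime_iff_not_dvd).mpr fun hd => hPQ (Subtype.ext ?_)
    exact eq_of_monic_of_associated P.2.1 Q.2.1 (P.2.2.associated_of_dvd Q.2.2 hd)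

lemma card_Mon_dvd {D : K[X]} (hD : D.Monic) (m : ℕ) :
    ∑ h ∈ Mon K m, (if D ∣ h then (1 : ℝ) else 0) =
      if D.natDegree ≤ m then (Fintype.card K : ℝ) ^ (m - D.natDegree) else 0 := by
  have h := sum_Mon_dvd hD m fun _ => 1
  rw [Finset.sum_const, card_Mon, nsmul_eq_mul, mul_one] at h
  apply Complex.ofReal_injective
  push_cast
  simp only [apply_ite (Complex.ofReal), Complex.ofReal_one, Complex.ofReal_zero,
    Complex.ofReal_pow, Complex.ofReal_natCast]
  rw [h]
  push_cast
  rfl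

/-- The weight of a finite set of primes in the expansion of `density`. -/
def densityWeight (I : Finset (MonicIrred K)) : ℝ := ∏ P ∈ I, -(normP (Fintype.card K) P + 1)⁻¹

lemma hasSum_densityWeight (m : ℕ) :
    HasSum (fun I : Finset (MonicIrred K) => densityWeight I *
      if ∑ P ∈ I, P.1.natDegree ≤ m then (Fintype.card K : ℝ) ^ (m - ∑ P ∈ I, P.1.natDegree) else 0)
      (∑ h ∈ Mon K m, density h) := by
  have h1 : ∀ h ∈ Mon K m, HasSum (fun I : Finset (MonicIrred K) =>
      densityWeight I * if ∏ P ∈ I, P.1 ∣ h then (1 : ℝ) else 0) (density h) := by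
    intro h hh
    have h0 := (mem_Mon.mp hh).1.ne_zero
    have h2 := hasSum_sum_of_ne_finset_zero (L := SummationFilter.unconditional _)
      (s := (primeDivs h).powerset) (f := fun I : Finset (MonicIrred K) =>
        densityWeight I * if ∏ P ∈ I, P.1 ∣ h then (1 : ℝ) else 0) ?_
    · convert h2 using 1
      rw [density, Finset.prod_one_add]
      refine Finset.sum_congr rfl fun I hI => ?_
      rw [if_pos ((prod_dvd_iff_subset_primeDivs h0 I).mpr (Finset.mem_powerset.mp hI)), mul_one,
        densityWeight]
    · intro I hI
      rw [if_neg (fun hd => hI (Finset.mem_powerset.mpr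
        ((prod_dvd_iff_subset_primeDivs h0 I).mp hd))), mul_zero]
  have h2 := hasSum_sum h1
  convert h2 using 2 with I
  rw [← Finset.mul_sum, card_Mon_dvd (monic_prod_of_monic _ _ fun P _ => P.2.1),
    natDegree_prod_of_monic _ _ fun P _ => P.2.1]

lemma hasSum_shifted_geometric {x q : ℝ} (hx : 0 ≤ x) (hq : 0 ≤ q) (hqx : q * x < 1) (c : ℝ)
    (d : ℕ) : HasSum (fun m => x ^ m * (c * if d ≤ m then q ^ (m - d) else 0))
      (c * x ^ d * (1 - q * x)⁻¹) := by
  rw [← hasSum_nat_add_iff' d, Finset.sum_eq_zero, sub_zero]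
  · refine ((hasSum_geometric_of_lt_one (mul_nonneg hq hx) hqx).mul_left (c * x ^ d)).congr_fun
      fun m => ?_
    rw [if_pos (by omega), Nat.add_sub_cancel, pow_add, mul_pow]
    ring
  · intro i hi
    rw [if_neg (by have := Finset.mem_range.mp hi; omega), mul_zero, mul_zero]

lemma summable_norm_euler_term {x : ℝ} (hx : 0 ≤ x) (hx1 : x < 1) :
    Summable fun P : MonicIrred K =>
      ‖-(normP (Fintype.card K) P + 1)⁻¹ * x ^ P.1.natDegree‖ := by
  set q : ℝ := (Fintype.card K : ℝ) with hq
  have hq0 : 0 < q := by rw [hq]; exact_mod_cast Fintype.card_pos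
  have hle : ∀ P : MonicIrred K, ‖-(normP (Fintype.card K) P + 1)⁻¹ * x ^ P.1.natDegree‖ ≤
      (q ^ P.1.natDegree)⁻¹ * x ^ P.1.natDegree := by
    intro P
    have := normP_pos P
    rw [norm_mul, norm_neg, norm_inv, Real.norm_of_nonneg (by positivity),
      Real.norm_of_nonneg (by positivity)]
    refine mul_le_mul_of_nonneg_right (inv_anti₀ (by positivity) ?_) (by positivity)
    rw [normP, ← hq]; linarith
  refine summable_of_sum_le (c := (1 - x)⁻¹) (fun _ => norm_nonneg _) fun u => ?_
  refine (Finset.sum_le_sum fun P _ => hle P).trans ?_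
  set t := u.image fun P : MonicIrred K => P.1.natDegree with ht
  rw [← Finset.sum_fiberwise_of_maps_to (t := t) (g := fun P : MonicIrred K => P.1.natDegree)
    fun P hP => Finset.mem_image_of_mem _ hP]
  refine le_trans (Finset.sum_le_sum fun d _ => ?_) (sum_pow_le_inv_one_sub hx hx1 t)
  have hcard : (((u.filter fun P : MonicIrred K => P.1.natDegree = d).card : ℕ) : ℝ) ≤ q ^ d := by
    have : (u.filter fun P : MonicIrred K => P.1.natDegree = d).card ≤ (Mon K d).card :=
      Finset.card_le_card_of_injOn (fun P => P.1)
        (fun P hP => mem_Mon.mpr ⟨P.2.1, (Finset.mem_filter.mp hP).2⟩)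
        Subtype.val_injective.injOn
    rw [card_Mon] at this
    rw [hq]; exact_mod_cast this
  calc _ = ∑ P ∈ u.filter (fun P : MonicIrred K => P.1.natDegree = d), (q ^ d)⁻¹ * x ^ d :=
        Finset.sum_congr rfl fun P hP => by rw [(Finset.mem_filter.mp hP).2]
    _ = (u.filter fun P : MonicIrred K => P.1.natDegree = d).card * ((q ^ d)⁻¹ * x ^ d) := by
        rw [Finset.sum_const, nsmul_eq_mul]
    _ ≤ q ^ d * ((q ^ d)⁻¹ * x ^ d) := mul_le_mul_of_nonneg_right hcard (by positivity)
    _ = x ^ d := by field_simp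

theorem tsum_density {x : ℝ} (hx : 0 ≤ x) (hqx : (Fintype.card K : ℝ) * x < 1) :
    ∑' m, x ^ m * ∑ h ∈ Mon K m, density h = (1 - (Fintype.card K : ℝ) * x)⁻¹ *
      ∏' P : MonicIrred K, (1 + -(normP (Fintype.card K) P + 1)⁻¹ * x ^ P.1.natDegree) := by
  set q : ℝ := (Fintype.card K : ℝ) with hq
  have hq1 : 1 < q := by rw [hq]; exact_mod_cast Fintype.one_lt_card
  have hx1 : x < 1 := by nlinarith
  have hsum := summable_norm_euler_term (K := K) hx hx1
  let deg : Finset (MonicIrred K) → ℕ := fun I => ∑ P ∈ I, P.1.natDegree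
  have hprod : ∀ I : Finset (MonicIrred K),
      ∏ P ∈ I, -(normP (Fintype.card K) P + 1)⁻¹ * x ^ P.1.natDegree =
        densityWeight I * x ^ deg I := fun I => by
    rw [Finset.prod_mul_distrib, Finset.prod_pow_eq_pow_sum, densityWeight]
  have habs : Summable fun I : Finset (MonicIrred K) => |densityWeight I| * x ^ deg I := by
    have := summable_finsetProd_of_summable_norm (R := ℝ) (f := fun P : MonicIrred K =>
      ‖-(normP (Fintype.card K) P + 1)⁻¹ * x ^ P.1.natDegree‖) (by simpa using hsum)
    refine this.congr fun I => ?_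
    rw [← norm_prod, hprod, norm_mul, Real.norm_eq_abs, Real.norm_of_nonneg (by positivity)]
  let G : Finset (MonicIrred K) → ℕ → ℝ := fun I m =>
    x ^ m * (densityWeight I * if deg I ≤ m then q ^ (m - deg I) else 0)
  have hGsum : ∀ I, HasSum (G I) (densityWeight I * x ^ deg I * (1 - q * x)⁻¹) := fun I =>
    hasSum_shifted_geometric hx (by linarith) hqx _ _
  have hGnorm : ∀ I, HasSum (fun m => ‖G I m‖) (|densityWeight I| * x ^ deg I * (1 - q * x)⁻¹) := by
    intro I
    convert hasSum_shifted_geometric hx (by linarith) hqx |densityWeight I| (deg I) using 2 with m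
    rw [norm_mul, norm_mul, Real.norm_of_nonneg (by positivity), Real.norm_eq_abs]
    congr 2
    exact Real.norm_of_nonneg (by split_ifs <;> positivity)
  have hGS : Summable (Function.uncurry G) := by
    refine Summable.of_norm ?_
    rw [summable_prod_of_nonneg fun _ => norm_nonneg _]
    refine ⟨fun I => (hGnorm I).summable, ?_⟩
    refine (habs.mul_right (1 - q * x)⁻¹).congr fun I => ?_
    exact (hGnorm I).tsum_eq.symm
  have hcomm := hGS.tsum_comm
  have hleft : ∀ m, ∑' I, G I m = x ^ m * ∑ h ∈ Mon K m, density h := fun m =>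
    ((hasSum_densityWeight m).mul_left (x ^ m)).tsum_eq
  simp only [hleft, (hGsum _).tsum_eq] at hcomm
  rw [hcomm, tsum_mul_right, tprod_one_add (summable_finsetProd_of_summable_norm hsum), mul_comm]
  simp only [hprod]

end EulerProduct

section Average

variable {K : Type} [Field K] [Fintype K] {br : K[X] → K[X] → ℂ} {ω : K → ℂ}

lemma sumSqfree_eq (N : ℕ) (φ : K[X] → ℂ) : sumSqfree N φ = ∑ F ∈ Sqf K N, φ F := by
  rw [Sqf, Finset.sum_filter]
  exact sumMonic_eq N fun F => if Squarefree F then φ F else 0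

lemma CubicBracket.sumSqfree_Lval (S : CubicBracket br ω) {chi : K[X] → K[X] → ℂ}
    (hchi : ∀ F : K[X], F.Monic → chi F = br F) (q : ℕ) (s : ℝ) {N : ℕ} (hN : 0 < N) :
    sumSqfree N (fun F => Lval q s (chi F)) =
      ∑' n : ℕ, charSum br N n * ((q : ℝ) ^ (-s * (n : ℝ)) : ℝ) := by
  have hL : ∀ F ∈ Sqf K N, Lval q s (chi F) =
      ∑' n : ℕ, (∑ f ∈ Mon K n, br F f) * ((q : ℝ) ^ (-s * (n : ℝ)) : ℝ) := fun F hF => by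
    rw [Lval, hchi F (mem_Sqf.mp hF).1.1]
    simp only [sumMonic_eq]
  rw [sumSqfree_eq, Finset.sum_congr rfl hL, ← Summable.tsum_finsetSum]
  · simp only [charSum, Finset.sum_mul]
  · intro F hF
    refine summable_of_ne_finset_zero (s := Finset.range N) fun n hn => ?_
    rw [S.sum_Mon_Sqf_eq_zero hN (by simpa using hn) hF, zero_mul]

lemma tsum_three_dvd (a : ℕ → ℂ) :
    ∑' n, (if 3 ∣ n then a n else 0) = ∑' m, a (3 * m) := by
  have hinj : Function.Injective fun m : ℕ => 3 * m := fun m n h => by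
    simp only at h; omega
  rw [← hinj.tsum_eq]
  · simp
  · intro n hn
    rw [Function.mem_support] at hn
    by_contra hr
    exact hn (if_neg fun ⟨m, hm⟩ => hr ⟨m, hm.symm⟩)

lemma Mq_eq_tsum (s : ℝ) (hs : 1 / 3 < s) :
    Mq (Fintype.card K) K s =
      ∑' m, ((Fintype.card K : ℝ) ^ (-3 * s)) ^ m * ∑ h ∈ Mon K m, density h := by
  have hq1 : (1 : ℝ) < Fintype.card K := by exact_mod_cast Fintype.one_lt_card
  have hq0 : (0 : ℝ) < Fintype.card K := by linarith
  have hmul : (Fintype.card K : ℝ) * (Fintype.card K : ℝ) ^ (-3 * s) =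
      (Fintype.card K : ℝ) ^ (1 - 3 * s) := by
    rw [← Real.rpow_one_add' hq0.le (by linarith)]; congr 1; ring
  rw [tsum_density (Real.rpow_nonneg hq0.le _), hmul, Mq]
  · congr 2
    ext P
    rw [normP, ← Real.rpow_natCast, ← Real.rpow_natCast, ← Real.rpow_mul hq0.le,
      ← Real.rpow_mul hq0.le, mul_comm (-3 * s)]
    ring
  · rw [hmul]
    exact Real.rpow_lt_one_of_one_lt_of_neg hq1 (by linarith)

lemma CubicBracket.tendsto_average (S : CubicBracket br ω) (hq : 7 ≤ (Fintype.card K : ℝ))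
    {s : ℝ} (hs : 1 / 3 < s) :
    Tendsto (fun g : ℕ => ((Fintype.card K : ℂ) ^ (3 * g + 1) - (Fintype.card K : ℂ) ^ (3 * g))⁻¹ *
        ∑' n : ℕ, charSum br (3 * g + 1) n * ((Fintype.card K : ℝ) ^ (-s * (n : ℝ)) : ℝ))
      atTop (nhds ((Mq (Fintype.card K) K s : ℝ) : ℂ)) := by
  set q : ℝ := (Fintype.card K : ℝ) with hqdef
  have hqc : (Fintype.card K : ℂ) = (q : ℂ) := by rw [hqdef]; simp
  have hq0 : 0 < q := by linarith
  have hqc0 : (q : ℂ) ≠ 0 := by exact_mod_cast hq0.ne'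
  have hκ : (1 - (q : ℂ)⁻¹) ≠ 0 := by
    rw [sub_ne_zero]
    intro h
    have : (q : ℂ) = 1 := by rw [← inv_inv (q : ℂ), ← h, inv_one]
    have : q = 1 := by exact_mod_cast this
    linarith
  set r : ℝ := q ^ (1 / 3 - s) with hr
  have hr1 : r < 1 := Real.rpow_lt_one_of_one_lt_of_neg (by linarith) (by linarith)
  have hr0 : 0 ≤ r := Real.rpow_nonneg hq0.le _
  have hlim : ((Mq (Fintype.card K) K s : ℝ) : ℂ) = ∑' n : ℕ,
      (if 3 ∣ n then (∑ h ∈ Mon K (n / 3), (density h : ℂ)) * ((q ^ (-s * (n : ℝ)) : ℝ) : ℂ)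
        else 0) := by
    rw [tsum_three_dvd, Mq_eq_tsum s hs, Complex.ofReal_tsum]
    refine tsum_congr fun m => ?_
    rw [Nat.mul_div_cancel_left _ (by norm_num), ← hqdef, ← Real.rpow_natCast,
      ← Real.rpow_mul hq0.le, mul_comm]
    push_cast
    congr 3
    ring
  rw [hlim]
  simp only [← tsum_mul_left]
  have hform : ∀ g n : ℕ, ((Fintype.card K : ℂ) ^ (3 * g + 1) - (Fintype.card K : ℂ) ^ (3 * g))⁻¹ *
      (charSum br (3 * g + 1) n * ((q ^ (-s * (n : ℝ)) : ℝ) : ℂ)) =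
      (1 - (q : ℂ)⁻¹)⁻¹ * (charSum br (3 * g + 1) n / (Fintype.card K : ℂ) ^ (3 * g + 1)) *
        ((q ^ (-s * (n : ℝ)) : ℝ) : ℂ) := by
    intro g n
    rw [hqc, show (q : ℂ) ^ (3 * g + 1) - (q : ℂ) ^ (3 * g) =
      (1 - (q : ℂ)⁻¹) * (q : ℂ) ^ (3 * g + 1) by field_simp; ring, mul_inv, div_eq_mul_inv]
    ring
  refine tendsto_tsum_of_dominated_convergence
    (bound := fun n => ‖(1 - (q : ℂ)⁻¹)⁻¹‖ * (10 * latticeConst q) * r ^ n)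
    ((summable_geometric_of_lt_one hr0 hr1).mul_left _) ?_ ?_
  · intro n
    simp only [hform]
    have hsub : Tendsto (fun g : ℕ => 3 * g + 1) atTop atTop :=
      tendsto_atTop_mono (fun g => by simp only [id]; omega) tendsto_id
    have h := (((S.tendsto_charSum hq n).comp hsub).const_mul (1 - (q : ℂ)⁻¹)⁻¹).mul_const
      ((q ^ (-s * (n : ℝ)) : ℝ) : ℂ)
    rw [hqc, inv_mul_cancel_left₀ hκ, ite_mul, zero_mul, ← hqc] at h
    exact h
  · refine Eventually.of_forall fun g n => ?_
    rw [hform, norm_mul, norm_mul, norm_div, norm_pow, Complex.norm_natCast, ← hqdef,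
      Complex.norm_real, Real.norm_of_nonneg (Real.rpow_nonneg hq0.le _), mul_assoc, mul_assoc]
    refine mul_le_mul_of_nonneg_left ?_ (norm_nonneg _)
    have h := S.norm_charSum_le hq (N := 3 * g + 1) (by omega) n
    rw [← hqdef, Real.rpow_add hq0, Real.rpow_natCast] at h
    rw [div_mul_eq_mul_div, div_le_iff₀ (by positivity)]
    refine (mul_le_mul_of_nonneg_right h (Real.rpow_nonneg hq0.le _)).trans_eq ?_
    rw [hr, ← Real.rpow_natCast (q ^ (1 / 3 - s)), ← Real.rpow_mul hq0.le,
      show (1 / 3 - s) * (n : ℝ) = (n : ℝ) / 3 + -s * n by ring, Real.rpow_add hq0]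
    ring

end Average

/-- **Corollary 1.2 (first part).** For fixed `q ≡ 1 (mod 6)` a prime power and fixed
`1/3 < s < 1`, the expected value of `L(s,χ)` over the family `𝔥(3g)` tends to `M_q(s)`
as `g → ∞`. -/
theorem expected_value_cubic_L_asymptotic
    (q : ℕ) (Fq : Type) [Field Fq] [Fintype Fq]
    (hq : IsPrimePow q) (hq6 : q % 6 = 1) (hcard : Fintype.card Fq = q)
    (Ω : Fq → ℂ) (chi : Polynomial Fq → Polynomial Fq → ℂ)
    (hchi : IsCubicSymbol q Ω chi)
    (s : ℝ) (hs : 1 / 3 < s) (hs1 : s < 1) :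
    Filter.Tendsto
      (fun g : ℕ =>
        ((q : ℂ) ^ (3 * g + 1) - (q : ℂ) ^ (3 * g))⁻¹ *
          sumSqfree (3 * g + 1) (fun F => Lval q s (chi F)))
      Filter.atTop (nhds ((Mq q Fq s : ℝ) : ℂ)) := by
  have hq7 : 7 ≤ q := by have := hq.one_lt; omega
  have S := hchi.cubicBracket hcard (by omega)
  subst hcard
  have hmonic : ∀ F : Fq[X], F.Monic → chi F = bracketOf chi F := fun F hF =>
    funext fun g => (bracketOf_monic chi hF g).symm
  refine (S.tendsto_average (by exact_mod_cast hq7) hs).congr fun g => ?_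
  rw [S.sumSqfree_Lval hmonic _ s (by omega)]
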